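/- Let β≥2 be an integer with ⌊(β−3)/3⌋ ≥ 1, and let c > 1/⌊(β−3)/3⌋. For every β-buildable graph H, and every σ>0 with c−σ > 1/⌊(β−3)/3⌋, there exist integers K,N>0 and λ>0 such that (N,K,σ,λ,c) forces H. -/

import Mathlib

noncomputable section

namespace PurePairs

open SimpleGraph

variable {V W : Type*}

/-- A pure pair in `G`: a pair of disjoint vertex sets that are complete
or anticomplete to each other. -/
def PurePair (G : SimpleGraph V) (A B : Set V) : Prop :=
  Disjoint A B ∧
    ((∀ a ∈ A, ∀ b ∈ B, G.Adj a b) ∨ (∀ a ∈ A, ∀ b ∈ B, ¬ G.Adj a b))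

/-- `G` contains `H`: some induced subgraph of `G` is isomorphic to `H`. -/
def Contains (G : SimpleGraph V) (H : SimpleGraph W) : Prop :=
  Nonempty (H ↪g G)

/-- The congestion of a graph `H`: the maximum (here: supremum, together with `0`)
of `1 - (|J|-1)/|E(J)|` over all subgraphs `J` of `H` with at least one edge.
If `H` has no edges this is `0`. -/
def congestion (H : SimpleGraph V) : ℝ :=
  sSup ({0} ∪ {x : ℝ | ∃ J : H.Subgraph, J.edgeSet.Nonempty ∧
    x = 1 - ((J.verts.ncard : ℝ) - 1) / (J.edgeSet.ncard : ℝ)})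

/-- `A` is anticomplete to `B`: no edges between them. -/
def Anticomplete (G : SimpleGraph V) (A B : Set V) : Prop :=
  ∀ a ∈ A, ∀ b ∈ B, ¬ G.Adj a b

/-- `A` covers `B`: every vertex of `B` has a neighbour in `A`. -/
def Covers (G : SimpleGraph V) (A B : Set V) : Prop :=
  ∀ b ∈ B, ∃ a ∈ A, G.Adj a b

/-- `G` is `ε`-sparse: every vertex has degree less than `ε|G|`. -/
def EpsSparse (G : SimpleGraph V) [Fintype V] (ε : ℝ) : Prop :=
  ∀ v : V, ((G.neighborSet v).ncard : ℝ) < ε * (Fintype.card V : ℝ)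

/-- `G` is `(γ,δ)`-coherent: there is no pair of disjoint anticomplete sets `A`, `B`
with `|A| ≥ γ` and `|B| ≥ δ`. -/
def Coherent (G : SimpleGraph V) (γ δ : ℝ) : Prop :=
  ¬ ∃ A B : Set V, Disjoint A B ∧ Anticomplete G A B ∧
      γ ≤ (A.ncard : ℝ) ∧ δ ≤ (B.ncard : ℝ)

/-- `N(X)`: the set of vertices with a neighbour in `X`. -/
def nbhd (G : SimpleGraph V) (X : Set V) : Set V :=
  {v | ∃ x ∈ X, G.Adj x v}

/-- A blockade: a family of nonempty pairwise disjoint vertex sets indexed by a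
finite set of integers. -/
def IsBlockade (I : Finset ℤ) (A : ℤ → Set V) : Prop :=
  (∀ i ∈ I, (A i).Nonempty) ∧
    ∀ i ∈ I, ∀ j ∈ I, i ≠ j → Disjoint (A i) (A j)

/-- The blockade `(A i : i ∈ I)` is `(γ,δ)`-divergent. -/
def Divergent (G : SimpleGraph V) (I : Finset ℤ) (A : ℤ → Set V) (γ δ : ℝ) : Prop :=
  ∃ i ∈ I, ∃ j ∈ I, i ≠ j ∧ ∃ X ⊆ A i, ∃ Y ⊆ A j,
    γ * ((A i).ncard : ℝ) ≤ (X.ncard : ℝ) ∧ δ * ((A j).ncard : ℝ) ≤ (Y.ncard : ℝ) ∧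
    Anticomplete G X Y

/-- The blockade `(A i : i ∈ I)` is `τ`-expanding. -/
def Expanding (G : SimpleGraph V) (I : Finset ℤ) (A : ℤ → Set V) (τ : ℝ) : Prop :=
  ∀ i ∈ I, ∀ j ∈ I, i ≠ j → ∀ X ⊆ A i,
    min (τ * (X.ncard : ℝ) / ((A i).ncard : ℝ)) (1/4)
      ≤ (((nbhd G X) ∩ A j).ncard : ℝ) / ((A j).ncard : ℝ)

/-- The linkage of the blockade `(A i : i ∈ I)` is at most `lam`. -/
def LinkageLE (G : SimpleGraph V) (I : Finset ℤ) (A : ℤ → Set V) (lam : ℝ) : Prop :=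
  ∀ i ∈ I, ∀ j ∈ I, i ≠ j → ∀ v ∈ A i,
    ((G.neighborSet v ∩ A j).ncard : ℝ) ≤ lam * ((A j).ncard : ℝ)

/-- The shrinkage of the blockade `(A i : i ∈ I)` is at most `σ`, i.e. its width is at
least `|G|^{1-σ}`. -/
def ShrinkageLE [Fintype V] (I : Finset ℤ) (A : ℤ → Set V) (σ : ℝ) : Prop :=
  ∀ i ∈ I, (Fintype.card V : ℝ) ^ (1 - σ) ≤ ((A i).ncard : ℝ)

/-- `(L 0, …, L k)` is a levelling in `G`. -/
def IsLevelling (G : SimpleGraph V) (L : ℕ → Set V) (k : ℕ) : Prop :=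
  1 ≤ k ∧ (L 0).ncard = 1 ∧
  (∀ i ≤ k, ∀ j ≤ k, i ≠ j → Disjoint (L i) (L j)) ∧
  (∀ i, 1 ≤ i → i ≤ k → Covers G (L (i-1)) (L i)) ∧
  (∀ i, 2 ≤ i → i ≤ k → ∀ h, h + 2 ≤ i → Anticomplete G (L h) (L i))

/-- The levelling `(L 0, …, L k)` reaches `C`, i.e. `(L 0, …, L k, C)` is a levelling. -/
def Reaches (G : SimpleGraph V) (L : ℕ → Set V) (k : ℕ) (C : Set V) : Prop :=
  IsLevelling G (fun i => if i = k + 1 then C else L i) (k + 1)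

/-- The levelling `(L 0, …, L k)` is `(B i : i ∈ I)`-rainbow. -/
def RainbowLevelling (I : Finset ℤ) (B : ℤ → Set V) (L : ℕ → Set V) (k : ℕ) : Prop :=
  ∃ q : ℕ → ℤ, (∀ i ≤ k, q i ∈ I ∧ L i ⊆ B (q i)) ∧
    ∀ i ≤ k, ∀ j ≤ k, q i = q j → i = j

/-- The levelling `(L 0, …, L k)` grades the blockade `(C j : j ∈ J)` (in some order). -/
def Grades (G : SimpleGraph V) (L : ℕ → Set V) (k : ℕ) (J : Finset ℤ) (C : ℤ → Set V) :
    Prop :=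
  Reaches G L k (⋃ j ∈ J, C j) ∧
  ∃ e : ℕ → ℤ, (∀ g < J.card, e g ∈ J) ∧
    (∀ g < J.card, ∀ h < J.card, e g = e h → g = h) ∧
    ∀ g < J.card, ∃ Y ⊆ L k,
      (∀ h, g ≤ h → h < J.card → Covers G Y (C (e h))) ∧
      (∀ h, h < g → Anticomplete G Y (C (e h)))

/-- The levelling `(L 0, …, L k)` grades the blockade `(C j : j ∈ J)` forwards. -/
def GradesFwd (G : SimpleGraph V) (L : ℕ → Set V) (k : ℕ) (J : Finset ℤ) (C : ℤ → Set V) :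
    Prop :=
  Reaches G L k (⋃ j ∈ J, C j) ∧
  ∀ j ∈ J, ∃ Y ⊆ L k,
    (∀ i ∈ J, j ≤ i → Covers G Y (C i)) ∧
    (∀ i ∈ J, i < j → Anticomplete G Y (C i))

/-- The levelling `(L 0, …, L k)` grades the blockade `(C j : j ∈ J)` backwards. -/
def GradesBwd (G : SimpleGraph V) (L : ℕ → Set V) (k : ℕ) (J : Finset ℤ) (C : ℤ → Set V) :
    Prop :=
  Reaches G L k (⋃ j ∈ J, C j) ∧
  ∀ j ∈ J, ∃ Y ⊆ L k,
    (∀ i ∈ J, i ≤ j → Covers G Y (C i)) ∧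
    (∀ i ∈ J, j < i → Anticomplete G Y (C i))

/-- Two levellings are parallel. -/
def Parallel (G : SimpleGraph V) (L : ℕ → Set V) (k : ℕ) (M : ℕ → Set V) (m : ℕ) : Prop :=
  L 0 = M 0 ∧
  Disjoint (⋃ j ∈ Finset.Icc 1 m, M j) (⋃ i ∈ Finset.Icc 1 k, L i) ∧
  Anticomplete G (⋃ j ∈ Finset.Icc 1 m, M j) (⋃ i ∈ Finset.Icc 1 k, L i)

/-- `(L, M, C)` is a bi-levelling, where `L` has height `k` and `M` has height `m`:
`C` is a blockade, `L, M` are parallel levellings both reaching the union of the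
blocks of `C`, and `L` grades `C` forwards. Its height is `k + m` and its length is
the length of `C`. -/
def IsBiLevelling (G : SimpleGraph V) (L : ℕ → Set V) (k : ℕ) (M : ℕ → Set V) (m : ℕ)
    (J : Finset ℤ) (C : ℤ → Set V) : Prop :=
  IsBlockade J C ∧ IsLevelling G L k ∧ IsLevelling G M m ∧ Parallel G L k M m ∧
    Reaches G M m (⋃ j ∈ J, C j) ∧ GradesFwd G L k J C

/-- A bi-grading: a bi-levelling in which `M` also grades `C` backwards. -/
def IsBiGrading (G : SimpleGraph V) (L : ℕ → Set V) (k : ℕ) (M : ℕ → Set V) (m : ℕ)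
    (J : Finset ℤ) (C : ℤ → Set V) : Prop :=
  IsBiLevelling G L k M m J C ∧ GradesBwd G M m J C

/-- The bi-levelling `(L, M, C)` is `(A i : i ∈ I)`-rainbow: each block of `C`, each
level of `L`, and each level of `M` other than `M 0 = L 0` is included in a block of
`A`, and distinct such sets lie in distinct blocks. -/
def RainbowBiLevelling (I : Finset ℤ) (A : ℤ → Set V)
    (L : ℕ → Set V) (k : ℕ) (M : ℕ → Set V) (m : ℕ)
    (J : Finset ℤ) (C : ℤ → Set V) : Prop :=
  ∃ (qc : ℤ → ℤ) (ql qm : ℕ → ℤ),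
    (∀ j ∈ J, qc j ∈ I ∧ C j ⊆ A (qc j)) ∧
    (∀ i ≤ k, ql i ∈ I ∧ L i ⊆ A (ql i)) ∧
    (∀ i, 1 ≤ i → i ≤ m → qm i ∈ I ∧ M i ⊆ A (qm i)) ∧
    (∀ j ∈ J, ∀ j' ∈ J, qc j = qc j' → j = j') ∧
    (∀ i ≤ k, ∀ i' ≤ k, ql i = ql i' → i = i') ∧
    (∀ i, 1 ≤ i → i ≤ m → ∀ i', 1 ≤ i' → i' ≤ m → qm i = qm i' → i = i') ∧
    (∀ j ∈ J, ∀ i ≤ k, qc j ≠ ql i) ∧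
    (∀ j ∈ J, ∀ i, 1 ≤ i → i ≤ m → qc j ≠ qm i) ∧
    (∀ i ≤ k, ∀ i', 1 ≤ i' → i' ≤ m → ql i ≠ qm i')

/-- Each block of `(C j : j ∈ J)` lies in a block of `(A i : i ∈ I)`; the `A`-size of
`C` is at least `η` when every block of `C` has size at least `η` times the size of the
block of `A` containing it. -/
def SizeGE (I : Finset ℤ) (A : ℤ → Set V) (J : Finset ℤ) (C : ℤ → Set V) (η : ℝ) : Prop :=
  ∀ j ∈ J, ∀ i ∈ I, C j ⊆ A i → η * ((A i).ncard : ℝ) ≤ ((C j).ncard : ℝ)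

/-- A `(B i : i ∈ I)`-rainbow induced path `p 0 - p 1 - ⋯ - p n` in `G`. -/
def RainbowPath (G : SimpleGraph V) (I : Finset ℤ) (B : ℤ → Set V)
    (n : ℕ) (p : ℕ → V) : Prop :=
  (∀ i ≤ n, ∀ j ≤ n, p i = p j → i = j) ∧
  (∀ i < n, G.Adj (p i) (p (i+1))) ∧
  (∀ i j, i + 1 < j → j ≤ n → ¬ G.Adj (p i) (p j)) ∧
  ∃ q : ℕ → ℤ, (∀ i ≤ n, q i ∈ I ∧ p i ∈ B (q i)) ∧
    ∀ i ≤ n, ∀ j ≤ n, q i = q j → i = j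

/-- A `(B i : i ∈ I)`-rainbow copy of `H` in `G`: an induced copy of `H` with each
vertex in a different block. -/
def RainbowCopy (G : SimpleGraph V) (I : Finset ℤ) (B : ℤ → Set V)
    (H : SimpleGraph W) : Prop :=
  ∃ (f : H ↪g G) (q : W → ℤ), Function.Injective q ∧ ∀ w : W, q w ∈ I ∧ f w ∈ B (q w)

/-- `(N,K,σ,lam,c)` forces `H`. -/
def Forces (H : SimpleGraph W) (N K : ℕ) (σ lam c : ℝ) : Prop :=
  ∀ {V : Type} [Fintype V] (G : SimpleGraph V),
    Coherent G ((Fintype.card V : ℝ) ^ (1 - c)) ((Fintype.card V : ℝ) ^ (1 - c)) →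
    N ≤ Fintype.card V →
    ∀ (I : Finset ℤ) (A : ℤ → Set V), IsBlockade I A → I.card = K →
      ShrinkageLE I A σ → LinkageLE G I A lam →
      RainbowCopy G I A H

/-- `p 0 - ⋯ - p n` is a handle of length `n` that can be added to (the graph induced
on) `S` inside the ambient graph `H`: an induced path of `H[S ∪ p]` of length at least
two whose ends lie in `S`, whose internal vertices avoid `S` and have degree two in
`H[S ∪ p]`. -/
def IsHandle (H : SimpleGraph V) (S : Set V) (n : ℕ) (p : ℕ → V) : Prop :=
  2 ≤ n ∧
  (∀ i ≤ n, ∀ j ≤ n, p i = p j → i = j) ∧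
  p 0 ∈ S ∧ p n ∈ S ∧
  (∀ i, 0 < i → i < n → p i ∉ S) ∧
  (∀ i < n, H.Adj (p i) (p (i+1))) ∧
  (∀ i j, i + 1 < j → j ≤ n → ¬ H.Adj (p i) (p j)) ∧
  (∀ i, 0 < i → i < n → ∀ w, (w ∈ S ∨ ∃ j ≤ n, w = p j) → H.Adj (p i) w →
    w = p (i-1) ∨ w = p (i+1))

/-- The vertex sets `S` such that the induced subgraph `H[S]` can be built, starting
from the two-vertex graph with no edges, by repeatedly adding handles of length at
least `β`. -/
inductive BuildableOn (H : SimpleGraph V) (β : ℕ) : Set V → Prop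
  | base (u v : V) (huv : u ≠ v) (hadj : ¬ H.Adj u v) : BuildableOn H β {u, v}
  | handle (S : Set V) (n : ℕ) (p : ℕ → V) (hS : BuildableOn H β S)
      (hh : IsHandle H S n p) (hn : β ≤ n) :
      BuildableOn H β (S ∪ {w | ∃ j ≤ n, w = p j})

/-- `H` is `β`-buildable. -/
def Buildable [Fintype V] (H : SimpleGraph V) (β : ℕ) : Prop :=
  BuildableOn H β Set.univ

/-- The vertex sets `S` such that the induced subgraph `H[S]` can be built, starting
from the null graph, by repeatedly adding a subleaf or a handle of length at least
`β`. -/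
inductive WeaklyBuildableOn (H : SimpleGraph V) (β : ℕ) : Set V → Prop
  | empty : WeaklyBuildableOn H β ∅
  | subleaf (S : Set V) (v : V) (hv : v ∉ S) (hdeg : (S ∩ H.neighborSet v).ncard ≤ 1)
      (hS : WeaklyBuildableOn H β S) : WeaklyBuildableOn H β (insert v S)
  | handle (S : Set V) (n : ℕ) (p : ℕ → V) (hS : WeaklyBuildableOn H β S)
      (hh : IsHandle H S n p) (hn : β ≤ n) :
      WeaklyBuildableOn H β (S ∪ {w | ∃ j ≤ n, w = p j})

/-- `H` is weakly `β`-buildable. -/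
def WeaklyBuildable [Fintype V] (H : SimpleGraph V) (β : ℕ) : Prop :=
  WeaklyBuildableOn H β Set.univ

section Part1
open scoped Classical
open Finset

/-- the vertices of `B` with a neighbour in `X` -/
def nb {V : Type} (G : SimpleGraph V) (X B : Finset V) : Finset V :=
  B.filter (fun v => ∃ x ∈ X, G.Adj x v)

/-- finset form of coherence -/
def Hcoh {V : Type} (G : SimpleGraph V) (Γ : ℝ) : Prop :=
  ∀ X Y : Finset V, Disjoint X Y → Γ ≤ (#X : ℝ) → Γ ≤ (#Y : ℝ) →
    ∃ x ∈ X, ∃ y ∈ Y, G.Adj x y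

theorem nb_sub {V : Type} (G : SimpleGraph V) (X B : Finset V) : nb G X B ⊆ B :=
  Finset.filter_subset _ _

theorem mem_nb {V : Type} {G : SimpleGraph V} {X B : Finset V} {v : V} :
    v ∈ nb G X B ↔ v ∈ B ∧ ∃ x ∈ X, G.Adj x v := by
  simp [nb]

theorem nb_union {V : Type} (G : SimpleGraph V) (X Y B : Finset V) :
    nb G (X ∪ Y) B = nb G X B ∪ nb G Y B := by
  ext v; simp only [mem_nb, mem_union]; grind

theorem nb_mono {V : Type} (G : SimpleGraph V) {X Y B C : Finset V} (h : X ⊆ Y) (h' : B ⊆ C) :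
    nb G X B ⊆ nb G Y C := by
  intro v; simp only [mem_nb]; rintro ⟨hv, x, hx, hh⟩; exact ⟨h' hv, x, h hx, hh⟩

/-- Few vertices of `C` are missed by a large set. -/
theorem coh_cover {V : Type} {G : SimpleGraph V} {Γ : ℝ} (hcoh : Hcoh G Γ) {X C : Finset V}
    (hd : Disjoint X C) (hX : Γ ≤ (#X : ℝ)) : (#C : ℝ) - Γ < (#(nb G X C) : ℝ) := by
  by_contra hcon
  push Not at hcon
  have h1 : (#(C \ nb G X C) : ℝ) = #C - #(nb G X C) := by
    have := Finset.card_sdiff_add_card_eq_card (nb_sub G X C)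
    rw [← this]; push_cast; ring
  obtain ⟨x, hx, y, hy, hxy⟩ := hcoh X (C \ nb G X C)
    (Finset.disjoint_of_subset_right sdiff_subset hd) hX (by rw [h1]; linarith)
  rw [mem_sdiff, mem_nb] at hy
  exact hy.2 ⟨hy.1, x, hx, hxy⟩

theorem exists_max_of_bdd {α : Type*} (P : α → Prop) (f : α → ℕ) (N : ℕ) (h0 : ∃ a, P a)
    (hN : ∀ a, P a → f a ≤ N) : ∃ a, P a ∧ ∀ b, P b → f b ≤ f a := by
  have hbdd : BddAbove (f '' {a | P a}) := ⟨N, by rintro _ ⟨a, ha, rfl⟩; exact hN a ha⟩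
  have hne : (f '' {a | P a}).Nonempty := by
    obtain ⟨a, ha⟩ := h0; exact ⟨f a, a, ha, rfl⟩
  obtain ⟨a, ha, he⟩ := Nat.sSup_mem hne hbdd
  exact ⟨a, ha, fun b hb => he ▸ le_csSup hbdd ⟨b, hb, rfl⟩⟩

theorem trim_aux {m Γ x N Ra Aa Rb Ab : ℝ} (hΓ : 0 < Γ) (hm : 0 < m) (hx : 0 ≤ x) (hN : 0 ≤ N)
    (h1 : Aa ≤ 2 * Ra) (h2 : Rb ≤ Ab) (h3 : N * Ra ≤ m / (16 * Γ) * x * Rb) :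
    N * Aa ≤ m / (8 * Γ) * x * Ab := by
  have e : m / (8 * Γ) = 2 * (m / (16 * Γ)) := by field_simp; ring
  have h0 : 0 ≤ m / (16 * Γ) * x := by positivity
  have h4 := mul_le_mul_of_nonneg_left h1 hN
  have h5 := mul_le_mul_of_nonneg_left h2 h0
  rw [e]; linarith

theorem trim {V : Type} (G : SimpleGraph V) (Γ m : ℝ) (hΓ : 0 < Γ) (hcoh : Hcoh G Γ)
    (J : Finset ℤ) (A : ℤ → Finset V)
    (hdisj : ∀ i ∈ J, ∀ j ∈ J, i ≠ j → Disjoint (A i) (A j))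
    (hm : ∀ i ∈ J, m ≤ (#(A i) : ℝ)) (h1 : 4 * Γ ≤ m) (h2 : 2 * (#J : ℝ) * Γ ≤ m) :
    ∃ B : ℤ → Finset V, (∀ i ∈ J, B i ⊆ A i ∧ #(A i) ≤ 2 * #(B i)) ∧
      ∀ i ∈ J, ∀ j ∈ J, i ≠ j → ∀ X ⊆ B i,
        #(B j) ≤ 4 * #(nb G X (B j)) ∨
        m / (16 * Γ) * #X * #(B j) ≤ (#(nb G X (B j)) : ℝ) * #(B i) := by
  have hmpos : 0 < m := by linarith
  let R : (ℤ → ℤ → Finset V) → ℤ → Finset V := fun Z i => A i \ J.biUnion (fun j => Z i j)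
  let P : (ℤ → ℤ → Finset V) → Prop := fun Z => ∀ i ∈ J, ∀ j ∈ J,
    Z i j ⊆ A i ∧ (#(Z i j) : ℝ) < Γ ∧ (i ≠ j →
      (#(nb G (Z i j) (R Z j)) : ℝ) * #(A i) ≤ m / (8 * Γ) * #(Z i j) * #(A j))
  let f : (ℤ → ℤ → Finset V) → ℕ := fun Z => ∑ i ∈ J, ∑ j ∈ J, #(Z i j)
  obtain ⟨Z, hZ, hmax⟩ := exists_max_of_bdd P f (∑ i ∈ J, ∑ j ∈ J, #(A i))
    ⟨fun _ _ => ∅, by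
      intro i _ j _
      refine ⟨by simp, by simpa using hΓ, fun _ => ?_⟩
      have : nb G (∅ : Finset V) (R (fun _ _ => ∅) j) = ∅ := by
        ext v; simp [mem_nb]
      simp [this]⟩
    (by
      intro Z hZ
      exact Finset.sum_le_sum fun i hi => Finset.sum_le_sum fun j hj =>
        Finset.card_le_card (hZ i hi j hj).1)
  have hRsub : ∀ i, R Z i ⊆ A i := fun i => sdiff_subset
  have hhalf : ∀ i ∈ J, (#(A i) : ℝ) ≤ 2 * #(R Z i) := by
    intro i hi
    have hU : (#(J.biUnion (fun j => Z i j)) : ℝ) ≤ #J * Γ := by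
      calc (#(J.biUnion (fun j => Z i j)) : ℝ) ≤ ∑ j ∈ J, (#(Z i j) : ℝ) := by
            exact_mod_cast Finset.card_biUnion_le
        _ ≤ ∑ j ∈ J, Γ := Finset.sum_le_sum fun j hj => (hZ i hi j hj).2.1.le
        _ = #J * Γ := by simp
    have h3 : (#(A i) : ℝ) ≤ #(R Z i) + #(J.biUnion (fun j => Z i j)) := by
      have := Finset.le_card_sdiff (J.biUnion (fun j => Z i j)) (A i)
      have h4 : #(A i) ≤ #(R Z i) + #(J.biUnion (fun j => Z i j)) := by
        show _ ≤ #(A i \ _) + _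
        omega
      exact_mod_cast h4
    have := hm i hi
    nlinarith
  refine ⟨R Z, fun i hi => ⟨hRsub i, by exact_mod_cast hhalf i hi⟩, ?_⟩
  intro i hi j hj hij X hX
  by_contra hcon
  push Not at hcon
  obtain ⟨hc1, hc2⟩ := hcon
  have hc1' : 4 * (#(nb G X (R Z j)) : ℝ) < #(R Z j) := by exact_mod_cast hc1
  have hXne : 0 < #X := by
    rcases Finset.eq_empty_or_nonempty X with h | h
    · subst h; simp at hc2
      exact absurd hc2 (not_lt.2 (by positivity))
    · exact h.card_pos
  have hAi : 0 < (#(A i) : ℝ) := by linarith [hm i hi]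
  have hAj : 0 < (#(A j) : ℝ) := by linarith [hm j hj]
  have hXA : X ⊆ A i := hX.trans (hRsub i)
  have hXZ : Disjoint (Z i j) X := by
    rw [Finset.disjoint_left]
    intro v hv hvX
    have := hX hvX
    simp only [R, mem_sdiff, mem_biUnion, not_exists, not_and] at this
    exact this.2 j hj hv
  have hcardU : (#(Z i j ∪ X) : ℝ) = #(Z i j) + #X := by
    rw [Finset.card_union_of_disjoint hXZ]; push_cast; ring
  have hnbU : (#(nb G (Z i j ∪ X) (R Z j)) : ℝ) ≤ #(nb G (Z i j) (R Z j)) + #(nb G X (R Z j)) := by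
    rw [nb_union]; exact_mod_cast Finset.card_union_le _ _
  have hZij := hZ i hi j hj
  have hb := hZij.2.2 hij
  have hRi := hhalf i hi
  have hRj := hhalf j hj
  have hRiA : (#(R Z i) : ℝ) ≤ #(A i) := by exact_mod_cast Finset.card_le_card (hRsub i)
  have hRjA : (#(R Z j) : ℝ) ≤ #(A j) := by exact_mod_cast Finset.card_le_card (hRsub j)
  by_cases hbig : Γ ≤ (#(Z i j ∪ X) : ℝ)
  · have hd : Disjoint (Z i j ∪ X) (R Z j) :=
      Finset.disjoint_of_subset_left (Finset.union_subset hZij.1 hXA)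
        (Finset.disjoint_of_subset_right (hRsub j) (hdisj i hi j hj hij))
    have hcc := coh_cover hcoh hd hbig
    have h8 : (#(nb G (Z i j) (R Z j)) : ℝ) ≤ #(A j) / 8 := by
      have h9 : (#(nb G (Z i j) (R Z j)) : ℝ) * #(A i) ≤ #(A j) / 8 * #(A i) := by
        refine hb.trans ?_
        have : m / (8 * Γ) * #(Z i j) ≤ m / (8 * Γ) * Γ :=
          mul_le_mul_of_nonneg_left hZij.2.1.le (by positivity)
        have h10 : m / (8 * Γ) * Γ = m / 8 := by field_simp
        rw [h10] at this
        calc m / (8 * Γ) * #(Z i j) * #(A j) ≤ m / 8 * #(A j) :=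
              mul_le_mul_of_nonneg_right this hAj.le
          _ ≤ #(A i) / 8 * #(A j) := by
              apply mul_le_mul_of_nonneg_right _ hAj.le
              linarith [hm i hi]
          _ = _ := by ring
      exact le_of_mul_le_mul_right h9 hAi
    linarith [hm j hj]
  · push Not at hbig
    let Z' : ℤ → ℤ → Finset V := fun a b => if a = i ∧ b = j then Z i j ∪ X else Z a b
    have hsub : ∀ a b, Z a b ⊆ Z' a b := by
      intro a b
      by_cases h : a = i ∧ b = j
      · simp only [Z', h, and_self, if_true]; exact subset_union_left
      · simp only [Z', h, if_false]; exact subset_rfl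
    have hR' : ∀ a, R Z' a ⊆ R Z a := by
      intro a
      refine Finset.sdiff_subset_sdiff subset_rfl ?_
      exact Finset.biUnion_mono fun b _ => hsub a b
    have hP' : P Z' := by
      intro a ha b hb'
      by_cases h : a = i ∧ b = j
      · obtain ⟨rfl, rfl⟩ := h
        have hz : Z' a b = Z a b ∪ X := by simp [Z']
        rw [hz]
        refine ⟨Finset.union_subset hZij.1 hXA, hbig, fun _ => ?_⟩
        have h5 : (#(nb G (Z a b ∪ X) (R Z' b)) : ℝ) ≤ #(nb G (Z a b ∪ X) (R Z b)) := by
          exact_mod_cast Finset.card_le_card (nb_mono G subset_rfl (hR' b))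
        rw [hcardU]
        have h6 : (#(nb G X (R Z b)) : ℝ) * #(A a) ≤ m / (8 * Γ) * #X * #(A b) := by
          exact trim_aux hΓ hmpos (Nat.cast_nonneg _) (Nat.cast_nonneg _) hRi hRjA hc2.le
        calc (#(nb G (Z a b ∪ X) (R Z' b)) : ℝ) * #(A a)
            ≤ (#(nb G (Z a b) (R Z b)) + #(nb G X (R Z b))) * #(A a) := by
              apply mul_le_mul_of_nonneg_right (h5.trans hnbU) hAi.le
          _ ≤ m / (8 * Γ) * #(Z a b) * #(A b) + m / (8 * Γ) * #X * #(A b) := by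
              rw [add_mul]; exact add_le_add hb h6
          _ = _ := by ring
      · have hz : Z' a b = Z a b := by simp only [Z', h, if_false]
        rw [hz]
        have hh := hZ a ha b hb'
        refine ⟨hh.1, hh.2.1, fun hne => le_trans ?_ (hh.2.2 hne)⟩
        apply mul_le_mul_of_nonneg_right _ (by positivity)
        exact_mod_cast Finset.card_le_card (nb_mono G subset_rfl (hR' b))
    have hlt : f Z < f Z' := by
      apply Finset.sum_lt_sum
      · intro a _
        exact Finset.sum_le_sum fun b _ => Finset.card_le_card (hsub a b)
      · refine ⟨i, hi, Finset.sum_lt_sum (fun b _ => Finset.card_le_card (hsub i b)) ⟨j, hj, ?_⟩⟩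
        have hz : Z' i j = Z i j ∪ X := by simp [Z']
        rw [hz, Finset.card_union_of_disjoint hXZ]
        omega
    exact absurd (hmax Z' hP') (not_le.2 hlt)

theorem grade {V : Type} (G : SimpleGraph V) (D : Finset V) (J : Finset ℤ) (C : ℤ → Finset V)
    (hJ : J.Nonempty) (hne : ∀ j ∈ J, (C j).Nonempty)
    (hcov : ∀ j ∈ J, ∀ v ∈ C j, ∃ d ∈ D, G.Adj d v)
    (hlink : ∀ d ∈ D, ∀ j ∈ J, 4 * #(nb G {d} (C j)) ≤ #(C j)) :
    ∃ b ∈ J, ∃ Y ⊆ D, #(C b) ≤ 4 * #(nb G Y (C b)) ∧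
      ∀ j ∈ J, #(C j) ≤ 2 * #(C j \ nb G Y (C j)) := by
  let P : Finset V → Prop := fun Y => Y ⊆ D ∧ ∃ b ∈ J, #(C b) ≤ 4 * #(nb G Y (C b))
  have hD : ∃ n, ∃ Y, P Y ∧ #Y = n := by
    refine ⟨#D, D, ⟨subset_rfl, ?_⟩, rfl⟩
    obtain ⟨b, hb⟩ := hJ
    refine ⟨b, hb, ?_⟩
    have : nb G D (C b) = C b := by
      ext v; rw [mem_nb]; exact ⟨fun h => h.1, fun h => ⟨h, hcov b hb v h⟩⟩
    rw [this]; omega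
  obtain ⟨Y, ⟨hYD, b, hb, hYb⟩, hYc⟩ := Nat.find_spec hD
  have hmin := fun n (hn : n < Nat.find hD) => Nat.find_min hD hn
  refine ⟨b, hb, Y, hYD, hYb, ?_⟩
  have hYne : Y.Nonempty := by
    by_contra h
    rw [Finset.not_nonempty_iff_eq_empty] at h
    subst h
    have : nb G ∅ (C b) = ∅ := by ext v; simp [mem_nb]
    rw [this] at hYb
    have := (hne b hb).card_pos
    simp at hYb
    simp [hYb] at this
  obtain ⟨y, hy⟩ := hYne
  intro j hj
  have hlt : #(Y.erase y) < Nat.find hD := by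
    rw [← hYc]; exact Finset.card_erase_lt_of_mem hy
  have hnot : ¬ #(C j) ≤ 4 * #(nb G (Y.erase y) (C j)) := by
    intro h
    exact hmin _ hlt ⟨Y.erase y, ⟨(Finset.erase_subset _ _).trans hYD, j, hj, h⟩, rfl⟩
  have hY : Y = Y.erase y ∪ {y} := by
    ext v; simp only [mem_union, mem_erase, mem_singleton]; grind
  have h1 : #(nb G Y (C j)) ≤ #(nb G (Y.erase y) (C j)) + #(nb G {y} (C j)) := by
    conv_lhs => rw [hY, nb_union]
    exact Finset.card_union_le _ _
  have h2 := hlink y (hYD hy) j hj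
  have h3 := Finset.card_sdiff_add_card_eq_card (nb_sub G Y (C j))
  omega

end Part1

section Part2
open scoped Classical
open Finset

theorem induced_subpath {V : Type} (G : SimpleGraph V) (z : ℕ → V) (N : ℕ)
    (hadj : ∀ i < N, G.Adj (z i) (z (i+1))) :
    ∃ (l : ℕ) (φ : ℕ → ℕ), φ 0 = 0 ∧ φ l = N ∧ (∀ i j, i < j → j ≤ l → φ i < φ j) ∧
      (∀ i < l, G.Adj (z (φ i)) (z (φ (i+1)))) ∧
      (∀ i j, i + 1 < j → j ≤ l → ¬ G.Adj (z (φ i)) (z (φ j))) := by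
  have hex : ∃ l : ℕ, ∃ φ : ℕ → ℕ, φ 0 = 0 ∧ φ l = N ∧ (∀ i j, i < j → j ≤ l → φ i < φ j) ∧
      (∀ i < l, G.Adj (z (φ i)) (z (φ (i+1)))) :=
    ⟨N, id, rfl, rfl, fun i j h _ => h, hadj⟩
  obtain ⟨φ, h0, hl, hmono, had⟩ := Nat.find_spec hex
  have hmin := fun n (hn : n < Nat.find hex) => Nat.find_min hex hn
  generalize Nat.find hex = l at *
  refine ⟨l, φ, h0, hl, hmono, had, ?_⟩
  intro i j hij hj hA
  obtain ⟨d, rfl⟩ : ∃ d, j = i + 1 + (d + 1) := ⟨j - i - 2, by omega⟩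
  obtain ⟨e, rfl⟩ : ∃ e, l = i + 1 + (d + 1) + e := ⟨l - (i + 1 + (d+1)), by omega⟩
  refine hmin (i + 1 + e) (by omega)
    ⟨fun a => if a ≤ i then φ a else φ (a + (d + 1)), by simpa using h0, ?_, ?_, ?_⟩
  · have : ¬ (i + 1 + e ≤ i) := by omega
    simp only [this, if_false]
    rw [← hl]; congr 1; omega
  · intro a b hab hb
    dsimp only
    split_ifs <;> first | omega | (apply hmono <;> omega)
  · intro a ha
    dsimp only
    by_cases h1 : a + 1 ≤ i
    · have h2 : a ≤ i := by omega
      simp only [h1, h2, if_true]; exact had a (by omega)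
    · by_cases h2 : a ≤ i
      · have : a = i := by omega
        subst this
        simp only [h1, le_refl, if_true, if_false]
        exact hA
      · simp only [h1, h2, if_false]
        have := had (a + (d+1)) (by omega)
        rwa [show a + (d+1) + 1 = a + 1 + (d+1) by omega] at this

/-- levelling with root `x`, of height `t`, levels in distinct blocks indexed by `Q` -/
structure Lev {V : Type} (G : SimpleGraph V) (A : ℤ → Finset V) (x : V) (t : ℕ)
    (L : ℕ → Finset V) (q : ℕ → ℤ) (Q : Finset ℤ) : Prop where
  root : L 0 = {x}
  blk : ∀ i, 1 ≤ i → i ≤ t → q i ∈ Q ∧ L i ⊆ A (q i)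
  inj : ∀ i j, 1 ≤ i → i ≤ t → 1 ≤ j → j ≤ t → q i = q j → i = j
  cov : ∀ i < t, ∀ v ∈ L (i+1), ∃ u ∈ L i, G.Adj u v
  anti : ∀ h i, h + 2 ≤ i → i ≤ t → ∀ u ∈ L h, ∀ v ∈ L i, ¬ G.Adj u v

structure Reach {V : Type} (G : SimpleGraph V) (L : ℕ → Finset V) (t : ℕ) (C : Finset V) :
    Prop where
  cov : ∀ v ∈ C, ∃ u ∈ L t, G.Adj u v
  anti : ∀ i < t, ∀ u ∈ L i, ∀ v ∈ C, ¬ G.Adj u v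

theorem Reach.mono {V : Type} {G : SimpleGraph V} {L : ℕ → Finset V} {t : ℕ} {C C' : Finset V}
    (h : Reach G L t C) (hc : C' ⊆ C) : Reach G L t C' :=
  ⟨fun v hv => h.cov v (hc hv), fun i hi u hu v hv => h.anti i hi u hu v (hc hv)⟩

theorem Lev.mono {V : Type} {G : SimpleGraph V} {A A' : ℤ → Finset V} {x : V} {t : ℕ}
    {L : ℕ → Finset V} {q : ℕ → ℤ} {Q Q' : Finset ℤ} (h : Lev G A x t L q Q) (hQ : Q ⊆ Q')
    (hA : ∀ j ∈ Q, A j ⊆ A' j) : Lev G A' x t L q Q' :=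
  ⟨h.root, fun i h1 h2 => ⟨hQ (h.blk i h1 h2).1, (h.blk i h1 h2).2.trans (hA _ (h.blk i h1 h2).1)⟩,
    h.inj, h.cov, h.anti⟩

theorem Lev.path {V : Type} {G : SimpleGraph V} {A : ℤ → Finset V} {x : V} {t : ℕ}
    {L : ℕ → Finset V} {q : ℕ → ℤ} {Q : Finset ℤ} (h : Lev G A x t L q Q) :
    ∀ i ≤ t, ∀ y ∈ L i, ∃ g : ℕ → V, (∀ j ≤ i, g j ∈ L j) ∧ g i = y ∧
      ∀ j < i, G.Adj (g j) (g (j+1)) := by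
  intro i
  induction i with
  | zero => intro _ y hy; exact ⟨fun _ => y, by intro j hj; obtain rfl : j = 0 := by omega
                                                exact hy, rfl, by intro j hj; omega⟩
  | succ i ih =>
    intro hi y hy
    obtain ⟨u, hu, huy⟩ := h.cov i (by omega) y hy
    obtain ⟨g, hg, hgi, hga⟩ := ih (by omega) u hu
    refine ⟨fun j => if j = i + 1 then y else g j, ?_, by simp, ?_⟩
    · intro j hj
      by_cases hji : j = i + 1
      · subst hji; simpa using hy
      · simp only [hji, if_false]; exact hg j (by omega)
    · intro j hj
      have h1 : j ≠ i + 1 := by omega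
      by_cases h2 : j + 1 = i + 1
      · have : j = i := by omega
        subst this
        simp [hgi, huy]
      · simp only [h1, h2, if_false]; exact hga j (by omega)

theorem Lev.extend {V : Type} {G : SimpleGraph V} {A : ℤ → Finset V} {x : V} {t : ℕ}
    {L : ℕ → Finset V} {q : ℕ → ℤ} {Q : Finset ℤ} (h : Lev G A x t L q Q) {X : Finset V} {j : ℤ}
    (hj : j ∈ Q) (hX : X ⊆ A j) (hjq : ∀ i, 1 ≤ i → i ≤ t → q i ≠ j) (hr : Reach G L t X) :
    Lev G A x (t+1) (fun i => if i = t + 1 then X else L i)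
      (fun i => if i = t + 1 then j else q i) Q := by
  refine ⟨?_, ?_, ?_, ?_, ?_⟩
  · simp [h.root]
  · intro i h1 h2
    by_cases hi : i = t + 1
    · simp [hi, hj, hX]
    · simp only [hi, if_false]; exact h.blk i h1 (by omega)
  · intro i i' h1 h2 h3 h4
    split_ifs with e1 e2 e2
    · intro _; omega
    · intro h'; exact absurd h'.symm (hjq i' h3 (by omega))
    · intro h'; exact absurd h' (hjq i h1 (by omega))
    · intro h'; exact h.inj i i' h1 (by omega) h3 (by omega) h'
  · intro i hi
    have h1 : i ≠ t + 1 := by omega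
    simp only [h1, if_false]
    by_cases h2 : i = t
    · subst h2; simpa using hr.cov
    · have : i + 1 ≠ t + 1 := by omega
      simp only [this, if_false]; exact h.cov i (by omega)
  · intro a i hai hi
    have h1 : a ≠ t + 1 := by omega
    simp only [h1, if_false]
    by_cases h2 : i = t + 1
    · simp only [h2, if_true]; exact hr.anti a (by omega)
    · simp only [h2, if_false]; exact h.anti a i hai (by omega)

theorem reach_extend {V : Type} {G : SimpleGraph V} {L : ℕ → Finset V} {t : ℕ} {X C : Finset V}
    (h1 : ∀ v ∈ C, ∃ u ∈ X, G.Adj u v) (h2 : ∀ i ≤ t, ∀ u ∈ L i, ∀ v ∈ C, ¬ G.Adj u v) :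
    Reach G (fun i => if i = t + 1 then X else L i) (t+1) C := by
  refine ⟨by simpa using h1, ?_⟩
  intro i hi
  have h1 : i ≠ t + 1 := by omega
  simp only [h1, if_false]; exact h2 i (by omega)

theorem Lev.shrink {V : Type} {G : SimpleGraph V} {A : ℤ → Finset V} {x : V} {t : ℕ}
    {L : ℕ → Finset V} {q : ℕ → ℤ} {Q : Finset ℤ} (h : Lev G A x t L q Q) (ht : 1 ≤ t)
    {Y : Finset V} (hY : Y ⊆ L t) : Lev G A x t (fun i => if i = t then Y else L i) q Q := by
  refine ⟨?_, ?_, h.inj, ?_, ?_⟩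
  · have : ¬ (0 = t) := by omega
    simp only [this, if_false]; exact h.root
  · intro i h1 h2
    refine ⟨(h.blk i h1 h2).1, ?_⟩
    by_cases hi : i = t
    · subst hi; simp only [if_true]; exact hY.trans (h.blk i h1 h2).2
    · simp only [hi, if_false]; exact (h.blk i h1 h2).2
  · intro i hi
    have h1 : i ≠ t := by omega
    simp only [h1, if_false]
    by_cases h2 : i + 1 = t
    · simp only [h2, if_true]; intro v hv; exact h.cov i hi v (h2 ▸ hY hv)
    · simp only [h2, if_false]; exact h.cov i hi
  · intro a i hai hi
    have h1 : a ≠ t := by omega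
    simp only [h1, if_false]
    by_cases h2 : i = t
    · subst h2; simp only [if_true]; intro u hu v hv; exact h.anti a i hai hi u hu v (hY hv)
    · simp only [h2, if_false]; exact h.anti a i hai hi

/-- extend a levelling by `r` further levels -/
theorem lev_ext {V : Type} (G : SimpleGraph V) (Γ : ℝ) (hΓ : 0 < Γ) (hcoh : Hcoh G Γ)
    (A : ℤ → Finset V) (x : V) (r : ℕ) :
    ∀ (t : ℕ) (L : ℕ → Finset V) (q : ℕ → ℤ) (Q J : Finset ℤ) (C : ℤ → Finset V) (lam : ℝ),
    1 ≤ t → Lev G A x t L q Q → Disjoint Q J → r < #J →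
    (∀ j ∈ J, C j ⊆ A j ∧ Reach G L t (C j) ∧ 4 ^ r * Γ ≤ (#(C j) : ℝ)) →
    (∀ i ∈ J, ∀ j ∈ J, i ≠ j → Disjoint (C i) (C j)) →
    (∀ d ∈ L t, ∀ j ∈ J, (#(nb G {d} (C j)) : ℝ) ≤ lam * #(C j)) →
    (∀ i ∈ J, ∀ j ∈ J, i ≠ j → ∀ d ∈ C i, (#(nb G {d} (C j)) : ℝ) ≤ lam * #(C j)) →
    0 ≤ lam → 4 ^ r * lam ≤ 1 →
    ∃ (L' : ℕ → Finset V) (q' : ℕ → ℤ) (J' : Finset ℤ) (C' : ℤ → Finset V), J' ⊆ J ∧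
      #J' + r = #J ∧ Lev G A x (t + r) L' q' (Q ∪ (J \ J')) ∧
      ∀ j ∈ J', C' j ⊆ C j ∧ Reach G L' (t + r) (C' j) ∧ (#(C j) : ℝ) ≤ 4 ^ r * #(C' j) := by
  induction r with
  | zero =>
    intro t L q Q J C lam ht hL _ _ hC _ _ _ _ _
    refine ⟨L, q, J, C, subset_rfl, rfl, by simpa using hL, ?_⟩
    intro j hj; exact ⟨subset_rfl, (hC j hj).2.1, by simp⟩
  | succ r ih =>
    intro t L q Q J C lam ht hL hQJ hr hC hdisj hl1 hl2 hlam0 hlam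
    have hrp : (1 : ℝ) ≤ 4 ^ r := one_le_pow₀ (by norm_num)
    have hlam4 : 4 * lam ≤ 1 := by
      rw [pow_succ] at hlam; nlinarith
    have hC4 : ∀ j ∈ J, 4 * Γ ≤ (#(C j) : ℝ) := by
      intro j hj
      refine le_trans ?_ (hC j hj).2.2
      rw [pow_succ]; nlinarith
    have hpos : ∀ j ∈ J, (0 : ℝ) < #(C j) := fun j hj => by linarith [hC4 j hj]
    obtain ⟨b, hb, Y, hY, hYb, hYj⟩ := grade G (L t) J C
      (Finset.card_pos.1 (by omega)) (fun j hj => Finset.card_pos.1 (by exact_mod_cast hpos j hj))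
      (fun j hj => (hC j hj).2.1.cov) (by
        intro d hd j hj
        have h1 := hl1 d hd j hj
        have h2 : 4 * (#(nb G {d} (C j)) : ℝ) ≤ #(C j) := by nlinarith [hpos j hj]
        exact_mod_cast h2)
    set X := nb G Y (C b) with hXdef
    have hXC : X ⊆ C b := nb_sub _ _ _
    have hXΓ : Γ ≤ (#X : ℝ) := by
      have : (#(C b) : ℝ) ≤ 4 * #X := by exact_mod_cast hYb
      linarith [hC4 b hb]
    let L1 : ℕ → Finset V := fun i => if i = t then Y else L i
    have hL1 : Lev G A x t L1 q Q := hL.shrink ht hY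
    let C1 : ℤ → Finset V := fun j => nb G X (C j \ nb G Y (C j))
    have hC1C : ∀ j, C1 j ⊆ C j := fun j => (nb_sub _ _ _).trans sdiff_subset
    have hC1size : ∀ j ∈ J, j ≠ b → (#(C j) : ℝ) ≤ 4 * #(C1 j) := by
      intro j hj hjb
      have h1 := coh_cover hcoh (C := C j \ nb G Y (C j)) (Finset.disjoint_of_subset_left hXC
        (Finset.disjoint_of_subset_right sdiff_subset (hdisj b hb j hj (Ne.symm hjb)))) hXΓ
      have h2 : (#(C j) : ℝ) ≤ 2 * #(C j \ nb G Y (C j)) := by exact_mod_cast hYj j hj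
      have h3 := hC4 j hj
      show _ ≤ 4 * (#(nb G X (C j \ nb G Y (C j))) : ℝ)
      linarith
    have hreachX : Reach G L1 t X := by
      refine ⟨?_, ?_⟩
      · intro v hv
        simp only [L1, if_true]
        exact (mem_nb.1 hv).2
      · intro i hi u hu v hv
        have : i ≠ t := by omega
        simp only [L1, this, if_false] at hu
        exact (hC b hb).2.1.anti i hi u hu v (hXC hv)
    have hqJ : ∀ i, 1 ≤ i → i ≤ t → q i ≠ b := by
      intro i h1 h2 h3
      exact Finset.disjoint_left.1 hQJ (hL.blk i h1 h2).1 (h3 ▸ hb)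
    have hL2 := (hL1.mono (Q' := insert b Q) (Finset.subset_insert _ _)
      (fun _ _ => subset_rfl)).extend (Finset.mem_insert_self b Q)
      (hXC.trans (hC b hb).1) hqJ hreachX
    obtain ⟨L', q', J', C', hJ', hcard, hL', hC'⟩ := ih (t+1) _ _ (insert b Q) (J.erase b) C1
      (4 * lam) (by omega) hL2
      (by
        rw [Finset.disjoint_left]; intro a ha ha'
        rw [mem_erase] at ha'
        rcases Finset.mem_insert.1 ha with h | h
        · exact ha'.1 h
        · exact Finset.disjoint_left.1 hQJ h ha'.2)
      (by rw [Finset.card_erase_of_mem hb]; omega)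
      (by
        intro j hj
        rw [mem_erase] at hj
        refine ⟨(hC1C j).trans (hC j hj.2).1, reach_extend ?_ ?_, ?_⟩
        · intro v hv; exact (mem_nb.1 hv).2
        · intro i hi u hu v hv hA
          have hv' : v ∈ C j \ nb G Y (C j) := nb_sub _ _ _ hv
          rw [mem_sdiff] at hv'
          by_cases hit : i = t
          · simp only [L1, hit, if_true] at hu
            exact hv'.2 (mem_nb.2 ⟨hv'.1, u, hu, hA⟩)
          · simp only [L1, hit, if_false] at hu
            exact (hC j hj.2).2.1.anti i (by omega) u hu v hv'.1 hA
        · have h1 := hC1size j hj.2 hj.1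
          have h2 := (hC j hj.2).2.2
          rw [pow_succ] at h2; linarith)
      (by
        intro i hi j hj hij
        rw [mem_erase] at hi hj
        exact Finset.disjoint_of_subset_left (hC1C i)
          (Finset.disjoint_of_subset_right (hC1C j) (hdisj i hi.2 j hj.2 hij)))
      (by
        intro d hd j hj
        rw [mem_erase] at hj
        simp only [if_true] at hd
        have h1 := hl2 b hb j hj.2 (Ne.symm hj.1) d (hXC hd)
        have h2 := hC1size j hj.2 hj.1
        have h3 : (#(nb G {d} (C1 j)) : ℝ) ≤ #(nb G {d} (C j)) := by
          exact_mod_cast Finset.card_le_card (nb_mono G subset_rfl (hC1C j))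
        nlinarith)
      (by
        intro i hi j hj hij d hd
        rw [mem_erase] at hi hj
        have h1 := hl2 i hi.2 j hj.2 hij d (hC1C i hd)
        have h2 := hC1size j hj.2 hj.1
        have h3 : (#(nb G {d} (C1 j)) : ℝ) ≤ #(nb G {d} (C j)) := by
          exact_mod_cast Finset.card_le_card (nb_mono G subset_rfl (hC1C j))
        nlinarith)
      (by positivity)
      (by rw [pow_succ] at hlam; linarith)
    refine ⟨L', q', J', C', hJ'.trans (Finset.erase_subset _ _), ?_, ?_, ?_⟩
    · rw [Finset.card_erase_of_mem hb] at hcard; omega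
    · rw [show t + (r+1) = t + 1 + r by omega]
      refine hL'.mono ?_ (fun _ _ => subset_rfl)
      intro a ha
      simp only [mem_union, mem_insert, mem_sdiff, mem_erase] at ha ⊢
      have : a ∈ J' → a ≠ b := fun h => (mem_erase.1 (hJ' h)).1
      grind
    · intro j hj
      have hj' := mem_erase.1 (hJ' hj)
      obtain ⟨h1, h2, h3⟩ := hC' j hj
      refine ⟨h1.trans (hC1C j), by rw [show t + (r+1) = t + 1 + r by omega]; exact h2, ?_⟩
      have := hC1size j hj'.2 hj'.1
      rw [pow_succ]; linarith

end Part2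

section Part3
open scoped Classical
open Finset

theorem lv_aux {V : Type} (G : SimpleGraph V) (Γ : ℝ) (hΓ : 0 < Γ) (hcoh : Hcoh G Γ)
    (k : ℕ) (J0 : Finset ℤ) (hJ0 : #J0 = k) (B : ℤ → Finset V)
    (hB : ∀ j ∈ J0, 16 * Γ ≤ (#(B j) : ℝ)) (τ n θ : ℝ) (hτ : 4 ≤ τ)
    (hθ : θ = (1/4) ^ (k+1))
    (hexp : ∀ i ∈ J0, ∀ j ∈ J0, i ≠ j → ∀ X ⊆ B i,
        #(B j) ≤ 4 * #(nb G X (B j)) ∨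
        τ * #X * #(B j) ≤ (#(nb G X (B j)) : ℝ) * #(B i))
    (hτn : n ≤ (τ/2) ^ k) (hn : 0 < n)
    (J1 : Finset ℤ) (C : ℤ → Finset V) (hC : ∀ j ∈ J1, 4 * Γ ≤ (#(C j) : ℝ))
    (hBC : ∀ i ∈ J0, ∀ j ∈ J1, Disjoint (B i) (C j)) (x : V) (d : ℕ) :
    ∀ (t : ℕ) (L : ℕ → Finset V) (q : ℕ → ℤ) (Jt : Finset ℤ), t + (d + 1) = k →
    Lev G B x t L q J0 →
    (∀ j ∈ J0, (∀ i, 1 ≤ i → i ≤ t → q i ≠ j) →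
      2 * #(nb G ((range t).biUnion L) (B j)) ≤ #(nb G ((range (t+1)).biUnion L) (B j)) ∧
      (#(B j) ≤ 4 * #(nb G ((range (t+1)).biUnion L) (B j)) ∨
        (τ/2) ^ (t+1) * #(B j) ≤ n * #(nb G ((range (t+1)).biUnion L) (B j)))) →
    Jt ⊆ J1 → #J1 ≤ 2 ^ t * #Jt →
    (∀ j ∈ Jt, (#(nb G ((range (t+1)).biUnion L) (C j)) : ℝ) ≤ 4 ^ t * θ * #(C j)) →
    ∃ (t' : ℕ) (L' : ℕ → Finset V) (q' : ℕ → ℤ) (J1' : Finset ℤ) (C' : ℤ → Finset V),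
      1 ≤ t' ∧ t' ≤ k ∧ Lev G B x t' L' q' J0 ∧ J1' ⊆ J1 ∧ #J1 ≤ 2 ^ (k+1) * #J1' ∧
      ∀ j ∈ J1', C' j ⊆ C j ∧ θ * #(C j) ≤ #(C' j) ∧ Reach G L' t' (C' j) := by
  have hθ0 : 0 < θ := by rw [hθ]; positivity
  induction d using Nat.strong_induction_on with
  | _ d ih => ?_
  intro t L q Jt htd hL hinv hJt hJ1 hCt
  have hη : 4 ^ t * θ ≤ 1/16 := by
    rw [hθ, ← htd]
    have h1 : (4:ℝ) ^ t * (1/4) ^ t = 1 := by rw [← mul_pow]; norm_num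
    have h2 : ((1:ℝ)/4) ^ d ≤ 1 := pow_le_one₀ (by norm_num) (by norm_num)
    have h3 : (4:ℝ) ^ t * (1/4) ^ (t + (d + 1) + 1)
        = ((4:ℝ) ^ t * (1/4) ^ t) * (1/4)^d * (1/16) := by ring
    rw [h3, h1]; linarith
  have hθ2 : θ ≤ 1/16 := by
    have : (1:ℝ) ≤ 4 ^ t := one_le_pow₀ (by norm_num)
    nlinarith
  have hnew : ∀ j ∈ J0, (∀ i, 1 ≤ i → i ≤ t → q i ≠ j) →
      ∃ X ⊆ B j, #(nb G ((range (t+1)).biUnion L) (B j)) ≤ 2 * #X ∧ Reach G L t X := by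
    intro j hj hjq
    refine ⟨nb G ((range (t+1)).biUnion L) (B j) \ nb G ((range t).biUnion L) (B j),
      sdiff_subset.trans (nb_sub _ _ _), ?_, ?_, ?_⟩
    · have h1 := Finset.le_card_sdiff (nb G ((range t).biUnion L) (B j))
        (nb G ((range (t+1)).biUnion L) (B j))
      have h2 := (hinv j hj hjq).1
      omega
    · intro v hv
      rw [mem_sdiff, mem_nb, mem_nb] at hv
      obtain ⟨⟨hvB, u, hu, huv⟩, hv2⟩ := hv
      rw [mem_biUnion] at hu
      obtain ⟨i, hi, hui⟩ := hu
      by_cases hit : i = t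
      · exact ⟨u, hit ▸ hui, huv⟩
      · exfalso; apply hv2
        refine ⟨hvB, u, mem_biUnion.2 ⟨i, ?_, hui⟩, huv⟩
        rw [mem_range] at hi ⊢; omega
    · intro i hi u hu v hv huv
      rw [mem_sdiff, mem_nb, mem_nb] at hv
      exact hv.2 ⟨hv.1.1, u, mem_biUnion.2 ⟨i, mem_range.2 hi, hu⟩, huv⟩
  by_cases hheavy : ∃ j ∈ J0, (∀ i, 1 ≤ i → i ≤ t → q i ≠ j) ∧
      #(B j) ≤ 8 * #(nb G ((range (t+1)).biUnion L) (B j))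
  · obtain ⟨j, hj, hjq, hjh⟩ := hheavy
    obtain ⟨X, hXB, hXc, hXr⟩ := hnew j hj hjq
    have hXΓ : Γ ≤ (#X : ℝ) := by
      have : #(B j) ≤ 16 * #X := by omega
      have : (#(B j) : ℝ) ≤ 16 * #X := by exact_mod_cast this
      linarith [hB j hj]
    refine ⟨t+1, _, _, Jt, fun i => nb G X (C i) \ nb G ((range (t+1)).biUnion L) (C i),
      by omega, by omega, hL.extend hj hXB hjq hXr, hJt, ?_, ?_⟩
    · refine hJ1.trans (Nat.mul_le_mul_right _ (Nat.pow_le_pow_right (by norm_num) (by omega)))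
    · intro i hi
      refine ⟨sdiff_subset.trans (nb_sub _ _ _), ?_, reach_extend ?_ ?_⟩
      · have h1 := coh_cover hcoh (Finset.disjoint_of_subset_left hXB (hBC j hj i (hJt hi))) hXΓ
        have h2 := Finset.le_card_sdiff (nb G ((range (t+1)).biUnion L) (C i)) (nb G X (C i))
        have h2' : (#(nb G X (C i)) : ℝ) ≤ #(nb G X (C i) \ nb G ((range (t+1)).biUnion L) (C i))
            + #(nb G ((range (t+1)).biUnion L) (C i)) := by
          exact_mod_cast (by omega)
        have h3 := hCt i hi
        have h4 := hC i (hJt hi)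
        have h5 : (0:ℝ) ≤ #(C i) := Nat.cast_nonneg _
        nlinarith
      · intro v hv; rw [mem_sdiff, mem_nb] at hv; exact hv.1.2
      · intro a ha u hu v hv huv
        rw [mem_sdiff, mem_nb, mem_nb] at hv
        exact hv.2 ⟨hv.1.1, u, mem_biUnion.2 ⟨a, mem_range.2 (by omega), hu⟩, huv⟩
  · push Not at hheavy
    have hRm : ∀ j, j ∈ J0 \ (Finset.Icc 1 t).image q ↔
        j ∈ J0 ∧ ∀ i, 1 ≤ i → i ≤ t → q i ≠ j := by
      intro j
      simp only [mem_sdiff, mem_image, mem_Icc, not_exists, not_and, and_imp]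
    have hRne : (J0 \ (Finset.Icc 1 t).image q).Nonempty := by
      rw [← Finset.card_pos]
      have h1 := Finset.le_card_sdiff ((Finset.Icc 1 t).image q) J0
      have h2 : #((Finset.Icc 1 t).image q) ≤ t := by
        refine Finset.card_image_le.trans ?_
        simp
      omega
    obtain ⟨j, hjR, hjmax⟩ := Finset.exists_max_image _
      (fun j => (#(nb G ((range (t+1)).biUnion L) (B j)) : ℝ) / #(B j)) hRne
    rw [hRm] at hjR
    obtain ⟨hj, hjq⟩ := hjR
    have hBpos : ∀ j ∈ J0, (0:ℝ) < #(B j) := fun j hj => by linarith [hB j hj]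
    have hlight := hheavy j hj hjq
    have hlight' : 8 * (#(nb G ((range (t+1)).biUnion L) (B j)) : ℝ) < #(B j) := by
      exact_mod_cast hlight
    have hjexp : (τ/2) ^ (t+1) * #(B j) ≤ n * #(nb G ((range (t+1)).biUnion L) (B j)) := by
      rcases (hinv j hj hjq).2 with h | h
      · omega
      · exact h
    have hBj := hBpos j hj
    have hlt : (τ/2) ^ (t+1) < n := by
      by_contra hcon
      push Not at hcon
      have := mul_le_mul_of_nonneg_right hcon hBj.le
      nlinarith
    have hd1 : 1 ≤ d := by
      by_contra hd
      have : t + 1 = k := by omega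
      rw [← this] at hτn
      linarith
    obtain ⟨X, hXB, hXc, hXr⟩ := hnew j hj hjq
    let L' : ℕ → Finset V := fun i => if i = t + 1 then X else L i
    let q' : ℕ → ℤ := fun i => if i = t + 1 then j else q i
    have hL' : Lev G B x (t+1) L' q' J0 := hL.extend hj hXB hjq hXr
    have hU : (range (t+1)).biUnion L' = (range (t+1)).biUnion L := by
      refine Finset.biUnion_congr rfl ?_
      intro i hi
      rw [mem_range] at hi
      have : i ≠ t + 1 := by omega
      simp [L', this]
    have hU2 : (range (t+1+1)).biUnion L' = X ∪ (range (t+1)).biUnion L := by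
      rw [Finset.range_add_one (n := t+1), Finset.biUnion_insert, hU]
      simp [L']
    have hXU : X ⊆ (range (t+1+1)).biUnion L' := by rw [hU2]; exact subset_union_left
    let P := Jt.filter (fun i => 4 ^ (t+1) * θ * #(C i) <
      (#(nb G ((range (t+1+1)).biUnion L') (C i)) : ℝ))
    by_cases hP : #Jt ≤ 2 * #P
    · refine ⟨t+1, L', q', P, fun i => nb G ((range (t+1+1)).biUnion L') (C i) \
        nb G ((range (t+1)).biUnion L) (C i), by omega, by omega, hL',
        (Finset.filter_subset _ _).trans hJt, ?_, ?_⟩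
      · calc #J1 ≤ 2 ^ t * #Jt := hJ1
          _ ≤ 2 ^ t * (2 * #P) := Nat.mul_le_mul_left _ hP
          _ = 2 ^ (t+1) * #P := by ring
          _ ≤ _ := Nat.mul_le_mul_right _ (Nat.pow_le_pow_right (by norm_num) (by omega))
      · intro i hi
        obtain ⟨hiJ, hi2⟩ := mem_filter.1 hi
        refine ⟨sdiff_subset.trans (nb_sub _ _ _), ?_, reach_extend ?_ ?_⟩
        · have h2 := Finset.le_card_sdiff (nb G ((range (t+1)).biUnion L) (C i))
            (nb G ((range (t+1+1)).biUnion L') (C i))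
          have h2' : (#(nb G ((range (t+1+1)).biUnion L') (C i)) : ℝ) ≤
              #(nb G ((range (t+1+1)).biUnion L') (C i) \ nb G ((range (t+1)).biUnion L) (C i))
              + #(nb G ((range (t+1)).biUnion L) (C i)) := by
            exact_mod_cast (by omega)
          have h3 := hCt i hiJ
          have h5 : (0:ℝ) ≤ θ * #(C i) := by positivity
          have h6 : (1:ℝ) ≤ 4 ^ t := one_le_pow₀ (by norm_num)
          rw [pow_succ] at hi2
          nlinarith
        · intro v hv
          rw [mem_sdiff, hU2, nb_union, mem_union] at hv
          rcases hv.1 with h | h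
          · exact (mem_nb.1 h).2
          · exact absurd h hv.2
        · intro a ha u hu v hv huv
          rw [mem_sdiff, mem_nb, mem_nb] at hv
          exact hv.2 ⟨hv.1.1, u, mem_biUnion.2 ⟨a, mem_range.2 (by omega), hu⟩, huv⟩
    · push Not at hP
      refine ih (d-1) (by omega) (t+1) L' q' (Jt \ P) (by omega) hL' ?_ (sdiff_subset.trans hJt) ?_ ?_
      · intro i hi hiq
        have hij : j ≠ i := by
          have := hiq (t+1) (by omega) le_rfl
          simpa [q'] using this
        have hiq' : ∀ a, 1 ≤ a → a ≤ t → q a ≠ i := by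
          intro a h1 h2
          have := hiq a h1 (by omega)
          have h3 : a ≠ t + 1 := by omega
          simpa [q', h3] using this
        have hBi := hBpos i hi
        have hilight := hheavy i hi hiq'
        have hmono : #(nb G X (B i)) ≤ #(nb G ((range (t+1+1)).biUnion L') (B i)) :=
          Finset.card_le_card (nb_mono G hXU subset_rfl)
        rw [hU]
        rcases hexp j hj i hi hij X hXB with h | h
        · exact ⟨by omega, Or.inl (by omega)⟩
        · have hm := hjmax i ((hRm i).2 ⟨hi, hiq'⟩)
          have hXc' : (#(nb G ((range (t+1)).biUnion L) (B j)) : ℝ) ≤ 2 * #X := by exact_mod_cast hXc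
          have hmono' : (#(nb G X (B i)) : ℝ) ≤ #(nb G ((range (t+1+1)).biUnion L') (B i)) := by
            exact_mod_cast hmono
          generalize hN2 : (#(nb G ((range (t+1+1)).biUnion L') (B i)) : ℝ) = N2 at *
          generalize hN1 : (#(nb G ((range (t+1)).biUnion L) (B i)) : ℝ) = N1 at *
          have ha0 : (0:ℝ) ≤ #(nb G ((range (t+1)).biUnion L) (B j)) := Nat.cast_nonneg _
          generalize (#(nb G ((range (t+1)).biUnion L) (B j)) : ℝ) = a at *
          rw [div_le_div_iff₀ hBi hBj] at hm
          have key : τ / 2 * a * #(B i) ≤ N2 * #(B j) := by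
            calc τ / 2 * a * #(B i) ≤ τ / 2 * (2 * #X) * #(B i) := by gcongr
              _ = τ * #X * #(B i) := by ring
              _ ≤ _ := h
              _ ≤ _ := by gcongr
          refine ⟨?_, Or.inr ?_⟩
          · have h1 : 2 * N1 ≤ N2 := by
              have : 2 * (N1 * #(B j)) ≤ N2 * #(B j) := by
                calc 2 * (N1 * #(B j)) ≤ 2 * (a * #(B i)) := by linarith
                  _ ≤ τ / 2 * (a * #(B i)) := by
                      apply mul_le_mul_of_nonneg_right (by linarith); positivity
                  _ = τ / 2 * a * #(B i) := by ring
                  _ ≤ _ := key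
              nlinarith
            rw [← hN1, ← hN2] at h1
            exact_mod_cast h1
          · have : (τ/2)^(t+1+1) * #(B i) * #(B j) ≤ n * N2 * #(B j) := by
              calc (τ/2)^(t+1+1) * #(B i) * #(B j) = (τ/2) * #(B i) * ((τ/2)^(t+1) * #(B j)) := by ring
                _ ≤ (τ/2) * #(B i) * (n * a) := by gcongr
                _ = n * (τ / 2 * a * #(B i)) := by ring
                _ ≤ n * (N2 * #(B j)) := by gcongr
                _ = _ := by ring
            exact le_of_mul_le_mul_right this hBj
      · have hPJ : P ⊆ Jt := Finset.filter_subset _ _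
        have h1 := Finset.card_sdiff_add_card_eq_card hPJ
        have h2 : #Jt ≤ 2 * #(Jt \ P) := by omega
        calc #J1 ≤ 2 ^ t * #Jt := hJ1
          _ ≤ 2 ^ t * (2 * #(Jt \ P)) := Nat.mul_le_mul_left _ h2
          _ = _ := by ring
      · intro i hi
        rw [mem_sdiff] at hi
        have := hi.2
        simp only [P, mem_filter, not_and, not_lt] at this
        exact this hi.1

theorem lv {V : Type} (G : SimpleGraph V) (Γ : ℝ) (hΓ : 0 < Γ) (hcoh : Hcoh G Γ)
    (k : ℕ) (hk : 1 ≤ k) (b0 : ℤ) (J0 : Finset ℤ) (hJ0 : #J0 = k) (hb0 : b0 ∉ J0)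
    (B : ℤ → Finset V)
    (hB : ∀ j ∈ J0, 16 * Γ ≤ (#(B j) : ℝ)) (τ n θ : ℝ) (hτ : 4 ≤ τ)
    (hθ : θ = (1/4) ^ (k+1))
    (hexp : ∀ i ∈ insert b0 J0, ∀ j ∈ insert b0 J0, i ≠ j → ∀ X ⊆ B i,
        #(B j) ≤ 4 * #(nb G X (B j)) ∨
        τ * #X * #(B j) ≤ (#(nb G X (B j)) : ℝ) * #(B i))
    (hτn : n ≤ (τ/2) ^ k) (hn : 0 < n) (hBn : (#(B b0) : ℝ) ≤ n)
    (J1 : Finset ℤ) (C : ℤ → Finset V) (hC : ∀ j ∈ J1, 4 * Γ ≤ (#(C j) : ℝ))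
    (hBC : ∀ i ∈ J0, ∀ j ∈ J1, Disjoint (B i) (C j)) (x : V) (hx : x ∈ B b0)
    (hxC : ∀ j ∈ J1, (#(nb G {x} (C j)) : ℝ) ≤ θ * #(C j)) :
    ∃ (t' : ℕ) (L' : ℕ → Finset V) (q' : ℕ → ℤ) (J1' : Finset ℤ) (C' : ℤ → Finset V),
      1 ≤ t' ∧ t' ≤ k ∧ Lev G B x t' L' q' J0 ∧ J1' ⊆ J1 ∧ #J1 ≤ 2 ^ (k+1) * #J1' ∧
      ∀ j ∈ J1', C' j ⊆ C j ∧ θ * #(C j) ≤ #(C' j) ∧ Reach G L' t' (C' j) := by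
  refine lv_aux G Γ hΓ hcoh k J0 hJ0 B hB τ n θ hτ hθ
    (fun i hi j hj => hexp i (mem_insert_of_mem hi) j (mem_insert_of_mem hj)) hτn hn J1 C hC hBC x
    (k-1) 0 (fun _ => {x}) (fun _ => 0) J1 (by omega) ?_ ?_ subset_rfl (by simp) ?_
  · refine ⟨rfl, ?_, ?_, ?_, ?_⟩ <;> intros <;> omega
  · intro j hj _
    have e1 : (range (0+1)).biUnion (fun _ : ℕ => ({x} : Finset V)) = {x} := by simp
    have e0 : nb G ((range 0).biUnion (fun _ : ℕ => ({x} : Finset V))) (B j) = ∅ := by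
      ext v; simp [mem_nb]
    rw [e1, e0]
    refine ⟨by simp, ?_⟩
    have hne : b0 ≠ j := fun h => hb0 (h ▸ hj)
    rcases hexp b0 (mem_insert_self _ _) j (mem_insert_of_mem hj) hne {x} (by simpa using hx) with h | h
    · exact Or.inl h
    · right
      simp only [card_singleton, Nat.cast_one, mul_one] at h
      have h1 : (0:ℝ) ≤ #(B j) := Nat.cast_nonneg _
      have h2 : (0:ℝ) ≤ #(nb G {x} (B j)) := Nat.cast_nonneg _
      simp only [zero_add, pow_one]
      calc τ / 2 * (#(B j) : ℝ) ≤ τ * #(B j) := by nlinarith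
        _ ≤ _ := h
        _ ≤ #(nb G {x} (B j)) * n := by gcongr
        _ = _ := by ring
  · intro j hj
    have e1 : (range (0+1)).biUnion (fun _ : ℕ => ({x} : Finset V)) = {x} := by simp
    rw [e1]; simpa using hxC j hj

end Part3

section Part4
open scoped Classical
open Finset

theorem avg_one {Ω : Type*} [Fintype Ω] (π F : Ω → ℝ) (h0 : ∀ o, 0 ≤ π o) (h1 : ∑ o, π o = 1) :
    ∃ o, F o ≤ ∑ o, π o * F o := by
  by_contra hcon
  push Not at hcon
  set M := ∑ o, π o * F o with hM
  have h2 : ∑ o, π o * (F o - M) = 0 := by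
    simp only [mul_sub, Finset.sum_sub_distrib, ← Finset.sum_mul, h1, one_mul, ← hM, sub_self]
  have h3 := (Finset.sum_eq_zero_iff_of_nonneg (fun o _ =>
    mul_nonneg (h0 o) (sub_pos.2 (hcon o)).le)).1 h2
  have h4 : ∑ o, π o = 0 := by
    apply Finset.sum_eq_zero
    intro o ho
    rcases mul_eq_zero.1 (h3 o ho) with h | h
    · exact h
    · exact absurd h (sub_pos.2 (hcon o)).ne'
  rw [h1] at h4
  exact one_ne_zero h4

theorem avg_many {Ω : Type*} [Fintype Ω] [Nonempty Ω] (π : ℤ → Ω → ℝ) (J : Finset ℤ) :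
    ∀ (c1 : ℤ → Ω → ℝ) (c2 : ℤ → ℤ → Ω → Ω → ℝ),
    (∀ i ∈ J, ∀ o, 0 ≤ π i o) → (∀ i ∈ J, ∑ o, π i o = 1) → (∀ i o o', c2 i i o o' = 0) →
    ∃ ω : ℤ → Ω, ∑ i ∈ J, c1 i (ω i) + ∑ i ∈ J, ∑ j ∈ J, c2 i j (ω i) (ω j) ≤
      ∑ i ∈ J, ∑ o, π i o * c1 i o +
        ∑ i ∈ J, ∑ j ∈ J, ∑ o, ∑ o', π i o * π j o' * c2 i j o o' := by
  induction J using Finset.induction_on with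
  | empty => intro c1 c2 _ _ _; exact ⟨fun _ => Classical.arbitrary Ω, by simp⟩
  | insert b J hb ih =>
    intro c1 c2 h0 h1 hd
    obtain ⟨o, ho⟩ := avg_one (π b) (fun o => c1 b o + ∑ j ∈ J, ∑ o', π j o' *
      (c2 b j o o' + c2 j b o' o)) (h0 b (mem_insert_self _ _)) (h1 b (mem_insert_self _ _))
    obtain ⟨ω, hω⟩ := ih (fun j o' => c1 j o' + (c2 b j o o' + c2 j b o' o)) c2
      (fun i hi => h0 i (mem_insert_of_mem hi)) (fun i hi => h1 i (mem_insert_of_mem hi)) hd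
    refine ⟨fun i => if i = b then o else ω i, ?_⟩
    have e : ∀ i ∈ J, (if i = b then o else ω i) = ω i := by
      intro i hi
      have : i ≠ b := fun h => hb (h ▸ hi)
      simp [this]
    rw [Finset.sum_insert hb, Finset.sum_insert hb, Finset.sum_insert hb, Finset.sum_insert hb,
      Finset.sum_insert hb, Finset.sum_insert hb]
    simp only [if_true, hd, mul_zero, Finset.sum_const_zero, zero_add]
    rw [Finset.sum_congr rfl (fun i hi => by rw [e i hi] : ∀ i ∈ J, c1 i (if i = b then o else ω i)
      = c1 i (ω i))]
    rw [Finset.sum_congr rfl (fun i hi => by rw [e i hi] : ∀ i ∈ J,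
      c2 b i o (if i = b then o else ω i) = c2 b i o (ω i))]
    have e2 : ∑ i ∈ J, ∑ j ∈ insert b J, c2 i j (if i = b then o else ω i) (if j = b then o else ω j)
        = ∑ i ∈ J, c2 i b (ω i) o + ∑ i ∈ J, ∑ j ∈ J, c2 i j (ω i) (ω j) := by
      rw [← Finset.sum_add_distrib]
      refine Finset.sum_congr rfl fun i hi => ?_
      rw [Finset.sum_insert hb, e i hi]
      simp only [if_true]
      congr 1
      exact Finset.sum_congr rfl fun j hj => by rw [e j hj]
    have e3 : ∑ i ∈ J, ∑ j ∈ insert b J, ∑ o, ∑ o', π i o * π j o' * c2 i j o o'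
        = ∑ i ∈ J, ∑ o, ∑ o', π i o * π b o' * c2 i b o o' +
          ∑ i ∈ J, ∑ j ∈ J, ∑ o, ∑ o', π i o * π j o' * c2 i j o o' := by
      rw [← Finset.sum_add_distrib]
      refine Finset.sum_congr rfl fun i hi => ?_
      rw [Finset.sum_insert hb]
    rw [e2, e3]
    have e4 : ∑ o, π b o * (c1 b o + ∑ j ∈ J, ∑ o', π j o' * (c2 b j o o' + c2 j b o' o))
        = ∑ o, π b o * c1 b o + (∑ j ∈ J, ∑ o, ∑ o', π b o * π j o' * c2 b j o o' +
          ∑ i ∈ J, ∑ o, ∑ o', π i o * π b o' * c2 i b o o') := by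
      simp only [mul_add, Finset.sum_add_distrib, Finset.mul_sum]
      congr 1
      congr 1
      · rw [Finset.sum_comm]
        refine Finset.sum_congr rfl fun j _ => Finset.sum_congr rfl fun o _ =>
          Finset.sum_congr rfl fun o' _ => by ring
      · rw [Finset.sum_comm]
        refine Finset.sum_congr rfl fun j _ => ?_
        rw [Finset.sum_comm]
        exact Finset.sum_congr rfl fun o _ => Finset.sum_congr rfl fun o' _ => by ring
    rw [e4] at ho
    simp only [mul_add, Finset.sum_add_distrib] at hω ho
    linarith

/-- pairwise independent sampling -/
theorem sampling (V : Type) [Fintype V] (P : ℕ) (hP : 1 ≤ P) :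
    ∃ (Ω : Type) (_ : Fintype Ω) (_ : Nonempty Ω) (μ : Ω → ℝ) (χ : V → Ω → ℝ),
      (∀ o, 0 ≤ μ o) ∧ ∑ o, μ o = 1 ∧ (∀ d o, χ d o = 0 ∨ χ d o = 1) ∧
      (∀ d, ∑ o, μ o * χ d o = 1 / (P:ℝ)) ∧
      (∀ d d', ∑ o, μ o * (χ d o * χ d' o) ≤
        (1 / (P:ℝ)) ^ 2 + if d = d' then 1 / (P:ℝ) else 0) := by
  have : NeZero P := ⟨by omega⟩
  have hP0 : (0:ℝ) < P := by exact_mod_cast hP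
  have hcount : ∀ s : V → Finset (Fin P),
      ∑ o : V → Fin P, (1 / (P:ℝ) ^ (Fintype.card V)) * (if ∀ v, o v ∈ s v then (1:ℝ) else 0)
        = ∏ v, ((#(s v) : ℝ) / P) := by
    intro s
    rw [← Finset.mul_sum, ← Finset.sum_filter, Finset.sum_const, nsmul_eq_mul, mul_one]
    have : (univ.filter fun o : V → Fin P => ∀ v, o v ∈ s v) = Fintype.piFinset s := by
      ext o; simp
    rw [this, Fintype.card_piFinset, Finset.prod_div_distrib]
    simp
    ring
  have hone : ∀ d : V, ∑ o : V → Fin P, (1 / (P:ℝ) ^ (Fintype.card V)) * (if o d = 0 then (1:ℝ) else 0)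
      = 1 / (P:ℝ) := by
    intro d
    have h := hcount (fun v => if v = d then {0} else univ)
    have e : ∀ o : V → Fin P, (∀ v, o v ∈ (if v = d then ({0} : Finset (Fin P)) else univ)) ↔ o d = 0 := by
      intro o
      constructor
      · intro h; simpa using h d
      · intro h v
        by_cases hv : v = d
        · subst hv; simp [h]
        · simp [hv]
    simp only [e] at h
    rw [h, Finset.prod_eq_single d]
    · simp
    · intro v _ hv; simp [hv, hP0.ne']
    · simp
  refine ⟨V → Fin P, inferInstance, inferInstance, fun _ => 1 / (P:ℝ) ^ (Fintype.card V),
    fun d o => if o d = 0 then 1 else 0, fun _ => by positivity, ?_, ?_, hone, ?_⟩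
  · have h := hcount (fun v => univ)
    simp only [mem_univ, implies_true, if_true, mul_one] at h
    rw [h]
    apply Finset.prod_eq_one
    intro v _
    simp [hP0.ne']
  · intro d o
    by_cases h : o d = 0
    · right; simp [h]
    · left; simp [h]
  · intro d d'
    dsimp only
    by_cases hdd : d = d'
    · subst hdd
      have : ∀ o : V → Fin P, ((if o d = 0 then (1:ℝ) else 0) * (if o d = 0 then 1 else 0))
          = if o d = 0 then 1 else 0 := by
        intro o; split_ifs <;> simp
      simp only [this, hone, if_true]
      have : (0:ℝ) ≤ (1 / (P:ℝ))^2 := by positivity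
      linarith
    · have h := hcount (fun v => if v = d ∨ v = d' then {0} else univ)
      have e : ∀ o : V → Fin P, (if (∀ v, o v ∈ (if v = d ∨ v = d' then ({0} : Finset (Fin P)) else univ))
          then (1:ℝ) else 0) = (if o d = 0 then (1:ℝ) else 0) * (if o d' = 0 then 1 else 0) := by
        intro o
        have : (∀ v, o v ∈ (if v = d ∨ v = d' then ({0} : Finset (Fin P)) else univ)) ↔
            (o d = 0 ∧ o d' = 0) := by
          constructor
          · intro h; exact ⟨by simpa using h d, by simpa using h d'⟩
          · rintro ⟨h, h'⟩ v
            by_cases hv : v = d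
            · subst hv; simp [h]
            · by_cases hv' : v = d'
              · subst hv'; simp [h']
              · simp [hv, hv']
        simp only [this]
        split_ifs <;> simp_all
      simp only [e] at h
      rw [h, ← Finset.prod_subset (Finset.subset_univ {d, d'})]
      · rw [Finset.prod_pair hdd]
        simp [hdd, sq]
      · intro v _ hv
        simp only [mem_insert, mem_singleton, not_or] at hv
        simp [hv, hP0.ne']

end Part4

section Part5
open scoped Classical
open Finset

theorem mom1 {V Ω : Type} [Fintype Ω] (μ : Ω → ℝ) (χ : V → Ω → ℝ) (p : ℝ)
    (h1 : ∀ d, ∑ o, μ o * χ d o = p) (S : Finset V) :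
    ∑ o, μ o * ∑ d ∈ S, χ d o = #S * p := by
  simp only [Finset.mul_sum]
  rw [Finset.sum_comm, Finset.sum_congr rfl (fun d _ => h1 d)]
  simp

theorem mom2 {V Ω : Type} [Fintype Ω] (μ : Ω → ℝ) (χ : V → Ω → ℝ) (p : ℝ)
    (h2 : ∀ d d', ∑ o, μ o * (χ d o * χ d' o) ≤ p ^ 2 + if d = d' then p else 0)
    (N S : Finset V) :
    ∑ o, μ o * ((∑ d ∈ N, χ d o) * ∑ d ∈ S, χ d o) ≤ #N * #S * p ^ 2 + #(N ∩ S) * p := by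
  have e : ∑ o, μ o * ((∑ d ∈ N, χ d o) * ∑ d ∈ S, χ d o)
      = ∑ d ∈ N, ∑ d' ∈ S, ∑ o, μ o * (χ d o * χ d' o) := by
    simp only [Finset.sum_mul_sum]
    simp only [Finset.mul_sum]
    rw [Finset.sum_comm]
    refine Finset.sum_congr rfl fun d _ => ?_
    rw [Finset.sum_comm]
  rw [e]
  calc ∑ d ∈ N, ∑ d' ∈ S, ∑ o, μ o * (χ d o * χ d' o)
      ≤ ∑ d ∈ N, ∑ d' ∈ S, (p ^ 2 + if d = d' then p else 0) :=
        Finset.sum_le_sum fun d _ => Finset.sum_le_sum fun d' _ => h2 d d'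
    _ = _ := by
      simp only [Finset.sum_add_distrib, Finset.sum_const, nsmul_eq_mul, Finset.sum_ite_eq]
      rw [← Finset.sum_filter, Finset.sum_const, nsmul_eq_mul, Finset.filter_mem_eq_inter]
      ring

theorem sum_nat {V Ω : Type} (χ : V → Ω → ℝ) (h : ∀ d o, χ d o = 0 ∨ χ d o = 1)
    (S : Finset V) (o : Ω) : ∃ n : ℕ, ∑ d ∈ S, χ d o = n := by
  refine ⟨#(S.filter fun d => χ d o = 1), ?_⟩
  rw [Finset.card_filter]
  push_cast
  refine Finset.sum_congr rfl fun d _ => ?_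
  rcases h d o with h | h <;> simp [h]

theorem mul_div_le_self' {W M : ℝ} (hM : 0 ≤ M) : W * (M / W) ≤ M := by
  by_cases h : W = 0
  · simp [h, hM]
  · rw [mul_div_cancel₀ _ h]

/-- expectation of the first unary cost -/
theorem cost1 {V Ω : Type} [Fintype Ω] (μ : Ω → ℝ) (χ : V → Ω → ℝ) (p : ℝ) (hp : 0 < p)
    (hμ : ∀ o, 0 ≤ μ o) (h01 : ∀ d o, χ d o = 0 ∨ χ d o = 1)
    (h1 : ∀ d, ∑ o, μ o * χ d o = p)
    (h2 : ∀ d d', ∑ o, μ o * (χ d o * χ d' o) ≤ p ^ 2 + if d = d' then p else 0)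
    (S : V → Finset V) (r : ℕ) (hr : 1 ≤ r) (C : Finset V) (hC : 0 < #C) (hS : ∀ v ∈ C, #(S v) = r) :
    ∑ o, (μ o * (∑ v ∈ C, ∑ d ∈ S v, χ d o) / (r * p * #C)) *
      ((∑ v ∈ C, ((∑ d ∈ S v, χ d o) ^ 2 - ∑ d ∈ S v, χ d o)) / (∑ v ∈ C, ∑ d ∈ S v, χ d o))
      ≤ r * p := by
  have hr0 : (0:ℝ) < r := by exact_mod_cast hr
  have hC0 : (0:ℝ) < #C := by exact_mod_cast hC
  have he : 0 < r * p * #C := by positivity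
  calc _ ≤ ∑ o, μ o * (∑ v ∈ C, ((∑ d ∈ S v, χ d o) ^ 2 - ∑ d ∈ S v, χ d o)) / (r * p * #C) := by
        refine Finset.sum_le_sum fun o _ => ?_
        have hM : 0 ≤ ∑ v ∈ C, ((∑ d ∈ S v, χ d o) ^ 2 - ∑ d ∈ S v, χ d o) := by
          refine Finset.sum_nonneg fun v _ => ?_
          obtain ⟨n, hn⟩ := sum_nat χ h01 (S v) o
          rw [hn]
          have : n ≤ n ^ 2 := Nat.le_self_pow (by norm_num) n
          have : (n:ℝ) ≤ n ^ 2 := by exact_mod_cast this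
          linarith
        have := mul_div_le_self' (W := ∑ v ∈ C, ∑ d ∈ S v, χ d o) hM
        rw [div_mul_eq_mul_div, div_le_div_iff_of_pos_right he, mul_assoc]
        exact mul_le_mul_of_nonneg_left this (hμ o)
    _ = (∑ v ∈ C, (∑ o, μ o * ((∑ d ∈ S v, χ d o) * ∑ d ∈ S v, χ d o) -
          ∑ o, μ o * ∑ d ∈ S v, χ d o)) / (r * p * #C) := by
        rw [← Finset.sum_div]
        congr 1
        simp only [Finset.mul_sum (s := C), ← Finset.sum_sub_distrib]
        rw [Finset.sum_comm]
        refine Finset.sum_congr rfl fun v _ => Finset.sum_congr rfl fun o _ => ?_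
        ring
    _ ≤ (∑ v ∈ C, (r:ℝ) ^ 2 * p ^ 2) / (r * p * #C) := by
        rw [div_le_div_iff_of_pos_right he]
        refine Finset.sum_le_sum fun v hv => ?_
        have a := mom2 μ χ p h2 (S v) (S v)
        have b := mom1 μ χ p h1 (S v)
        rw [hS v hv] at a b
        rw [Finset.inter_self, hS v hv] at a
        rw [b]
        nlinarith
    _ = r * p := by
        rw [Finset.sum_const, nsmul_eq_mul]
        field_simp

theorem cost2 {Ω : Type} [Fintype Ω] (μ W : Ω → ℝ) (e κ : ℝ) (hκ : 0 ≤ κ) (he : 0 < e)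
    (hμ : ∀ o, 0 ≤ μ o) (hμ1 : ∑ o, μ o = 1) :
    ∑ o, (μ o * W o / e) * (if W o ≤ κ * e then 1 else 0) ≤ κ := by
  calc _ ≤ ∑ o, μ o * κ := by
        refine Finset.sum_le_sum fun o _ => ?_
        split_ifs with h
        · rw [mul_one, div_le_iff₀ he, mul_assoc]
          exact mul_le_mul_of_nonneg_left h (hμ o)
        · rw [mul_zero]; exact mul_nonneg (hμ o) hκ
    _ = κ := by rw [← Finset.sum_mul, hμ1, one_mul]

theorem cost3 {V Ω : Type} [Fintype Ω] (G : SimpleGraph V) (μ : Ω → ℝ) (χ : V → Ω → ℝ) (p : ℝ)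
    (hp : 0 < p)
    (hμ : ∀ o, 0 ≤ μ o) (h01 : ∀ d o, χ d o = 0 ∨ χ d o = 1)
    (h1 : ∀ d, ∑ o, μ o * χ d o = p)
    (S : V → Finset V) (r : ℕ) (hr : 1 ≤ r) (C C' : Finset V) (hC : 0 < #C) (hC' : 0 < #C')
    (hS : ∀ v ∈ C, #(S v) = r) (hS' : ∀ v ∈ C', #(S v) = r) (lam : ℝ)
    (hl : ∀ v ∈ C, (#(nb G {v} C') : ℝ) ≤ lam * #C') :
    ∑ o, ∑ o', (μ o * (∑ v ∈ C, ∑ d ∈ S v, χ d o) / (r * p * #C)) *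
      (μ o' * (∑ v ∈ C', ∑ d ∈ S v, χ d o') / (r * p * #C')) *
      ((∑ u ∈ C, ∑ v ∈ nb G {u} C', (∑ d ∈ S u, χ d o) * ∑ d ∈ S v, χ d o') /
        ((∑ v ∈ C, ∑ d ∈ S v, χ d o) * (∑ v ∈ C', ∑ d ∈ S v, χ d o'))) ≤ lam := by
  have hr0 : (0:ℝ) < r := by exact_mod_cast hr
  have hC0 : (0:ℝ) < #C := by exact_mod_cast hC
  have hC0' : (0:ℝ) < #C' := by exact_mod_cast hC'
  have he : 0 < (r * p * #C) * (r * p * #C') := by positivity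
  have hf0 : ∀ v o, 0 ≤ ∑ d ∈ S v, χ d o := by
    intro v o
    obtain ⟨n, hn⟩ := sum_nat χ h01 (S v) o
    rw [hn]; positivity
  calc _ ≤ ∑ o, ∑ o', μ o * μ o' * (∑ u ∈ C, ∑ v ∈ nb G {u} C',
        (∑ d ∈ S u, χ d o) * ∑ d ∈ S v, χ d o') / ((r * p * #C) * (r * p * #C')) := by
        refine Finset.sum_le_sum fun o _ => Finset.sum_le_sum fun o' _ => ?_
        have hM : 0 ≤ ∑ u ∈ C, ∑ v ∈ nb G {u} C', (∑ d ∈ S u, χ d o) * ∑ d ∈ S v, χ d o' :=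
          Finset.sum_nonneg fun u _ => Finset.sum_nonneg fun v _ => mul_nonneg (hf0 _ _) (hf0 _ _)
        have := mul_div_le_self' (W := (∑ v ∈ C, ∑ d ∈ S v, χ d o) * (∑ v ∈ C', ∑ d ∈ S v, χ d o')) hM
        rw [div_mul_div_comm, div_mul_eq_mul_div, div_le_div_iff_of_pos_right he]
        have h3 := mul_le_mul_of_nonneg_left this (mul_nonneg (hμ o) (hμ o'))
        refine le_trans (le_of_eq ?_) h3
        ring
    _ = (∑ u ∈ C, ∑ v ∈ nb G {u} C', (∑ o, μ o * ∑ d ∈ S u, χ d o) *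
          (∑ o', μ o' * ∑ d ∈ S v, χ d o')) / ((r * p * #C) * (r * p * #C')) := by
        simp only [← Finset.sum_div]
        congr 1
        simp only [Finset.mul_sum (s := C), Finset.mul_sum (s := nb G _ C'),
          Finset.sum_mul_sum (s := univ)]
        rw [Finset.sum_congr rfl (fun o _ => Finset.sum_comm), Finset.sum_comm]
        refine Finset.sum_congr rfl fun u _ => ?_
        rw [Finset.sum_congr rfl (fun o _ => Finset.sum_comm), Finset.sum_comm]
        refine Finset.sum_congr rfl fun v _ => Finset.sum_congr rfl fun o _ =>
          Finset.sum_congr rfl fun o' _ => ?_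
        ring
    _ ≤ (∑ u ∈ C, (lam * #C') * ((r * p) * (r * p))) / ((r * p * #C) * (r * p * #C')) := by
        rw [div_le_div_iff_of_pos_right he]
        refine Finset.sum_le_sum fun u hu => ?_
        have : ∀ v ∈ nb G {u} C', (∑ o, μ o * ∑ d ∈ S u, χ d o) *
          (∑ o', μ o' * ∑ d ∈ S v, χ d o') = (r * p) * (r * p) := by
          intro v hv
          rw [mom1 μ χ p h1, mom1 μ χ p h1, hS u hu, hS' v (nb_sub _ _ _ hv)]
        rw [Finset.sum_congr rfl this, Finset.sum_const, nsmul_eq_mul]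
        exact mul_le_mul_of_nonneg_right (hl u hu) (by positivity)
    _ = lam := by
        rw [Finset.sum_const, nsmul_eq_mul]
        field_simp

theorem cost4 {V Ω : Type} [Fintype Ω] (G : SimpleGraph V) (μ : Ω → ℝ) (χ : V → Ω → ℝ) (p : ℝ)
    (hp : 0 < p)
    (hμ : ∀ o, 0 ≤ μ o) (h01 : ∀ d o, χ d o = 0 ∨ χ d o = 1)
    (h1 : ∀ d, ∑ o, μ o * χ d o = p)
    (h2 : ∀ d d', ∑ o, μ o * (χ d o * χ d' o) ≤ p ^ 2 + if d = d' then p else 0)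
    (D : Finset V) (S : V → Finset V) (r bb : ℕ) (hr : 1 ≤ r) (C C' : Finset V)
    (hC : 0 < #C) (hC' : 0 < #C')
    (hS : ∀ v ∈ C, #(S v) = r) (hS' : ∀ v ∈ C', #(S v) = r) (hSD : ∀ v ∈ C', S v ⊆ D)
    (hN : ∀ v ∈ C, #(nb G {v} D) ≤ r * bb) (lam : ℝ)
    (hl : ∀ d ∈ D, (#(nb G {d} C) : ℝ) ≤ lam * #C) :
    ∑ o, ∑ o', (μ o * (∑ v ∈ C, ∑ d ∈ S v, χ d o) / (r * p * #C)) *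
      (μ o' * (∑ v ∈ C', ∑ d ∈ S v, χ d o') / (r * p * #C')) *
      ((∑ v ∈ C, (∑ d ∈ S v, χ d o) * ∑ d ∈ nb G {v} D, χ d o') /
        (∑ v ∈ C, ∑ d ∈ S v, χ d o)) ≤ r * bb * p + lam := by
  have hr0 : (0:ℝ) < r := by exact_mod_cast hr
  have hC0 : (0:ℝ) < #C := by exact_mod_cast hC
  have hC0' : (0:ℝ) < #C' := by exact_mod_cast hC'
  have he : 0 < (r * p * #C) * (r * p * #C') := by positivity
  have hf0 : ∀ (T : Finset V) o, 0 ≤ ∑ d ∈ T, χ d o := by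
    intro v o
    obtain ⟨n, hn⟩ := sum_nat χ h01 v o
    rw [hn]; positivity
  have hsum : ∑ v ∈ C, ∑ w ∈ C', (#(nb G {v} D ∩ S w) : ℝ) ≤ #C' * (r * (lam * #C)) := by
    rw [Finset.sum_comm]
    calc ∑ w ∈ C', ∑ v ∈ C, (#(nb G {v} D ∩ S w) : ℝ)
        ≤ ∑ w ∈ C', ∑ d ∈ S w, (lam * #C) := by
          refine Finset.sum_le_sum fun w hw => ?_
          have : ∑ v ∈ C, (#(nb G {v} D ∩ S w) : ℝ) = ∑ d ∈ S w, (#(nb G {d} C) : ℝ) := by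
            have e1 : ∀ v ∈ C, (#(nb G {v} D ∩ S w) : ℝ) = ∑ d ∈ S w, if G.Adj d v then 1 else 0 := by
              intro v _
              rw [← Finset.sum_filter, Finset.sum_const, nsmul_eq_mul, mul_one]
              congr 2
              ext d
              simp only [mem_inter, mem_nb, mem_filter, mem_singleton, exists_eq_left]
              have := @hSD w hw d
              rw [G.adj_comm]
              tauto
            have e2 : ∀ d ∈ S w, (#(nb G {d} C) : ℝ) = ∑ v ∈ C, if G.Adj d v then 1 else 0 := by
              intro d _
              rw [← Finset.sum_filter, Finset.sum_const, nsmul_eq_mul, mul_one]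
              congr 2
              ext v
              simp only [mem_nb, mem_filter, mem_singleton, exists_eq_left]
            rw [Finset.sum_congr rfl e1, Finset.sum_congr rfl e2, Finset.sum_comm]
          rw [this]
          exact Finset.sum_le_sum fun d hd => hl d (hSD w hw hd)
      _ = _ := by
          rw [Finset.sum_congr rfl (fun w hw => by
            rw [Finset.sum_const, nsmul_eq_mul, hS' w hw] : ∀ w ∈ C', ∑ d ∈ S w, (lam * #C)
              = (r:ℝ) * (lam * #C))]
          rw [Finset.sum_const, nsmul_eq_mul]
  calc _ ≤ ∑ o, ∑ o', μ o * μ o' * (∑ v ∈ C, ∑ w ∈ C', (∑ d ∈ S v, χ d o) *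
        ((∑ d ∈ nb G {v} D, χ d o') * ∑ d ∈ S w, χ d o')) / ((r * p * #C) * (r * p * #C')) := by
        refine Finset.sum_le_sum fun o _ => Finset.sum_le_sum fun o' _ => ?_
        have hM : 0 ≤ ∑ v ∈ C, (∑ d ∈ S v, χ d o) * ∑ d ∈ nb G {v} D, χ d o' :=
          Finset.sum_nonneg fun u _ => mul_nonneg (hf0 _ _) (hf0 _ _)
        have hW : 0 ≤ ∑ v ∈ C', ∑ d ∈ S v, χ d o' := Finset.sum_nonneg fun u _ => hf0 _ _
        have := mul_div_le_self' (W := (∑ v ∈ C, ∑ d ∈ S v, χ d o)) hM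
        rw [div_mul_div_comm, div_mul_eq_mul_div, div_le_div_iff_of_pos_right he]
        have h3 := mul_le_mul_of_nonneg_left this (mul_nonneg (mul_nonneg (hμ o) (hμ o')) hW)
        refine le_trans (le_of_eq ?_) (h3.trans (le_of_eq ?_))
        · ring
        · rw [mul_assoc]
          congr 1
          rw [mul_comm, Finset.sum_mul_sum]
          refine Finset.sum_congr rfl fun u _ => Finset.sum_congr rfl fun v _ => ?_
          ring
    _ = (∑ v ∈ C, ∑ w ∈ C', (∑ o, μ o * ∑ d ∈ S v, χ d o) *
          (∑ o', μ o' * ((∑ d ∈ nb G {v} D, χ d o') * ∑ d ∈ S w, χ d o'))) /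
            ((r * p * #C) * (r * p * #C')) := by
        simp only [← Finset.sum_div]
        congr 1
        simp only [Finset.mul_sum (s := C), Finset.mul_sum (s := C'), Finset.sum_mul_sum (s := univ)]
        rw [Finset.sum_congr rfl (fun o _ => Finset.sum_comm), Finset.sum_comm]
        refine Finset.sum_congr rfl fun u _ => ?_
        rw [Finset.sum_congr rfl (fun o _ => Finset.sum_comm), Finset.sum_comm]
        refine Finset.sum_congr rfl fun v _ => Finset.sum_congr rfl fun o _ =>
          Finset.sum_congr rfl fun o' _ => ?_
        ring
    _ ≤ (∑ v ∈ C, ∑ w ∈ C', (r * p) * ((r * bb) * r * p ^ 2 + #(nb G {v} D ∩ S w) * p)) /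
            ((r * p * #C) * (r * p * #C')) := by
        rw [div_le_div_iff_of_pos_right he]
        refine Finset.sum_le_sum fun v hv => Finset.sum_le_sum fun w hw => ?_
        rw [mom1 μ χ p h1, hS v hv]
        refine mul_le_mul_of_nonneg_left ?_ (by positivity)
        refine (mom2 μ χ p h2 _ _).trans ?_
        rw [hS' w hw]
        have h5 : (#(nb G {v} D) : ℝ) ≤ r * bb := by exact_mod_cast hN v hv
        gcongr
    _ = ((r * p) * (#C * (#C' * ((r * bb) * r * p ^ 2)) +
          (∑ v ∈ C, ∑ w ∈ C', (#(nb G {v} D ∩ S w) : ℝ)) * p)) /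
            ((r * p * #C) * (r * p * #C')) := by
        congr 1
        simp only [← Finset.mul_sum, Finset.sum_add_distrib, Finset.sum_const, nsmul_eq_mul,
          ← Finset.sum_mul]
        ring
    _ ≤ ((r * p) * (#C * (#C' * ((r * bb) * r * p ^ 2)) +
          (#C' * (r * (lam * #C))) * p)) / ((r * p * #C) * (r * p * #C')) := by
        gcongr
    _ = _ := by field_simp

end Part5

section Part6
open scoped Classical
open Finset

theorem ptw1 (n s : ℝ) (hs : 0 ≤ s) : n - (n ^ 2 - n) - s ≤ 1 := by
  nlinarith [sq_nonneg (n - 1)]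

theorem ptw2 (n m s : ℝ) (hn : 1 ≤ n) (hm : 1 ≤ m) (hs : n * m ≤ s) :
    n - (n ^ 2 - n) - s ≤ 0 := by
  have h1 : n ≤ n * m := le_mul_of_one_le_right (by linarith) hm
  have h2 : n ≤ n ^ 2 := by nlinarith
  linarith

set_option maxHeartbeats 3200000 in
theorem pv_core {V : Type} [Fintype V] (G : SimpleGraph V) (D : Finset V) (J : Finset ℤ)
    (C : ℤ → Finset V) (r bb R : ℕ) (hr : 1 ≤ r) (hbb : 1 ≤ bb) (hR : 1 ≤ R) (lam κ ρ : ℝ)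
    (hlam : 0 ≤ lam) (hκ : 0 < κ) (hρ : 0 < ρ)
    (hdeg : ∀ j ∈ J, ∀ v ∈ C j, r ≤ #(nb G {v} D) ∧ #(nb G {v} D) ≤ r * bb)
    (hne : ∀ j ∈ J, 0 < #(C j))
    (hl1 : ∀ d ∈ D, ∀ j ∈ J, (#(nb G {d} (C j)) : ℝ) ≤ lam * #(C j))
    (hl2 : ∀ i ∈ J, ∀ j ∈ J, i ≠ j → ∀ d ∈ C i, (#(nb G {d} (C j)) : ℝ) ≤ lam * #(C j))
    (hnum : (#J : ℝ) * (8 * (1 / R) + κ) + (#J : ℝ) * (#J * (1 / ρ * lam + 8 * #J * (1 / R + lam)))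
      < 1) :
    ∃ X T : ℤ → Finset V, ∀ j ∈ J, X j ⊆ C j ∧ T j ⊆ D ∧ (∀ v ∈ X j, ∃ d ∈ T j, G.Adj d v) ∧
      (∀ i ∈ J, i ≠ j → ∀ d ∈ T i, ∀ v ∈ X j, ¬ G.Adj d v) ∧
      3 * κ * #(C j) ≤ 4 * (bb * R) * (#(X j) : ℝ) ∧
      ∀ i ∈ J, i ≠ j → (∑ u ∈ X i, (#(nb G {u} (X j)) : ℝ)) ≤ 2 * ρ * #(X i) * #(X j) := by
  have hr0 : (0:ℝ) < r := by exact_mod_cast hr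
  have hbb0 : (1:ℝ) ≤ bb := by exact_mod_cast hbb
  have hR0 : (0:ℝ) < R := by exact_mod_cast hR
  have hP : 1 ≤ r * bb * R := Nat.mul_pos (Nat.mul_pos hr hbb) hR
  obtain ⟨Ω, _, _, μ, χ, hμ, hμ1, h01, h1, h2⟩ := sampling V (r * bb * R) hP
  set p : ℝ := 1 / ((r * bb * R : ℕ) : ℝ) with hp
  have hp0 : 0 < p := by
    rw [hp]; have : (0:ℝ) < ((r * bb * R : ℕ) : ℝ) := by exact_mod_cast hP
    positivity
  have hrbp : r * bb * p = 1 / R := by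
    rw [hp]; push_cast; field_simp
  have hrp : r * p ≤ 1 / R := by
    rw [← hrbp]
    have : r * p ≤ (r * p) * bb := le_mul_of_one_le_right (by positivity) hbb0
    linarith
  have hSex : ∀ v, ∃ S : Finset V, S ⊆ nb G {v} D ∧ (r ≤ #(nb G {v} D) → #S = r) := by
    intro v
    by_cases h : r ≤ #(nb G {v} D)
    · obtain ⟨S, hS, hc⟩ := Finset.exists_subset_card_eq h
      exact ⟨S, hS, fun _ => hc⟩
    · exact ⟨∅, by simp, fun h' => absurd h' h⟩
  choose S hSN hSr using hSex
  have hSc : ∀ j ∈ J, ∀ v ∈ C j, #(S v) = r := fun j hj v hv => hSr v (hdeg j hj v hv).1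
  have hSD : ∀ v, S v ⊆ D := fun v => (hSN v).trans (nb_sub _ _ _)
  have hC0 : ∀ j ∈ J, (0:ℝ) < #(C j) := fun j hj => by exact_mod_cast hne j hj
  have hf0 : ∀ (T : Finset V) o, 0 ≤ ∑ d ∈ T, χ d o := by
    intro v o
    obtain ⟨n, hn⟩ := sum_nat χ h01 v o
    rw [hn]; positivity
  have hW0 : ∀ i o, 0 ≤ ∑ v ∈ C i, ∑ d ∈ S v, χ d o := fun i o =>
    Finset.sum_nonneg fun u _ => hf0 _ _
  have hM0 : ∀ i o, 0 ≤ ∑ v ∈ C i, ((∑ d ∈ S v, χ d o) ^ 2 - ∑ d ∈ S v, χ d o) := by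
    intro i o
    refine Finset.sum_nonneg fun v _ => ?_
    obtain ⟨n, hn⟩ := sum_nat χ h01 (S v) o
    rw [hn]
    have : n ≤ n ^ 2 := Nat.le_self_pow (by norm_num) n
    have : (n:ℝ) ≤ n ^ 2 := by exact_mod_cast this
    linarith
  let c1 : ℤ → Ω → ℝ := fun i o =>
    8 * ((∑ v ∈ C i, ((∑ d ∈ S v, χ d o) ^ 2 - ∑ d ∈ S v, χ d o)) / (∑ v ∈ C i, ∑ d ∈ S v, χ d o))
      + (if (∑ v ∈ C i, ∑ d ∈ S v, χ d o) ≤ κ * (r * p * #(C i)) then 1 else 0)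
  let c3 : ℤ → ℤ → Ω → Ω → ℝ := fun i j o o' =>
    1 / ρ * ((∑ u ∈ C i, ∑ v ∈ nb G {u} (C j), (∑ d ∈ S u, χ d o) * ∑ d ∈ S v, χ d o') /
        ((∑ v ∈ C i, ∑ d ∈ S v, χ d o) * (∑ v ∈ C j, ∑ d ∈ S v, χ d o'))) +
    8 * #J * ((∑ v ∈ C i, (∑ d ∈ S v, χ d o) * ∑ d ∈ nb G {v} D, χ d o') /
        (∑ v ∈ C i, ∑ d ∈ S v, χ d o))
  let c2 : ℤ → ℤ → Ω → Ω → ℝ := fun i j o o' => if i = j then 0 else c3 i j o o'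
  let π : ℤ → Ω → ℝ := fun i o => μ o * (∑ v ∈ C i, ∑ d ∈ S v, χ d o) / (r * p * #(C i))
  have hc1n : ∀ i o, 0 ≤ c1 i o := by
    intro i o
    refine add_nonneg (mul_nonneg (by norm_num) (div_nonneg (hM0 i o) (hW0 i o))) ?_
    split_ifs <;> norm_num
  have hE0 : ∀ i j o o', 0 ≤ ∑ u ∈ C i, ∑ v ∈ nb G {u} (C j), (∑ d ∈ S u, χ d o) * ∑ d ∈ S v, χ d o' :=
    fun i j o o' => Finset.sum_nonneg fun u _ => Finset.sum_nonneg fun v _ =>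
      mul_nonneg (hf0 _ _) (hf0 _ _)
  have hQ0 : ∀ i o o', 0 ≤ ∑ v ∈ C i, (∑ d ∈ S v, χ d o) * ∑ d ∈ nb G {v} D, χ d o' :=
    fun i o o' => Finset.sum_nonneg fun u _ => mul_nonneg (hf0 _ _) (hf0 _ _)
  have hc3n : ∀ i j o o', 0 ≤ c3 i j o o' := by
    intro i j o o'
    exact add_nonneg (mul_nonneg (by positivity) (div_nonneg (hE0 _ _ _ _)
      (mul_nonneg (hW0 _ _) (hW0 _ _)))) (mul_nonneg (by positivity) (div_nonneg (hQ0 _ _ _) (hW0 _ _)))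
  have hc2n : ∀ i j o o', 0 ≤ c2 i j o o' := by
    intro i j o o'
    simp only [c2]
    split_ifs
    · exact le_rfl
    · exact hc3n i j o o'
  obtain ⟨ω, hω⟩ := avg_many π J c1 c2
    (by
      intro i hi o
      exact div_nonneg (mul_nonneg (hμ o) (hW0 i o)) (by have := hC0 i hi; positivity))
    (by
      intro i hi
      have := hC0 i hi
      simp only [π, ← Finset.sum_div]
      rw [div_eq_one_iff_eq (by positivity)]
      simp only [Finset.mul_sum (s := C i)]
      rw [Finset.sum_comm, Finset.sum_congr rfl (fun v hv => by
        rw [mom1 μ χ p h1, hSc i hi v hv] : ∀ v ∈ C i, ∑ o, μ o * ∑ d ∈ S v, χ d o = r * p)]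
      rw [Finset.sum_const, nsmul_eq_mul]; ring)
    (by intro i o o'; simp [c2])
  have hlt : ∑ i ∈ J, c1 i (ω i) + ∑ i ∈ J, ∑ j ∈ J, c2 i j (ω i) (ω j) < 1 := by
    refine lt_of_le_of_lt (hω.trans ?_) hnum
    refine add_le_add ?_ ?_
    · rw [← nsmul_eq_mul, ← Finset.sum_const]
      refine Finset.sum_le_sum fun i hi => ?_
      have a := cost1 μ χ p hp0 hμ h01 h1 h2 S r hr (C i) (hne i hi) (hSc i hi)
      have b := cost2 μ (fun o => ∑ v ∈ C i, ∑ d ∈ S v, χ d o) (r * p * #(C i)) κ hκ.le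
        (by have := hC0 i hi; positivity) hμ hμ1
      have e : ∑ o, π i o * c1 i o = 8 * ∑ o, (μ o * (∑ v ∈ C i, ∑ d ∈ S v, χ d o) / (r * p * #(C i))) *
        ((∑ v ∈ C i, ((∑ d ∈ S v, χ d o) ^ 2 - ∑ d ∈ S v, χ d o)) / (∑ v ∈ C i, ∑ d ∈ S v, χ d o)) +
        ∑ o, (μ o * (∑ v ∈ C i, ∑ d ∈ S v, χ d o) / (r * p * #(C i))) *
          (if (∑ v ∈ C i, ∑ d ∈ S v, χ d o) ≤ κ * (r * p * #(C i)) then 1 else 0) := by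
        rw [Finset.mul_sum, ← Finset.sum_add_distrib]
        refine Finset.sum_congr rfl fun o _ => ?_
        simp only [π, c1]; ring
      rw [e]
      linarith
    · rw [← nsmul_eq_mul, ← Finset.sum_const]
      refine Finset.sum_le_sum fun i hi => ?_
      rw [← nsmul_eq_mul, ← Finset.sum_const]
      refine Finset.sum_le_sum fun j hj => ?_
      by_cases hij : i = j
      · simp only [c2, hij, if_true, mul_zero, Finset.sum_const_zero]
        positivity
      · have a := cost3 G μ χ p hp0 hμ h01 h1 S r hr (C i) (C j) (hne i hi) (hne j hj) (hSc i hi)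
          (hSc j hj) lam (hl2 i hi j hj hij)
        have b := cost4 G μ χ p hp0 hμ h01 h1 h2 D S r bb hr (C i) (C j) (hne i hi) (hne j hj)
          (hSc i hi) (hSc j hj) (fun v _ => hSD v) (fun v hv => (hdeg i hi v hv).2) lam
          (fun d hd => hl1 d hd i hi)
        rw [hrbp] at b
        refine le_trans (le_of_eq ?_) (add_le_add (mul_le_mul_of_nonneg_left a
          (by positivity : 0 ≤ 1 / ρ)) (mul_le_mul_of_nonneg_left b (by positivity : (0:ℝ) ≤ 8 * #J)))
        simp only [Finset.mul_sum (s := univ), ← Finset.sum_add_distrib]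
        refine Finset.sum_congr rfl fun o _ => Finset.sum_congr rfl fun o' _ => ?_
        simp only [π, c2, hij, if_false, c3]
        ring
  have hS2n : 0 ≤ ∑ i ∈ J, ∑ j ∈ J, c2 i j (ω i) (ω j) :=
    Finset.sum_nonneg fun i _ => Finset.sum_nonneg fun j _ => hc2n _ _ _ _
  have hS1n : 0 ≤ ∑ i ∈ J, c1 i (ω i) := Finset.sum_nonneg fun i _ => hc1n _ _
  have hc1lt : ∀ i ∈ J, c1 i (ω i) < 1 := by
    intro i hi
    have := Finset.single_le_sum (f := fun i => c1 i (ω i)) (fun i _ => hc1n i (ω i)) hi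
    linarith
  have hc3lt : ∀ i ∈ J, ∀ j ∈ J, i ≠ j → c3 i j (ω i) (ω j) < 1 := by
    intro i hi j hj hij
    have a := Finset.single_le_sum (f := fun i => ∑ j ∈ J, c2 i j (ω i) (ω j))
      (fun i _ => Finset.sum_nonneg fun j _ => hc2n _ _ _ _) hi
    have b := Finset.single_le_sum (f := fun j => c2 i j (ω i) (ω j))
      (fun j _ => hc2n _ _ _ _) hj
    have e : c2 i j (ω i) (ω j) = c3 i j (ω i) (ω j) := by simp [c2, hij]
    linarith
  have hWpos : ∀ i ∈ J, κ * (r * p * #(C i)) < ∑ v ∈ C i, ∑ d ∈ S v, χ d (ω i) := by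
    intro i hi
    by_contra hcon
    push Not at hcon
    have h := hc1lt i hi
    simp only [c1, hcon, if_true] at h
    have := mul_nonneg (by norm_num : (0:ℝ) ≤ 8) (div_nonneg (hM0 i (ω i)) (hW0 i (ω i)))
    linarith
  have hWp0 : ∀ i ∈ J, 0 < ∑ v ∈ C i, ∑ d ∈ S v, χ d (ω i) := by
    intro i hi
    refine lt_trans ?_ (hWpos i hi)
    have := hC0 i hi
    positivity
  have hMle : ∀ i ∈ J, 8 * (∑ v ∈ C i, ((∑ d ∈ S v, χ d (ω i)) ^ 2 - ∑ d ∈ S v, χ d (ω i))) ≤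
      ∑ v ∈ C i, ∑ d ∈ S v, χ d (ω i) := by
    intro i hi
    have h := hc1lt i hi
    simp only [c1, not_le.2 (hWpos i hi), if_false, add_zero] at h
    rw [← mul_div_assoc, div_lt_one (hWp0 i hi)] at h
    exact h.le
  have hEle : ∀ i ∈ J, ∀ j ∈ J, i ≠ j →
      ∑ u ∈ C i, ∑ v ∈ nb G {u} (C j), (∑ d ∈ S u, χ d (ω i)) * ∑ d ∈ S v, χ d (ω j) ≤
      ρ * ((∑ v ∈ C i, ∑ d ∈ S v, χ d (ω i)) * (∑ v ∈ C j, ∑ d ∈ S v, χ d (ω j))) := by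
    intro i hi j hj hij
    have h := hc3lt i hi j hj hij
    have h3 : 0 ≤ 8 * #J * ((∑ v ∈ C i, (∑ d ∈ S v, χ d (ω i)) * ∑ d ∈ nb G {v} D, χ d (ω j)) /
        (∑ v ∈ C i, ∑ d ∈ S v, χ d (ω i))) :=
      mul_nonneg (by positivity) (div_nonneg (hQ0 _ _ _) (hW0 _ _))
    have h4 : 1 / ρ * ((∑ u ∈ C i, ∑ v ∈ nb G {u} (C j), (∑ d ∈ S u, χ d (ω i)) *
        ∑ d ∈ S v, χ d (ω j)) /
        ((∑ v ∈ C i, ∑ d ∈ S v, χ d (ω i)) * (∑ v ∈ C j, ∑ d ∈ S v, χ d (ω j)))) < 1 := by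
      simp only [c3] at h; linarith
    have hpp := mul_pos (hWp0 i hi) (hWp0 j hj)
    rw [div_mul_div_comm, one_mul, div_lt_one (by positivity)] at h4
    exact h4.le
  have hQle : ∀ i ∈ J, ∀ j ∈ J, i ≠ j →
      #J * (8 * ∑ v ∈ C i, (∑ d ∈ S v, χ d (ω i)) * ∑ d ∈ nb G {v} D, χ d (ω j)) ≤
      ∑ v ∈ C i, ∑ d ∈ S v, χ d (ω i) := by
    intro i hi j hj hij
    have h := hc3lt i hi j hj hij
    have h3 : 0 ≤ 1 / ρ * ((∑ u ∈ C i, ∑ v ∈ nb G {u} (C j), (∑ d ∈ S u, χ d (ω i)) *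
        ∑ d ∈ S v, χ d (ω j)) /
        ((∑ v ∈ C i, ∑ d ∈ S v, χ d (ω i)) * (∑ v ∈ C j, ∑ d ∈ S v, χ d (ω j)))) :=
      mul_nonneg (by positivity) (div_nonneg (hE0 _ _ _ _) (mul_nonneg (hW0 _ _) (hW0 _ _)))
    have h4 : 8 * #J * ((∑ v ∈ C i, (∑ d ∈ S v, χ d (ω i)) * ∑ d ∈ nb G {v} D, χ d (ω j)) /
        (∑ v ∈ C i, ∑ d ∈ S v, χ d (ω i))) < 1 := by
      simp only [c3] at h; linarith
    rw [← mul_div_assoc, div_lt_one (hWp0 i hi)] at h4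
    linarith
  clear hω hlt hS1n hS2n hc1lt hc3lt
  clear hc1n hc2n hc3n
  clear c2 c1 c3 π
  let X : ℤ → Finset V := fun i => (C i).filter fun v => (∑ d ∈ S v, χ d (ω i)) ≠ 0 ∧
    ∀ j ∈ J, j ≠ i → ∑ d ∈ nb G {v} D, χ d (ω j) = 0
  let T : ℤ → Finset V := fun i => D.filter fun d => χ d (ω i) = 1
  have hXsize : ∀ i ∈ J, 3 * (∑ v ∈ C i, ∑ d ∈ S v, χ d (ω i)) ≤ 4 * (#(X i) : ℝ) := by
    intro i hi
    have key : ∑ v ∈ C i, ((∑ d ∈ S v, χ d (ω i)) - ((∑ d ∈ S v, χ d (ω i)) ^ 2 -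
        ∑ d ∈ S v, χ d (ω i)) - ∑ j ∈ J.erase i, (∑ d ∈ S v, χ d (ω i)) *
          ∑ d ∈ nb G {v} D, χ d (ω j)) ≤ #(X i) := by
      rw [Finset.card_filter]
      push_cast
      refine Finset.sum_le_sum fun v hv => ?_
      obtain ⟨n, hn⟩ := sum_nat χ h01 (S v) (ω i)
      rw [hn]
      have hterm : ∀ j ∈ J.erase i, (0:ℝ) ≤ n * ∑ d ∈ nb G {v} D, χ d (ω j) :=
        fun j _ => mul_nonneg (Nat.cast_nonneg _) (hf0 _ _)
      have hsumn := Finset.sum_nonneg hterm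
      by_cases hn0 : n = 0
      · subst hn0; simp
      · have hn1 : (1:ℝ) ≤ n := by exact_mod_cast Nat.one_le_iff_ne_zero.2 hn0
        by_cases hg : ∀ j ∈ J, j ≠ i → ∑ d ∈ nb G {v} D, χ d (ω j) = 0
        · rw [if_pos ⟨by exact_mod_cast hn0, hg⟩]
          exact ptw1 _ _ hsumn
        · rw [if_neg (fun h => hg h.2)]
          push Not at hg
          obtain ⟨j, hj, hji, hgj⟩ := hg
          have h5 := Finset.single_le_sum hterm (mem_erase.2 ⟨hji, hj⟩)
          obtain ⟨m, hm⟩ := sum_nat χ h01 (nb G {v} D) (ω j)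
          rw [hm] at h5 hgj
          have hm1 : (1:ℝ) ≤ m := by
            have : m ≠ 0 := by rintro rfl; simp at hgj
            exact_mod_cast Nat.one_le_iff_ne_zero.2 this
          exact ptw2 _ _ _ hn1 hm1 h5
    rw [Finset.sum_sub_distrib, Finset.sum_sub_distrib] at key
    have hQs : 8 * ∑ v ∈ C i, ∑ j ∈ J.erase i, (∑ d ∈ S v, χ d (ω i)) * ∑ d ∈ nb G {v} D, χ d (ω j) ≤
        ∑ v ∈ C i, ∑ d ∈ S v, χ d (ω i) := by
      have hJ0 : (0:ℝ) < #J := by exact_mod_cast Finset.card_pos.2 ⟨i, hi⟩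
      rw [Finset.sum_comm, Finset.mul_sum]
      have : ∀ j ∈ J.erase i, 8 * ∑ v ∈ C i, (∑ d ∈ S v, χ d (ω i)) * ∑ d ∈ nb G {v} D, χ d (ω j) ≤
          (∑ v ∈ C i, ∑ d ∈ S v, χ d (ω i)) / #J := by
        intro j hj
        rw [mem_erase] at hj
        rw [le_div_iff₀ hJ0, mul_comm]
        exact hQle i hi j hj.2 (Ne.symm hj.1)
      refine (Finset.sum_le_sum this).trans ?_
      rw [Finset.sum_const, nsmul_eq_mul]
      have h6 : (#(J.erase i) : ℝ) ≤ #J := by exact_mod_cast Finset.card_le_card (erase_subset _ _)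
      calc (#(J.erase i) : ℝ) * ((∑ v ∈ C i, ∑ d ∈ S v, χ d (ω i)) / #J)
          ≤ #J * ((∑ v ∈ C i, ∑ d ∈ S v, χ d (ω i)) / #J) :=
            mul_le_mul_of_nonneg_right h6 (div_nonneg (hW0 _ _) hJ0.le)
        _ = _ := by field_simp
    have := hMle i hi
    linarith
  refine ⟨X, T, ?_⟩
  intro j hj
  refine ⟨filter_subset _ _, filter_subset _ _, ?_, ?_, ?_, ?_⟩
  · intro v hv
    obtain ⟨hvC, hv1, _⟩ := mem_filter.1 hv
    obtain ⟨d, hd, hd0⟩ := Finset.exists_ne_zero_of_sum_ne_zero hv1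
    have hdN := mem_nb.1 (hSN v hd)
    refine ⟨d, mem_filter.2 ⟨hdN.1, (h01 d (ω j)).resolve_left hd0⟩, ?_⟩
    obtain ⟨y, hy, hyd⟩ := hdN.2
    rw [mem_singleton] at hy; subst hy; exact hyd.symm
  · intro i hi hij d hd v hv hdv
    obtain ⟨hvC, _, hv1⟩ := mem_filter.1 hv
    obtain ⟨hdD, hd1⟩ := mem_filter.1 hd
    have h3 := hv1 i hi hij
    have h4 := (Finset.sum_eq_zero_iff_of_nonneg (fun d _ => by
      rcases h01 d (ω i) with h | h <;> rw [h]; norm_num)).1 h3 d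
      (mem_nb.2 ⟨hdD, v, mem_singleton_self _, hdv.symm⟩)
    rw [hd1] at h4
    exact one_ne_zero h4
  · have h3 := hXsize j hj
    have h4 := (hWpos j hj).le
    have e : (r:ℝ) * p * (bb * R) = 1 := by
      have : (r:ℝ) * p * (bb * R) = (r * bb * p) * R := by ring
      rw [this, hrbp]; field_simp
    have hbR : (0:ℝ) ≤ bb * R := by positivity
    calc 3 * κ * (#(C j) : ℝ) = (3 * (κ * (r * p * #(C j)))) * (bb * R) := by
          have : (3 * (κ * (r * p * (#(C j) : ℝ)))) * (bb * R) =
            3 * κ * #(C j) * ((r:ℝ) * p * (bb * R)) := by ring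
          rw [this, e, mul_one]
      _ ≤ (4 * (#(X j) : ℝ)) * (bb * R) := mul_le_mul_of_nonneg_right (by linarith) hbR
      _ = _ := by ring
  · intro i hi hij
    have hfX : ∀ i, ∀ v ∈ X i, 1 ≤ ∑ d ∈ S v, χ d (ω i) := by
      intro i v hv
      obtain ⟨hvC, hv1, _⟩ := mem_filter.1 hv
      obtain ⟨n, hn⟩ := sum_nat χ h01 (S v) (ω i)
      rw [hn] at hv1 ⊢
      have : n ≠ 0 := by rintro rfl; simp at hv1
      exact_mod_cast Nat.one_le_iff_ne_zero.2 this
    have hXC : ∀ i, X i ⊆ C i := fun i => filter_subset _ _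
    calc ∑ u ∈ X i, (#(nb G {u} (X j)) : ℝ)
        ≤ ∑ u ∈ X i, ∑ v ∈ nb G {u} (C j), (∑ d ∈ S u, χ d (ω i)) * ∑ d ∈ S v, χ d (ω j) := by
          refine Finset.sum_le_sum fun u hu => ?_
          calc (#(nb G {u} (X j)) : ℝ) = ∑ v ∈ nb G {u} (X j), (1:ℝ) := by simp
            _ ≤ ∑ v ∈ nb G {u} (X j), (∑ d ∈ S u, χ d (ω i)) * ∑ d ∈ S v, χ d (ω j) :=
                Finset.sum_le_sum fun v hv =>
                  one_le_mul_of_one_le_of_one_le (hfX i u hu) (hfX j v (nb_sub _ _ _ hv))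
            _ ≤ _ := Finset.sum_le_sum_of_subset_of_nonneg (nb_mono G subset_rfl (hXC j))
                  (fun v _ _ => mul_nonneg (hf0 _ _) (hf0 _ _))
      _ ≤ ∑ u ∈ C i, ∑ v ∈ nb G {u} (C j), (∑ d ∈ S u, χ d (ω i)) * ∑ d ∈ S v, χ d (ω j) :=
          Finset.sum_le_sum_of_subset_of_nonneg (hXC i)
                  (fun u _ _ => Finset.sum_nonneg fun v _ => mul_nonneg (hf0 _ _) (hf0 _ _))
      _ ≤ _ := hEle i hi j hj hij
      _ ≤ _ := by
          have a := hXsize i hi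
          have b := hXsize j hj
          have a' : (∑ v ∈ C i, ∑ d ∈ S v, χ d (ω i)) ≤ 4/3 * (#(X i) : ℝ) := by linarith
          have b' : (∑ v ∈ C j, ∑ d ∈ S v, χ d (ω j)) ≤ 4/3 * (#(X j) : ℝ) := by linarith
          have h7 := mul_le_mul a' b' (hW0 _ _) (by positivity)
          have h8 := mul_le_mul_of_nonneg_left h7 hρ.le
          have h9 : 0 ≤ ρ * ((#(X i) : ℝ) * #(X j)) := by positivity
          nlinarith

end Part6

section Part7
open scoped Classical
open Finset

theorem pig {α : Type*} (s : Finset α) (f : α → ℕ) (A : ℕ) (hf : ∀ x ∈ s, f x < A) (hA : 1 ≤ A) :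
    ∃ a < A, #s ≤ A * #(s.filter fun x => f x = a) := by
  by_contra hcon
  push Not at hcon
  have h1 : #s = ∑ a ∈ range A, #(s.filter fun x => f x = a) :=
    Finset.card_eq_sum_card_fiberwise (fun x hx => by simpa using hf x hx)
  have h2 : ∑ a ∈ range A, A * #(s.filter fun x => f x = a) < ∑ a ∈ range A, #s :=
    Finset.sum_lt_sum_of_nonempty ⟨0, mem_range.2 hA⟩ (fun a ha => hcon a (by simpa using ha))
  rw [← Finset.mul_sum, ← h1, Finset.sum_const, card_range, smul_eq_mul] at h2
  exact lt_irrefl _ h2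

theorem markov {V : Type} (G : SimpleGraph V) (J : Finset ℤ) (X : ℤ → Finset V) (m0 : ℕ)
    (hJ : #J ≤ m0) (hm0 : 1 ≤ m0) (lam : ℝ) (hlam : 0 < lam)
    (hs : ∀ i ∈ J, ∀ j ∈ J, i ≠ j → (∑ u ∈ X i, (#(nb G {u} (X j)) : ℝ)) ≤
      2 * (lam / (8 * m0)) * #(X i) * #(X j)) :
    ∃ X' : ℤ → Finset V, (∀ i ∈ J, X' i ⊆ X i ∧ #(X i) ≤ 2 * #(X' i)) ∧
      ∀ i ∈ J, ∀ j ∈ J, i ≠ j → ∀ u ∈ X' i, (#(nb G {u} (X' j)) : ℝ) ≤ lam * #(X' j) := by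
  have hm : (0:ℝ) < m0 := by exact_mod_cast hm0
  let X' : ℤ → Finset V := fun i => (X i).filter fun u => ∀ j ∈ J, i ≠ j →
    (#(nb G {u} (X j)) : ℝ) ≤ lam / 2 * #(X j)
  let bad : ℤ → ℤ → Finset V := fun i j => (X i).filter fun u =>
    ¬ (#(nb G {u} (X j)) : ℝ) ≤ lam / 2 * #(X j)
  have hbad : ∀ i ∈ J, ∀ j ∈ J, i ≠ j → 2 * m0 * (#(bad i j) : ℝ) ≤ #(X i) := by
    intro i hi j hj hij
    by_cases h0 : #(X j) = 0
    · have : bad i j = ∅ := by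
        refine filter_eq_empty_iff.2 fun u _ => ?_
        have : nb G {u} (X j) = ∅ := by
          have := nb_sub G {u} (X j)
          rw [card_eq_zero.1 h0] at this ⊢
          exact subset_empty.1 this
        simp [this, h0]
      rw [this]; simp
    · have hx : (0:ℝ) < #(X j) := by exact_mod_cast Nat.pos_of_ne_zero h0
      have h1 : #(bad i j) * (lam / 2 * #(X j)) ≤ ∑ u ∈ X i, (#(nb G {u} (X j)) : ℝ) := by
        rw [← nsmul_eq_mul, ← Finset.sum_const]
        refine (Finset.sum_le_sum fun u hu => ?_).trans
          (Finset.sum_le_sum_of_subset_of_nonneg (filter_subset _ _) fun _ _ _ => Nat.cast_nonneg _)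
        exact (not_le.1 (mem_filter.1 hu).2).le
      have h2 := h1.trans (hs i hi j hj hij)
      have h3 : (lam * #(X j)) * (2 * m0 * (#(bad i j) : ℝ)) ≤ (lam * #(X j)) * #(X i) := by
        have h4 := mul_le_mul_of_nonneg_left h2 (by positivity : (0:ℝ) ≤ 4 * m0)
        have e : 4 * (m0:ℝ) * (2 * (lam / (8 * m0)) * #(X i) * #(X j)) = lam * #(X j) * #(X i) := by
          field_simp; ring
        rw [e] at h4
        linarith
      exact le_of_mul_le_mul_left h3 (by positivity)
  have hsz : ∀ i ∈ J, #(X i) ≤ 2 * #(X' i) := by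
    intro i hi
    have hsub : X i ⊆ X' i ∪ (J.erase i).biUnion (bad i) := by
      intro u hu
      by_cases h : u ∈ X' i
      · exact mem_union_left _ h
      · refine mem_union_right _ ?_
        have : ¬ ∀ j ∈ J, i ≠ j → (#(nb G {u} (X j)) : ℝ) ≤ lam / 2 * #(X j) :=
          fun h' => h (mem_filter.2 ⟨hu, h'⟩)
        push Not at this
        obtain ⟨j, hj, hij, hlt⟩ := this
        exact mem_biUnion.2 ⟨j, mem_erase.2 ⟨Ne.symm hij, hj⟩, mem_filter.2 ⟨hu, not_le.2 hlt⟩⟩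
    have h1 : (#(X i) : ℝ) ≤ #(X' i) + ∑ j ∈ J.erase i, (#(bad i j) : ℝ) := by
      have := (card_le_card hsub).trans (card_union_le _ _)
      have h2 := card_biUnion_le (s := J.erase i) (t := bad i)
      exact_mod_cast this.trans (Nat.add_le_add_left h2 _)
    have h2 : ∑ j ∈ J.erase i, (#(bad i j) : ℝ) ≤ m0 * (#(X i) / (2 * m0)) := by
      have : ∀ j ∈ J.erase i, (#(bad i j) : ℝ) ≤ #(X i) / (2 * m0) := by
        intro j hj
        rw [mem_erase] at hj
        rw [le_div_iff₀ (by positivity)]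
        have := hbad i hi j hj.2 (Ne.symm hj.1)
        linarith
      refine (Finset.sum_le_sum this).trans ?_
      rw [Finset.sum_const, nsmul_eq_mul]
      refine mul_le_mul_of_nonneg_right ?_ (by positivity)
      exact_mod_cast (card_le_card (erase_subset _ _)).trans hJ
    have e : (m0:ℝ) * (#(X i) / (2 * m0)) = #(X i) / 2 := by field_simp
    have : (#(X i) : ℝ) ≤ 2 * #(X' i) := by linarith
    exact_mod_cast this
  refine ⟨X', fun i hi => ⟨filter_subset _ _, hsz i hi⟩, ?_⟩
  intro i hi j hj hij u hu
  have h1 := (mem_filter.1 hu).2 j hj hij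
  have h2 : (#(nb G {u} (X' j)) : ℝ) ≤ #(nb G {u} (X j)) := by
    exact_mod_cast card_le_card (nb_mono G subset_rfl (filter_subset _ _))
  have h3 : (#(X j) : ℝ) ≤ 2 * #(X' j) := by exact_mod_cast hsz j hj
  have h4 := mul_le_mul_of_nonneg_left h3 (by positivity : 0 ≤ lam / 2)
  linarith

theorem pv1 {V : Type} (G : SimpleGraph V) (D : Finset V) (J : Finset ℤ) (C : ℤ → Finset V)
    (bb A : ℕ) (hbb : 2 ≤ bb) (hA : 1 ≤ A) (hD : #D < bb ^ A)
    (hcov : ∀ j ∈ J, ∀ v ∈ C j, ∃ d ∈ D, G.Adj d v) :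
    ∃ (J' : Finset ℤ) (C' : ℤ → Finset V) (r : ℕ), J' ⊆ J ∧ #J ≤ A * #J' ∧ 1 ≤ r ∧ ∀ j ∈ J', C' j ⊆ C j ∧ #(C j) ≤ A * #(C' j) ∧
      ∀ v ∈ C' j, r ≤ #(nb G {v} D) ∧ #(nb G {v} D) ≤ r * bb := by
  have hpos : ∀ j ∈ J, ∀ v ∈ C j, #(nb G {v} D) ≠ 0 := by
    intro j hj v hv
    obtain ⟨d, hd, hdv⟩ := hcov j hj v hv
    exact card_ne_zero_of_mem (mem_nb.2 ⟨hd, v, mem_singleton_self _, hdv.symm⟩)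
  have h1 : ∀ j ∈ J, ∃ a < A, #(C j) ≤ A * #((C j).filter fun v => Nat.log bb #(nb G {v} D) = a) := by
    intro j hj
    refine pig (C j) _ A (fun v hv => ?_) hA
    refine Nat.log_lt_of_lt_pow (hpos j hj v hv) ?_
    exact lt_of_le_of_lt (card_le_card (nb_sub _ _ _)) hD
  choose! a ha hca using h1
  obtain ⟨a0, _, hJ⟩ := pig J a A ha hA
  refine ⟨J.filter fun j => a j = a0, fun j => (C j).filter fun v => Nat.log bb #(nb G {v} D) = a j,
    bb ^ a0, filter_subset _ _, hJ, Nat.one_le_pow _ _ (by omega), ?_⟩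
  intro j hj
  obtain ⟨hjJ, hja⟩ := mem_filter.1 hj
  refine ⟨filter_subset _ _, hca j hjJ, ?_⟩
  intro v hv
  obtain ⟨hvC, hva⟩ := mem_filter.1 hv
  rw [hja] at hva
  rw [← hva]
  refine ⟨Nat.pow_log_le_self _ (hpos j hjJ v hvC), ?_⟩
  have := Nat.lt_pow_succ_log_self (b := bb) (by omega) #(nb G {v} D)
  rw [pow_succ] at this
  exact this.le

theorem pv2 {V : Type} [Fintype V] (G : SimpleGraph V) (D : Finset V) (J : Finset ℤ)
    (C : ℤ → Finset V) (r bb m0 : ℕ) (hr : 1 ≤ r) (hbb : 1 ≤ bb) (hm0 : 1 ≤ m0) (hJ : #J = m0)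
    (lam1 lam2 : ℝ) (hlam1 : 0 ≤ lam1) (hlam2 : 0 < lam2) (hlam21 : lam2 ≤ 1)
    (h12 : 64 * (m0:ℝ) ^ 3 * lam1 ≤ lam2)
    (hdeg : ∀ j ∈ J, ∀ v ∈ C j, r ≤ #(nb G {v} D) ∧ #(nb G {v} D) ≤ r * bb)
    (hne : ∀ j ∈ J, 0 < #(C j))
    (hl1 : ∀ d ∈ D, ∀ j ∈ J, (#(nb G {d} (C j)) : ℝ) ≤ lam1 * #(C j))
    (hl2 : ∀ i ∈ J, ∀ j ∈ J, i ≠ j → ∀ d ∈ C i, (#(nb G {d} (C j)) : ℝ) ≤ lam1 * #(C j)) :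
    ∃ X T : ℤ → Finset V, ∀ j ∈ J, X j ⊆ C j ∧ T j ⊆ D ∧ (∀ v ∈ X j, ∃ d ∈ T j, G.Adj d v) ∧
      (∀ i ∈ J, i ≠ j → ∀ d ∈ T i, ∀ v ∈ X j, ¬ G.Adj d v) ∧
      (#(C j) : ℝ) ≤ 704 * (m0:ℝ) ^ 4 * bb * (#(X j) : ℝ) ∧
      ∀ i ∈ J, i ≠ j → ∀ u ∈ X i, (#(nb G {u} (X j)) : ℝ) ≤ lam2 * #(X j) := by
  have hm : (1:ℝ) ≤ m0 := by exact_mod_cast hm0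
  have hmp : (0:ℝ) < m0 := by linarith
  obtain ⟨X, T, hXT⟩ := pv_core G D J C r bb (64 * m0 ^ 3) hr hbb (Nat.one_le_iff_ne_zero.2 (by positivity)) lam1
    (1 / (4 * m0)) (lam2 / (8 * m0)) hlam1 (by positivity) (by positivity) hdeg hne hl1 hl2 (by
      rw [hJ]
      push_cast
      have e : (m0:ℝ) * (8 * (1 / (64 * m0 ^ 3)) + 1 / (4 * m0)) + m0 * (m0 * (1 / (lam2 / (8 * m0)) *
        lam1 + 8 * m0 * (1 / (64 * m0 ^ 3) + lam1))) =
        1 / (8 * m0 ^ 2) + 1/4 + 1/8 + (64 * m0 ^ 3 * lam1) / lam2 / 8 + (64 * m0 ^ 3 * lam1) / 8 := by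
        field_simp; ring
      rw [e]
      have h1 : 1 / (8 * (m0:ℝ) ^ 2) ≤ 1 / 8 := by
        apply one_div_le_one_div_of_le (by norm_num)
        have : (1:ℝ) ≤ m0 ^ 2 := one_le_pow₀ hm
        linarith
      have h2 : (64 * m0 ^ 3 * lam1) / lam2 ≤ 1 := (div_le_one hlam2).2 h12
      linarith)
  obtain ⟨X', hX', hlk⟩ := markov G J X m0 hJ.le hm0 lam2 hlam2
    (fun i hi j hj hij => (hXT j hj).2.2.2.2.2 i hi hij)
  refine ⟨X', T, fun j hj => ?_⟩
  obtain ⟨h1, h2, h3, h4, h5, h6⟩ := hXT j hj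
  obtain ⟨h7, h8⟩ := hX' j hj
  refine ⟨h7.trans h1, h2, fun v hv => h3 v (h7 hv), fun i hi hij d hd v hv => h4 i hi hij d hd v (h7 hv),
    ?_, fun i hi hij u hu => hlk i hi j hj hij u hu⟩
  have h8' : (#(X j) : ℝ) ≤ 2 * #(X' j) := by exact_mod_cast h8
  push_cast at h5
  have h9 : (#(C j) : ℝ) = (4 / 3 * m0) * (3 * (1 / (4 * m0)) * #(C j)) := by
    generalize (#(C j) : ℝ) = z
    field_simp
  calc (#(C j) : ℝ) = (4 / 3 * m0) * (3 * (1 / (4 * m0)) * #(C j)) := h9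
    _ ≤ (4 / 3 * m0) * (4 * (bb * (64 * m0 ^ 3)) * #(X j)) := mul_le_mul_of_nonneg_left h5 (by linarith)
    _ ≤ (4 / 3 * m0) * (4 * (bb * (64 * m0 ^ 3)) * (2 * #(X' j))) :=
        mul_le_mul_of_nonneg_left (mul_le_mul_of_nonneg_left h8' (by positivity)) (by positivity)
    _ ≤ _ := by
      have : (0:ℝ) ≤ (m0:ℝ) ^ 4 * bb * #(X' j) := mul_nonneg (by positivity) (Nat.cast_nonneg _)
      nlinarith

end Part7

section Part8
open scoped Classical
open Finset

theorem link_sub {V : Type} (G : SimpleGraph V) {C C' : Finset V} (hs : C' ⊆ C) {lam c : ℝ}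
    (hlam : 0 ≤ lam) (hc : (#C : ℝ) ≤ c * #C') {d : V}
    (h : (#(nb G {d} C) : ℝ) ≤ lam * #C) : (#(nb G {d} C') : ℝ) ≤ lam * c * #C' := by
  have h1 : (#(nb G {d} C') : ℝ) ≤ #(nb G {d} C) := by
    exact_mod_cast card_le_card (nb_mono G subset_rfl hs)
  have h2 := mul_le_mul_of_nonneg_left hc hlam
  linarith

theorem twolev {V : Type} [Fintype V] (G : SimpleGraph V) (Γ m : ℝ) (hΓ : 0 < Γ) (hcoh : Hcoh G Γ)
    (k : ℕ) (hk : 1 ≤ k) (i0 : ℤ) (I1 I2 I3 : Finset ℤ) (hI1 : #I1 = k) (hI2 : #I2 = k)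
    (h01 : i0 ∉ I1) (h02 : i0 ∉ I2) (h12 : Disjoint I1 I2)
    (h13 : Disjoint I1 I3) (h23 : Disjoint I2 I3) (h03 : i0 ∉ I3) (A : ℤ → Finset V)
    (hdisj : ∀ i ∈ insert i0 (I1 ∪ I2) ∪ I3, ∀ j ∈ insert i0 (I1 ∪ I2) ∪ I3, i ≠ j →
      Disjoint (A i) (A j))
    (hm : ∀ i ∈ insert i0 (I1 ∪ I2) ∪ I3, m ≤ (#(A i) : ℝ))
    (lam : ℝ) (hlam : 0 ≤ lam)
    (hlink : ∀ j ∈ I3, ∀ x ∈ A i0, (#(nb G {x} (A j)) : ℝ) ≤ lam * #(A j))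
    (hlamk : lam * 16 ^ (k+1) ≤ 1)
    (hmΓ : 4 ^ (k+2) * Γ ≤ m) (hmΓ' : 64 * (k + 1) * Γ ≤ m)
    (hn : (Fintype.card V : ℝ) ≤ (m / (16 * Γ) / 2) ^ k) :
    ∃ w ∈ A i0, ∃ (t1 t2 : ℕ) (L1 L2 : ℕ → Finset V) (q1 q2 : ℕ → ℤ) (J : Finset ℤ)
      (C : ℤ → Finset V), 1 ≤ t1 ∧ t1 ≤ k ∧ 1 ≤ t2 ∧ t2 ≤ k ∧ Lev G A w t1 L1 q1 I1 ∧
      Lev G A w t2 L2 q2 I2 ∧ J ⊆ I3 ∧ #I3 ≤ 4 ^ (k+1) * #J ∧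
      ∀ j ∈ J, C j ⊆ A j ∧ (#(A j) : ℝ) ≤ 16 ^ (k+1) * #(C j) ∧
        Reach G L1 t1 (C j) ∧ Reach G L2 t2 (C j) := by
  have hk0 : (0:ℝ) ≤ k := Nat.cast_nonneg _
  have hk1 : (1:ℝ) ≤ k := by exact_mod_cast hk
  have hkΓ : 0 ≤ k * Γ := by positivity
  have hkΓ1 : Γ ≤ k * Γ := le_mul_of_one_le_left hΓ.le hk1
  have hcard : #(insert i0 (I1 ∪ I2)) = 2 * k + 1 := by
    rw [card_insert_of_notMem (by simp [h01, h02]), card_union_of_disjoint h12, hI1, hI2]; ring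
  obtain ⟨B, hB1, hB2⟩ := trim G Γ m hΓ hcoh (insert i0 (I1 ∪ I2)) A
    (fun i hi j hj => hdisj i (mem_union_left _ hi) j (mem_union_left _ hj))
    (fun i hi => hm i (mem_union_left _ hi)) (by nlinarith) (by rw [hcard]; push_cast; nlinarith)
  have hBs : ∀ i ∈ insert i0 (I1 ∪ I2), 16 * Γ ≤ (#(B i) : ℝ) := by
    intro i hi
    have h1 := hm i (mem_union_left _ hi)
    have h2 : (#(A i) : ℝ) ≤ 2 * #(B i) := by exact_mod_cast (hB1 i hi).2
    nlinarith
  have hm0 : i0 ∈ insert i0 (I1 ∪ I2) := mem_insert_self _ _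
  have hs1 : insert i0 I1 ⊆ insert i0 (I1 ∪ I2) := insert_subset_insert _ subset_union_left
  have hs2 : insert i0 I2 ⊆ insert i0 (I1 ∪ I2) := insert_subset_insert _ subset_union_right
  have hs1' : I1 ⊆ insert i0 (I1 ∪ I2) := (subset_insert _ _).trans hs1
  have hs2' : I2 ⊆ insert i0 (I1 ∪ I2) := (subset_insert _ _).trans hs2
  have hw : (B i0).Nonempty := by
    rw [← card_pos]
    have := hBs i0 hm0
    have : (0:ℝ) < #(B i0) := by linarith
    exact_mod_cast this
  obtain ⟨w, hw⟩ := hw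
  have hwA := (hB1 i0 hm0).1 hw
  have hnpos : (0:ℝ) < Fintype.card V := by exact_mod_cast Fintype.card_pos_iff.2 ⟨w⟩
  have hτ : 4 ≤ m / (16 * Γ) := by
    rw [le_div_iff₀ (by positivity)]; linarith
  have h4 : (0:ℝ) < 4 ^ (k+1) := by positivity
  have h4' : (1:ℝ) ≤ 4 ^ (k+1) := one_le_pow₀ (by norm_num)
  have h16 : (16:ℝ) ^ (k+1) = 4 ^ (k+1) * 4 ^ (k+1) := by rw [← mul_pow]; norm_num
  have hθ : ((1:ℝ)/4) ^ (k+1) = 1 / 4 ^ (k+1) := by rw [div_pow, one_pow]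
  have hpe : (4:ℝ) ^ (k+2) = 4 * 4 ^ (k+1) := by ring
  have hBn : (#(B i0) : ℝ) ≤ Fintype.card V := by exact_mod_cast card_le_univ _
  obtain ⟨t1, L1, q1, J1, C1, ht1, ht1k, hL1, hJ1, hcJ1, hC1⟩ := lv G Γ hΓ hcoh k hk i0 I1 hI1 h01 B
    (fun j hj => hBs j (hs1' hj)) (m / (16 * Γ)) (Fintype.card V) _ hτ rfl
    (fun i hi j hj => hB2 i (hs1 hi) j (hs1 hj)) hn hnpos hBn I3 A
    (fun j hj => by have := hm j (mem_union_right _ hj); nlinarith)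
    (fun i hi j hj => (hdisj i (mem_union_left _ (hs1' hi)) j (mem_union_right _ hj)
      (fun h => Finset.disjoint_left.1 h13 hi (h ▸ hj))).mono_left (hB1 i (hs1' hi)).1) w hw
    (fun j hj => by
      refine (hlink j hj w hwA).trans (mul_le_mul_of_nonneg_right ?_ (Nat.cast_nonneg _))
      rw [hθ, le_div_iff₀ h4]
      rw [h16] at hlamk
      have : lam * 4 ^ (k+1) ≤ lam * (4 ^ (k+1) * 4 ^ (k+1)) :=
        mul_le_mul_of_nonneg_left (le_mul_of_one_le_left h4.le h4') hlam
      linarith)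
  have hsz1 : ∀ j ∈ J1, (#(A j) : ℝ) ≤ 4 ^ (k+1) * #(C1 j) := by
    intro j hj
    have := (hC1 j hj).2.1
    rw [hθ, div_mul_eq_mul_div, one_mul, div_le_iff₀ h4] at this
    linarith
  obtain ⟨t2, L2, q2, J2, C2, ht2, ht2k, hL2, hJ2, hcJ2, hC2⟩ := lv G Γ hΓ hcoh k hk i0 I2 hI2 h02 B
    (fun j hj => hBs j (hs2' hj)) (m / (16 * Γ)) (Fintype.card V) _ hτ rfl
    (fun i hi j hj => hB2 i (hs2 hi) j (hs2 hj)) hn hnpos hBn J1 C1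
    (fun j hj => by
      have h1 := hm j (mem_union_right _ (hJ1 hj))
      have h2 := hsz1 j hj
      rw [hpe] at hmΓ
      refine le_of_mul_le_mul_left ?_ h4
      linarith)
    (fun i hi j hj => ((hdisj i (mem_union_left _ (hs2' hi)) j (mem_union_right _ (hJ1 hj))
      (fun h => Finset.disjoint_left.1 h23 hi (h ▸ hJ1 hj))).mono_left (hB1 i (hs2' hi)).1).mono_right
        (hC1 j hj).1) w hw
    (fun j hj => by
      refine (link_sub G (hC1 j hj).1 hlam (hsz1 j hj) (hlink j (hJ1 hj) w hwA)).trans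
        (mul_le_mul_of_nonneg_right ?_ (Nat.cast_nonneg _))
      rw [hθ, le_div_iff₀ h4]
      rw [h16] at hlamk
      linarith)
  have hsz2 : ∀ j ∈ J2, (#(C1 j) : ℝ) ≤ 4 ^ (k+1) * #(C2 j) := by
    intro j hj
    have := (hC2 j hj).2.1
    rw [hθ, div_mul_eq_mul_div, one_mul, div_le_iff₀ h4] at this
    linarith
  refine ⟨w, hwA, t1, t2, L1, L2, q1, q2, J2, C2, ht1, ht1k, ht2, ht2k,
    hL1.mono subset_rfl (fun j hj => (hB1 j (hs1' hj)).1),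
    hL2.mono subset_rfl (fun j hj => (hB1 j (hs2' hj)).1), hJ2.trans hJ1, ?_, ?_⟩
  · calc #I3 ≤ 2 ^ (k+1) * #J1 := hcJ1
      _ ≤ 2 ^ (k+1) * (2 ^ (k+1) * #J2) := Nat.mul_le_mul_left _ hcJ2
      _ = 4 ^ (k+1) * #J2 := by rw [← mul_assoc, ← mul_pow]; norm_num
  · intro j hj
    have hj1 := hJ2 hj
    refine ⟨(hC2 j hj).1.trans (hC1 j hj1).1, ?_, (hC1 j hj1).2.2.mono (hC2 j hj).1, (hC2 j hj).2.2⟩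
    rw [h16, mul_assoc]
    exact (hsz1 j hj1).trans (mul_le_mul_of_nonneg_left (hsz2 j hj) h4.le)

/-- An induced rainbow path of length `l` from `x` to `y` with interior anticomplete to `S`. -/
def Conn {V : Type} (G : SimpleGraph V) (A : ℤ → Finset V) (Q0 : Finset ℤ) (S : V → Prop)
    (x y : V) (l : ℕ) : Prop :=
  ∃ (z : ℕ → V) (Q : ℕ → ℤ), z 0 = x ∧ z l = y ∧ (∀ i < l, G.Adj (z i) (z (i+1))) ∧
    (∀ i j, i + 1 < j → j ≤ l → ¬ G.Adj (z i) (z j)) ∧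
    (∀ i, 1 ≤ i → i ≤ l → Q i ∈ Q0 ∧ z i ∈ A (Q i)) ∧
    (∀ i j, 1 ≤ i → i ≤ l → 1 ≤ j → j ≤ l → Q i = Q j → i = j) ∧
    ∀ i, 1 ≤ i → i < l → ∀ v, S v → ¬ G.Adj (z i) v

theorem conn_of_lev {V : Type} (G : SimpleGraph V) (A : ℤ → Finset V) (i0 : ℤ) (I1 I2 : Finset ℤ)
    (h01 : i0 ∉ I1) (h02 : i0 ∉ I2) (h12 : Disjoint I1 I2) (w : V) (hw : w ∈ A i0) (t1 t2 : ℕ)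
    (L1 L2 : ℕ → Finset V) (q1 q2 : ℕ → ℤ) (ht1 : 1 ≤ t1) (ht2 : 1 ≤ t2)
    (hL1 : Lev G A w t1 L1 q1 I1) (hL2 : Lev G A w t2 L2 q2 I2) (S : V → Prop) (Y : Finset V)
    (hY : Y ⊆ L1 t1) (hYS : ∀ d ∈ Y, ∀ v, S v → ¬ G.Adj d v)
    (hS1 : ∀ i < t1, ∀ u ∈ L1 i, ∀ v, S v → ¬ G.Adj u v)
    (hS2 : ∀ i < t2, ∀ u ∈ L2 i, ∀ v, S v → ¬ G.Adj u v)
    (x y : V) (hx : ∃ d ∈ Y, G.Adj d x) (hy : y ∈ L2 t2) :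
    ∃ l, 1 ≤ l ∧ l ≤ 1 + t1 + t2 ∧ Conn G A (insert i0 (I1 ∪ I2)) S x y l := by
  obtain ⟨r, hrY, hrx⟩ := hx
  obtain ⟨g, hg, hgr, hga⟩ := hL1.path t1 le_rfl r (hY hrY)
  obtain ⟨g', hg', hgy, hga'⟩ := hL2.path t2 le_rfl y hy
  have hg0 : g 0 = w := by have := hg 0 (by omega); rw [hL1.root] at this; simpa using this
  have hg0' : g' 0 = w := by have := hg' 0 (by omega); rw [hL2.root] at this; simpa using this
  let z : ℕ → V := fun p => if p = 0 then x else if p ≤ 1 + t1 then g (1 + t1 - p)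
    else g' (p - 1 - t1)
  let Q : ℕ → ℤ := fun p => if p ≤ t1 then q1 (1 + t1 - p) else if p = 1 + t1 then i0
    else q2 (p - 1 - t1)
  have hz0 : z 0 = x := if_pos rfl
  have hz1 : ∀ p, 1 ≤ p → p ≤ 1 + t1 → z p = g (1 + t1 - p) := by
    intro p h1 h2
    simp only [z]; rw [if_neg (by omega), if_pos h2]
  have hz2 : ∀ p, 1 + t1 < p → z p = g' (p - 1 - t1) := by
    intro p h1
    simp only [z]; rw [if_neg (by omega), if_neg (by omega)]
  have hQ1 : ∀ p, p ≤ t1 → Q p = q1 (1 + t1 - p) := fun p h => if_pos h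
  have hQ2 : Q (1 + t1) = i0 := by
    simp only [Q]; rw [if_neg (by omega), if_pos trivial]
  have hQ3 : ∀ p, 1 + t1 < p → Q p = q2 (p - 1 - t1) := by
    intro p h
    simp only [Q]; rw [if_neg (by omega), if_neg (by omega)]
  clear_value z Q
  have hadj : ∀ i < 1 + t1 + t2, G.Adj (z i) (z (i+1)) := by
    intro i hi
    rcases Nat.eq_zero_or_pos i with h | h
    · subst h
      rw [hz0, hz1 _ (by omega) (by omega), show 1 + t1 - (0+1) = t1 by omega, hgr]
      exact hrx.symm
    · by_cases h1 : i ≤ t1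
      · rw [hz1 i (by omega) (by omega), hz1 (i+1) (by omega) (by omega)]
        have := hga (1 + t1 - (i+1)) (by omega)
        rw [show 1 + t1 - (i+1) + 1 = 1 + t1 - i by omega] at this
        exact this.symm
      · by_cases h2 : i = 1 + t1
        · rw [hz1 i (by omega) (by omega), hz2 (i+1) (by omega), h2,
            Nat.sub_self, hg0, ← hg0', show 1 + t1 + 1 - 1 - t1 = 0 + 1 by omega]
          exact hga' 0 (by omega)
        · rw [hz2 i (by omega), hz2 (i+1) (by omega),
            show i + 1 - 1 - t1 = (i - 1 - t1) + 1 by omega]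
          exact hga' _ (by omega)
  have hblk : ∀ i, 1 ≤ i → i ≤ 1 + t1 + t2 → z i ∈ A (Q i) ∧ ((i ≤ t1 ∧ Q i ∈ I1) ∨
      (i = 1 + t1 ∧ Q i = i0) ∨ (1 + t1 < i ∧ Q i ∈ I2)) := by
    intro i h1 h2
    by_cases h3 : i ≤ t1
    · rw [hz1 i h1 (by omega), hQ1 i h3]
      have := hL1.blk (1 + t1 - i) (by omega) (by omega)
      exact ⟨this.2 (hg _ (by omega)), Or.inl ⟨h3, this.1⟩⟩
    · by_cases h4 : i = 1 + t1
      · rw [hz1 i h1 (by omega), h4, hQ2, Nat.sub_self, hg0]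
        exact ⟨hw, Or.inr (Or.inl ⟨rfl, rfl⟩)⟩
      · rw [hz2 i (by omega), hQ3 i (by omega)]
        have := hL2.blk (i - 1 - t1) (by omega) (by omega)
        exact ⟨this.2 (hg' _ (by omega)), Or.inr (Or.inr ⟨by omega, this.1⟩)⟩
  have hinj : ∀ i j, 1 ≤ i → i ≤ 1 + t1 + t2 → 1 ≤ j → j ≤ 1 + t1 + t2 → Q i = Q j → i = j := by
    intro i j hi1 hi2 hj1 hj2 hij
    rcases (hblk i hi1 hi2).2 with ⟨a, a'⟩ | ⟨a, a'⟩ | ⟨a, a'⟩ <;>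
    rcases (hblk j hj1 hj2).2 with ⟨b, b'⟩ | ⟨b, b'⟩ | ⟨b, b'⟩
    · rw [hQ1 i a, hQ1 j b] at hij
      have := hL1.inj _ _ (by omega) (by omega) (by omega) (by omega) hij
      omega
    · exact absurd (b' ▸ hij ▸ a') h01
    · exact absurd (hij ▸ b') (Finset.disjoint_left.1 h12 a')
    · exact absurd (a' ▸ hij ▸ b') h01
    · omega
    · exact absurd (a' ▸ hij ▸ b') h02
    · exact absurd a' (Finset.disjoint_left.1 h12 (hij ▸ b'))
    · exact absurd (b' ▸ hij ▸ a') h02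
    · rw [hQ3 i a, hQ3 j b] at hij
      have := hL2.inj _ _ (by omega) (by omega) (by omega) (by omega) hij
      omega
  have hanti : ∀ i, 1 ≤ i → i < 1 + t1 + t2 → ∀ v, S v → ¬ G.Adj (z i) v := by
    intro i h1 h2
    by_cases h3 : i ≤ 1 + t1
    · rw [hz1 i h1 h3]
      by_cases h4 : i = 1
      · rw [h4, show 1 + t1 - 1 = t1 by omega, hgr]
        exact hYS r hrY
      · exact hS1 (1 + t1 - i) (by omega) _ (hg _ (by omega))
    · rw [hz2 i (by omega)]
      exact hS2 (i - 1 - t1) (by omega) _ (hg' _ (by omega))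
  obtain ⟨l, φ, hφ0, hφl, hφm, hφa, hφn⟩ := induced_subpath G z (1 + t1 + t2) hadj
  have hφge : ∀ i, i ≤ l → i ≤ φ i := by
    intro i
    induction i with
    | zero => intro _; omega
    | succ i ih =>
      intro hi
      have := hφm i (i+1) (by omega) hi
      have := ih (by omega)
      omega
  have hφlt : ∀ i, i < l → φ i < 1 + t1 + t2 := fun i hi => hφl ▸ hφm i l hi le_rfl
  have hφle : ∀ i, i ≤ l → φ i ≤ 1 + t1 + t2 := by
    intro i hi
    rcases hi.lt_or_eq with h | h
    · exact (hφlt i h).le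
    · rw [h, hφl]
  refine ⟨l, ?_, hφl ▸ hφge l le_rfl, fun i => z (φ i), fun i => Q (φ i), ?_, ?_, hφa, hφn, ?_, ?_, ?_⟩
  · by_contra h
    have : l = 0 := by omega
    rw [this, hφ0] at hφl
    omega
  · simp [hφ0, hz0]
  · dsimp only
    rw [hφl, hz2 _ (by omega), show 1 + t1 + t2 - 1 - t1 = t2 by omega, hgy]
  · intro i h1 h2
    have h3 := hφge i h2
    have := hblk (φ i) (by omega) (hφle i h2)
    refine ⟨?_, this.1⟩
    rcases this.2 with h | h | h
    · exact mem_insert_of_mem (mem_union_left _ h.2)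
    · dsimp only; rw [h.2]; exact mem_insert_self _ _
    · exact mem_insert_of_mem (mem_union_right _ h.2)
  · intro i j hi1 hi2 hj1 hj2 hij
    have h3 := hφge i hi2
    have h4 := hφge j hj2
    have h5 := hinj _ _ (by omega) (hφle i hi2) (by omega) (hφle j hj2) hij
    rcases lt_trichotomy i j with h | h | h
    · have := hφm i j h hj2; omega
    · exact h
    · have := hφm j i h hi2; omega
  · intro i h1 h2
    have h3 := hφge i h2.le
    exact hanti _ (by omega) (hφlt i h2)

end Part8

section Part9
open scoped Classical
open Finset

theorem stageA {V : Type} [Fintype V] (G : SimpleGraph V) (Γ m : ℝ) (hΓ : 0 < Γ) (hcoh : Hcoh G Γ)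
    (k : ℕ) (hk : 1 ≤ k) (i0 : ℤ) (I1 I2 I3 : Finset ℤ) (hI1 : #I1 = k) (hI2 : #I2 = k)
    (h01 : i0 ∉ I1) (h02 : i0 ∉ I2) (h12 : Disjoint I1 I2)
    (h13 : Disjoint I1 I3) (h23 : Disjoint I2 I3) (h03 : i0 ∉ I3) (A : ℤ → Finset V)
    (hdisj : ∀ i ∈ insert i0 (I1 ∪ I2) ∪ I3, ∀ j ∈ insert i0 (I1 ∪ I2) ∪ I3, i ≠ j →
      Disjoint (A i) (A j))
    (hm : ∀ i ∈ insert i0 (I1 ∪ I2) ∪ I3, m ≤ (#(A i) : ℝ))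
    (lam : ℝ) (hlam : 0 ≤ lam)
    (hlink : ∀ i ∈ insert i0 (I1 ∪ I2) ∪ I3, ∀ j ∈ insert i0 (I1 ∪ I2) ∪ I3, i ≠ j →
      ∀ x ∈ A i, (#(nb G {x} (A j)) : ℝ) ≤ lam * #(A j))
    (hmΓ : 4 ^ (k+2) * Γ ≤ m) (hmΓ' : 64 * (k + 1) * Γ ≤ m)
    (hn : (Fintype.card V : ℝ) ≤ (m / (16 * Γ) / 2) ^ k)
    (bb Ae m1 : ℕ) (hbb : 2 ≤ bb) (hAe : 1 ≤ Ae) (hcard : Fintype.card V < bb ^ Ae) (hm1 : 1 ≤ m1)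
    (hI3 : 4 ^ (k+1) * (Ae * m1) ≤ #I3) (lam2 : ℝ) (hlam2 : 0 < lam2) (hlam21 : lam2 ≤ 1)
    (hl12 : 64 * (m1:ℝ) ^ 3 * (lam * (16 ^ (k+1) * Ae * 4)) ≤ lam2) :
    ∃ J ⊆ I3, #J = m1 ∧ ∃ b ∈ J, ∃ X T : ℤ → Finset V,
      (∀ j ∈ J, X j ⊆ A j ∧ (∀ v ∈ X j, ∃ d ∈ T j, G.Adj d v) ∧
      (∀ i ∈ J, i ≠ j → ∀ d ∈ T i, ∀ v ∈ X j, ¬ G.Adj d v) ∧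
      (#(A j) : ℝ) ≤ 16 ^ (k+1) * Ae * 4 * (704 * (m1:ℝ) ^ 4 * bb) * (#(X j) : ℝ) ∧
      ∀ i ∈ J, i ≠ j → ∀ u ∈ X i, (#(nb G {u} (X j)) : ℝ) ≤ lam2 * #(X j)) ∧
      ∀ x ∈ X b, ∀ j ∈ J, ∀ y ∈ T j, ∃ l, 1 ≤ l ∧ l ≤ 2 * k + 1 ∧
        Conn G A (insert i0 (I1 ∪ I2)) (fun v => ∃ j ∈ J, j ≠ b ∧ v ∈ X j) x y l := by
  set Q0 := insert i0 (I1 ∪ I2) with hQ0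
  have hA1 : (1:ℝ) ≤ Ae := by exact_mod_cast hAe
  have hm1' : (1:ℝ) ≤ (m1:ℝ) ^ 3 := one_le_pow₀ (by exact_mod_cast hm1)
  have h16 : (1:ℝ) ≤ 16 ^ (k+1) := one_le_pow₀ (by norm_num)
  have h16A : (1:ℝ) ≤ 16 ^ (k+1) * Ae := one_le_mul_of_one_le_of_one_le h16 hA1
  have hlamc : 0 ≤ lam * (16 ^ (k+1) * Ae * 4) := by positivity
  have hlam1 : lam * (16 ^ (k+1) * Ae * 4) ≤ 1 := by nlinarith
  have hlam16 : lam * 16 ^ (k+1) ≤ 1 := by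
    refine le_trans ?_ hlam1
    refine mul_le_mul_of_nonneg_left ?_ hlam
    rw [mul_assoc]
    exact le_mul_of_one_le_right (by positivity) (by linarith)
  have hQdis : ∀ i ∈ Q0, i ∉ I3 := by
    intro i hi h3
    rw [hQ0, mem_insert, mem_union] at hi
    rcases hi with h | h | h
    · exact h03 (h ▸ h3)
    · exact Finset.disjoint_left.1 h13 h h3
    · exact Finset.disjoint_left.1 h23 h h3
  obtain ⟨w, hw, t1, t2, L1, L2, q1, q2, J0, C0, ht1, ht1k, ht2, ht2k, hL1, hL2, hJ0, hcJ0, hC0⟩ :=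
    twolev G Γ m hΓ hcoh k hk i0 I1 I2 I3 hI1 hI2 h01 h02 h12 h13 h23 h03 A hdisj hm lam hlam
      (fun j hj x hx => hlink i0 (mem_union_left _ (mem_insert_self _ _)) j (mem_union_right _ hj)
        (fun h => h03 (h ▸ hj)) x hx) hlam16 hmΓ hmΓ' hn
  obtain ⟨J1, C1, r, hJ1, hcJ1, hr, hC1⟩ := pv1 G (L2 t2) J0 C0 bb Ae hbb hAe
    (lt_of_le_of_lt (card_le_univ _) hcard) (fun j hj v hv => (hC0 j hj).2.2.2.cov v hv)
  have hm1J : m1 ≤ #J1 := by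
    have h1 : 4 ^ (k+1) * (Ae * m1) ≤ 4 ^ (k+1) * (Ae * #J1) :=
      hI3.trans (hcJ0.trans (Nat.mul_le_mul_left _ hcJ1))
    have h2 := Nat.le_of_mul_le_mul_left h1 (by positivity)
    exact Nat.le_of_mul_le_mul_left h2 (by omega)
  obtain ⟨J, hJJ1, hJc⟩ := Finset.exists_subset_card_eq hm1J
  have hJ3 : J ⊆ I3 := hJJ1.trans (hJ1.trans hJ0)
  have hC1A : ∀ j ∈ J, C1 j ⊆ A j := fun j hj =>
    (hC1 j (hJJ1 hj)).1.trans (hC0 j (hJ1 (hJJ1 hj))).1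
  have hsz1 : ∀ j ∈ J, (#(A j) : ℝ) ≤ 16 ^ (k+1) * Ae * #(C1 j) := by
    intro j hj
    have h1 := (hC0 j (hJ1 (hJJ1 hj))).2.1
    have h2 : (#(C0 j) : ℝ) ≤ Ae * #(C1 j) := by exact_mod_cast (hC1 j (hJJ1 hj)).2.1
    rw [mul_assoc]
    exact h1.trans (mul_le_mul_of_nonneg_left h2 (by positivity))
  have hmpos : 0 < m := lt_of_lt_of_le (by positivity) hmΓ
  have hApos : ∀ j ∈ J, (0:ℝ) < #(A j) := fun j hj =>
    lt_of_lt_of_le hmpos (hm j (mem_union_right _ (hJ3 hj)))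
  have hC1pos : ∀ j ∈ J, 0 < #(C1 j) := by
    intro j hj
    by_contra h
    have h0 : #(C1 j) = 0 := by omega
    have h1 := hsz1 j hj
    rw [h0] at h1
    have := hApos j hj
    simp at h1
    have := hApos j hj
    rw [h1] at this
    simp at this
  have hL1blk := hL1.blk t1 ht1 le_rfl
  have hL2blk := hL2.blk t2 ht2 le_rfl
  have hq1 : q1 t1 ∈ Q0 := mem_insert_of_mem (mem_union_left _ hL1blk.1)
  have hq2 : q2 t2 ∈ Q0 := mem_insert_of_mem (mem_union_right _ hL2blk.1)
  have hlA : ∀ i ∈ Q0, ∀ j ∈ J, ∀ x ∈ A i, (#(nb G {x} (A j)) : ℝ) ≤ lam * #(A j) := by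
    intro i hi j hj x hx
    exact hlink i (mem_union_left _ hi) j (mem_union_right _ (hJ3 hj))
      (fun h => hQdis i hi (h ▸ hJ3 hj)) x hx
  obtain ⟨b, hb, Y, hY, hYb, hYj⟩ := grade G (L1 t1) J C1 (card_pos.1 (by omega))
    (fun j hj => card_pos.1 (hC1pos j hj))
    (fun j hj v hv => (hC0 j (hJ1 (hJJ1 hj))).2.2.1.cov v ((hC1 j (hJJ1 hj)).1 hv))
    (fun d hd j hj => by
      have h1 := link_sub G (hC1A j hj) hlam (hsz1 j hj) (hlA _ hq1 j hj d (hL1blk.2 hd))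
      have h2 : (4:ℝ) * #(nb G {d} (C1 j)) ≤ #(C1 j) := by
        have h3 : lam * (16 ^ (k+1) * Ae * 4) * (#(C1 j) : ℝ) ≤ 1 * #(C1 j) :=
          mul_le_mul_of_nonneg_right hlam1 (Nat.cast_nonneg _)
        linarith
      exact_mod_cast h2)
  let E : ℤ → Finset V := fun j => if j = b then nb G Y (C1 b) else C1 j \ nb G Y (C1 j)
  have hEb : E b = nb G Y (C1 b) := if_pos rfl
  have hEj : ∀ j, j ≠ b → E j = C1 j \ nb G Y (C1 j) := fun j hj => if_neg hj
  clear_value E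
  have hEC : ∀ j, E j ⊆ C1 j := by
    intro j
    by_cases h : j = b
    · rw [h, hEb]; exact nb_sub _ _ _
    · rw [hEj j h]; exact sdiff_subset
  have hEs : ∀ j ∈ J, #(C1 j) ≤ 4 * #(E j) := by
    intro j hj
    by_cases h : j = b
    · rw [h, hEb]; exact hYb
    · rw [hEj j h]; have := hYj j hj; omega
  have hEsz : ∀ j ∈ J, (#(A j) : ℝ) ≤ 16 ^ (k+1) * Ae * 4 * #(E j) := by
    intro j hj
    have h1 := hsz1 j hj
    have h2 : (#(C1 j) : ℝ) ≤ 4 * #(E j) := by exact_mod_cast hEs j hj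
    have h3 := mul_le_mul_of_nonneg_left h2 (by positivity : (0:ℝ) ≤ 16 ^ (k+1) * Ae)
    linarith
  have hEA : ∀ j ∈ J, E j ⊆ A j := fun j hj => (hEC j).trans (hC1A j hj)
  obtain ⟨X, T, hXT⟩ := pv2 G (L2 t2) J E r bb m1 hr (by omega) hm1 hJc (lam * (16 ^ (k+1) * Ae * 4))
    lam2 hlamc hlam2 hlam21 hl12
    (fun j hj v hv => (hC1 j (hJJ1 hj)).2.2 v (hEC j hv))
    (fun j hj => by have h1 := hEs j hj; have h2 := hC1pos j hj; omega)
    (fun d hd j hj => link_sub G (hEA j hj) hlam (hEsz j hj) (hlA _ hq2 j hj d (hL2blk.2 hd)))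
    (fun i hi j hj hij d hd => link_sub G (hEA j hj) hlam (hEsz j hj)
      (hlink i (mem_union_right _ (hJ3 hi)) j (mem_union_right _ (hJ3 hj)) hij d (hEA i hi hd)))
  refine ⟨J, hJ3, hJc, b, hb, X, T, ?_, ?_⟩
  · intro j hj
    obtain ⟨h1, h2, h3, h4, h5, h6⟩ := hXT j hj
    refine ⟨h1.trans (hEA j hj), h3, h4, ?_, h6⟩
    have h7 := mul_le_mul_of_nonneg_left h5 (by positivity : (0:ℝ) ≤ 16 ^ (k+1) * Ae * 4)
    have h8 := hEsz j hj
    linarith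
  · intro x hx j hj y hy
    have hsub : ∀ i ∈ J, X i ⊆ C0 i := fun i hi =>
      (hXT i hi).1.trans ((hEC i).trans (hC1 i (hJJ1 hi)).1)
    obtain ⟨l, h1, h2, h3⟩ := conn_of_lev G A i0 I1 I2 h01 h02 h12 w hw t1 t2 L1 L2 q1 q2 ht1 ht2
      hL1 hL2 (fun v => ∃ j ∈ J, j ≠ b ∧ v ∈ X j) Y hY
      (by
        rintro d hd v ⟨i, hi, hib, hv⟩ hdv
        have h1 := (hXT i hi).1 hv
        rw [hEj i hib, mem_sdiff] at h1
        exact h1.2 (mem_nb.2 ⟨h1.1, d, hd, hdv⟩))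
      (by
        rintro p hp u hu v ⟨i, hi, hib, hv⟩
        exact (hC0 i (hJ1 (hJJ1 hi))).2.2.1.anti p hp u hu v (hsub i hi hv))
      (by
        rintro p hp u hu v ⟨i, hi, hib, hv⟩
        exact (hC0 i (hJ1 (hJJ1 hi))).2.2.2.anti p hp u hu v (hsub i hi hv))
      x y
      (by
        have h1 := (hXT b hb).1 hx
        rw [hEb] at h1
        exact (mem_nb.1 h1).2)
      ((hXT j hj).2.1 hy)
    exact ⟨l, h1, by omega, h3⟩

end Part9

section Part10
open scoped Classical
open Finset

/-- Every two vertices in different blocks of `F` are joined by a handle of length `nh` whose interior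
is rainbow in `A` and anticomplete to the rest of `F`. -/
def Att {V : Type} (G : SimpleGraph V) (A : ℤ → Finset V) (I J : Finset ℤ) (F : ℤ → Finset V)
    (nh : ℕ) : Prop :=
  ∀ a ∈ J, ∀ b ∈ J, a ≠ b → ∀ u ∈ F a, ∀ v ∈ F b, ∃ (Z : ℕ → V) (Q : ℕ → ℤ),
    G.Adj u (Z 1) ∧ G.Adj (Z (nh-1)) v ∧ (∀ i, 1 ≤ i → i + 1 < nh → G.Adj (Z i) (Z (i+1))) ∧
    (∀ i j, 1 ≤ i → i + 1 < j → j < nh → ¬ G.Adj (Z i) (Z j)) ∧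
    (∀ i, 1 ≤ i → i < nh → Q i ∈ I ∧ Q i ∉ J ∧ Z i ∈ A (Q i)) ∧
    (∀ i j, 1 ≤ i → i < nh → 1 ≤ j → j < nh → Q i = Q j → i = j) ∧
    ∀ i, 1 ≤ i → i < nh → ∀ j ∈ J, ∀ w ∈ F j, G.Adj (Z i) w →
      (i = 1 ∧ j = a) ∨ (i = nh - 1 ∧ j = b)

theorem att_build {V : Type} (G : SimpleGraph V) (A X T F T' : ℤ → Finset V)
    (I J J' Q0 Qs : Finset ℤ) (b : ℤ) (x : V) (s l nh : ℕ) (L : ℕ → Finset V) (q : ℕ → ℤ)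
    (hnh : nh = s + 2 + l) (hs : 1 ≤ s) (hl : 1 ≤ l) (hb : b ∈ J) (hxb : x ∈ X b)
    (hXA : ∀ j ∈ J, X j ⊆ A j)
    (hT : ∀ j ∈ J, ∀ i ∈ J, i ≠ j → ∀ d ∈ T i, ∀ v ∈ X j, ¬ G.Adj d v)
    (hLev : Lev G X x s L q Qs) (hQs : Qs ⊆ J) (hbQ : b ∉ Qs) (hJ' : J' ⊆ J) (hbJ : b ∉ J')
    (hQJ : Disjoint Qs J') (hQ0 : ∀ i ∈ Q0, i ∉ J) (hQ0I : Q0 ⊆ I) (hJI : J ⊆ I)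
    (hFX : ∀ j ∈ J', F j ⊆ X j) (hR : ∀ j ∈ J', Reach G L s (F j))
    (hT' : ∀ j ∈ J', T' j ⊆ L s) (hTF : ∀ j ∈ J', ∀ v ∈ F j, ∃ d ∈ T' j, G.Adj d v)
    (hTp : ∀ j ∈ J', ∀ i ∈ J', i ≠ j → ∀ d ∈ T' i, ∀ v ∈ F j, ¬ G.Adj d v)
    (hC : ∀ j ∈ J', ∀ v ∈ F j, ∃ y ∈ T j, G.Adj y v ∧
      Conn G A Q0 (fun v => ∃ j ∈ J, j ≠ b ∧ v ∈ X j) x y l) :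
    Att G A I J' F nh := by
  intro a ha b' hb' hab u hu v hv
  obtain ⟨r, hr, hru⟩ := hTF a ha u hu
  obtain ⟨y, hy, hyv, z, Qz, hz0, hzl, hza, hzn, hzb, hzi, hzS⟩ := hC b' hb' v hv
  obtain ⟨g, hg, hgs, hga⟩ := hLev.path s le_rfl r (hT' a ha hr)
  have hg0 : g 0 = x := by have := hg 0 (by omega); rw [hLev.root] at this; simpa using this
  let Z : ℕ → V := fun p => if p ≤ s + 1 then g (s + 1 - p) else z (p - (s + 1))
  let Q : ℕ → ℤ := fun p => if p ≤ s then q (s + 1 - p) else if p = s + 1 then b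
    else Qz (p - (s + 1))
  have hZ1 : ∀ p, p ≤ s + 1 → Z p = g (s + 1 - p) := fun p h => if_pos h
  have hZ2 : ∀ p, s + 1 < p → Z p = z (p - (s + 1)) := fun p h => if_neg (by omega)
  have hZ2' : ∀ p, s + 1 ≤ p → Z p = z (p - (s + 1)) := by
    intro p h
    rcases h.lt_or_eq with h | h
    · exact hZ2 p h
    · rw [hZ1 p (by omega), ← h, Nat.sub_self, hg0, hz0]
  have hQ1 : ∀ p, p ≤ s → Q p = q (s + 1 - p) := fun p h => if_pos h
  have hQ2 : Q (s + 1) = b := by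
    simp only [Q]; rw [if_neg (by omega), if_pos trivial]
  have hQ3 : ∀ p, s + 1 < p → Q p = Qz (p - (s + 1)) := by
    intro p h
    simp only [Q]; rw [if_neg (by omega), if_neg (by omega)]
  clear_value Z Q
  have hcase : ∀ i, 1 ≤ i → i < nh → Z i ∈ A (Q i) ∧ ((i ≤ s ∧ Q i ∈ Qs) ∨
      (i = s + 1 ∧ Q i = b) ∨ (s + 1 < i ∧ Q i ∈ Q0)) := by
    intro i h1 h2
    by_cases h3 : i ≤ s
    · have h4 := hLev.blk (s + 1 - i) (by omega) (by omega)
      rw [hQ1 i h3, hZ1 i (by omega)]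
      exact ⟨hXA _ (hQs h4.1) (h4.2 (hg _ (by omega))), Or.inl ⟨h3, h4.1⟩⟩
    · by_cases h5 : i = s + 1
      · subst h5
        rw [hQ2, hZ1 _ le_rfl, Nat.sub_self, hg0]
        exact ⟨hXA b hb hxb, Or.inr (Or.inl ⟨rfl, rfl⟩)⟩
      · rw [hQ3 i (by omega), hZ2 i (by omega)]
        have h4 := hzb (i - (s+1)) (by omega) (by omega)
        exact ⟨h4.2, Or.inr (Or.inr ⟨by omega, h4.1⟩)⟩
  have hgX : ∀ i, 1 ≤ i → i ≤ s → ∃ j ∈ Qs, g i ∈ X j := by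
    intro i h1 h2
    have h4 := hLev.blk i h1 h2
    exact ⟨_, h4.1, h4.2 (hg _ h2)⟩
  refine ⟨Z, Q, ?_, ?_, ?_, ?_, ?_, ?_, ?_⟩
  · rw [hZ1 1 (by omega), show s + 1 - 1 = s by omega, hgs]
    exact hru.symm
  · rw [hZ2 _ (by omega), show nh - 1 - (s + 1) = l by omega, hzl]
    exact hyv
  · intro i h1 h2
    by_cases h3 : i ≤ s
    · rw [hZ1 i (by omega), hZ1 (i+1) (by omega)]
      have := hga (s + 1 - (i+1)) (by omega)
      rw [show s + 1 - (i+1) + 1 = s + 1 - i by omega] at this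
      exact this.symm
    · rw [hZ2' i (by omega), hZ2 (i+1) (by omega),
        show i + 1 - (s+1) = i - (s+1) + 1 by omega]
      exact hza _ (by omega)
  · intro i j h1 h2 h3
    by_cases h4 : j ≤ s + 1
    · rw [hZ1 i (by omega), hZ1 j h4]
      intro h
      exact hLev.anti (s + 1 - j) (s + 1 - i) (by omega) (by omega) _ (hg _ (by omega)) _
        (hg _ (by omega)) h.symm
    · by_cases h5 : s + 1 ≤ i
      · rw [hZ2' i h5, hZ2 j (by omega)]
        exact hzn _ _ (by omega) (by omega)
      · rw [hZ1 i (by omega), hZ2 j (by omega)]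
        obtain ⟨p, hp, hgp⟩ := hgX (s + 1 - i) (by omega) (by omega)
        intro h
        by_cases h6 : j - (s+1) = l
        · rw [h6, hzl] at h
          exact hT p (hQs hp) b' (hJ' hb')
            (fun e => Finset.disjoint_left.1 hQJ hp (e ▸ hb')) y hy _ hgp h.symm
        · exact hzS (j - (s+1)) (by omega) (by omega) _
            ⟨p, hQs hp, fun e => hbQ (e ▸ hp), hgp⟩ h.symm
  · intro i h1 h2
    obtain ⟨h3, h4⟩ := hcase i h1 h2
    rcases h4 with ⟨_, h⟩ | ⟨_, h⟩ | ⟨_, h⟩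
    · exact ⟨hJI (hQs h), Finset.disjoint_left.1 hQJ h, h3⟩
    · exact ⟨h ▸ hJI hb, h ▸ hbJ, h3⟩
    · exact ⟨hQ0I h, fun h' => hQ0 _ h (hJ' h'), h3⟩
  · intro i j hi1 hi2 hj1 hj2 hij
    rcases (hcase i hi1 hi2).2 with ⟨a1, a'⟩ | ⟨a1, a'⟩ | ⟨a1, a'⟩ <;>
    rcases (hcase j hj1 hj2).2 with ⟨b1, b''⟩ | ⟨b1, b''⟩ | ⟨b1, b''⟩
    · rw [hQ1 i a1, hQ1 j b1] at hij
      have := hLev.inj _ _ (by omega) (by omega) (by omega) (by omega) hij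
      omega
    · exact absurd (b'' ▸ hij ▸ a') hbQ
    · exact absurd (hQs (hij ▸ a')) (hQ0 _ b'')
    · exact absurd (a' ▸ hij ▸ b'') hbQ
    · omega
    · exact absurd (by rw [← hij, a']; exact hb) (hQ0 _ b'')
    · exact absurd (hQs (hij ▸ b'')) (hQ0 _ a')
    · exact absurd (by rw [hij, b'']; exact hb) (hQ0 _ a')
    · rw [hQ3 i a1, hQ3 j b1] at hij
      have := hzi _ _ (by omega) (by omega) (by omega) (by omega) hij
      omega
  · intro i h1 h2 j hj w hw hadj
    have hwX := hFX j hj hw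
    have hjb : j ≠ b := fun e => hbJ (e ▸ hj)
    by_cases h3 : i ≤ s + 1
    · rw [hZ1 i h3] at hadj
      by_cases h4 : i = 1
      · left
        refine ⟨h4, ?_⟩
        by_contra hne
        rw [h4, show s + 1 - 1 = s by omega, hgs] at hadj
        exact hTp j hj a ha (fun e => hne e.symm) r hr w hw hadj
      · exact absurd hadj ((hR j hj).anti _ (by omega) _ (hg _ (by omega)) w hw)
    · rw [hZ2 i (by omega)] at hadj
      by_cases h4 : i - (s+1) = l
      · right
        refine ⟨by omega, ?_⟩
        by_contra hne
        rw [h4, hzl] at hadj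
        exact hT j (hJ' hj) b' (hJ' hb') (fun e => hne e.symm) y hy w hwX hadj
      · exact absurd hadj (hzS _ (by omega) (by omega) w ⟨j, hJ' hj, hjb, hwX⟩)

end Part10

section Part11
open scoped Classical
open Finset

theorem stageB {V : Type} [Fintype V] (G : SimpleGraph V) (Γ m : ℝ) (hΓ : 0 < Γ) (hcoh : Hcoh G Γ)
    (k : ℕ) (hk : 1 ≤ k) (nh : ℕ) (hnh : 3 * k + 3 ≤ nh) (A X T : ℤ → Finset V)
    (I J Q0 : Finset ℤ) (b : ℤ) (hb : b ∈ J) (hQ0 : ∀ i ∈ Q0, i ∉ J) (hQ0I : Q0 ⊆ I) (hJI : J ⊆ I)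
    (bb Ae K' : ℕ) (hbb : 2 ≤ bb) (hAe : 1 ≤ Ae) (hcard : Fintype.card V < bb ^ Ae) (hK' : 1 ≤ K')
    (hJc : 1 + k + (2*k+2) * (2 ^ (k+1) * (Ae * K' + nh)) ≤ #J)
    (hXA : ∀ j ∈ J, X j ⊆ A j) (hXT : ∀ j ∈ J, ∀ v ∈ X j, ∃ d ∈ T j, G.Adj d v)
    (hT : ∀ j ∈ J, ∀ i ∈ J, i ≠ j → ∀ d ∈ T i, ∀ v ∈ X j, ¬ G.Adj d v)
    (hdisj : ∀ i ∈ J, ∀ j ∈ J, i ≠ j → Disjoint (X i) (X j))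
    (hm : ∀ i ∈ J, m ≤ (#(X i) : ℝ))
    (lam2 : ℝ) (hlam : 0 ≤ lam2)
    (hlink : ∀ j ∈ J, ∀ i ∈ J, i ≠ j → ∀ u ∈ X i, (#(nb G {u} (X j)) : ℝ) ≤ lam2 * #(X j))
    (hconn : ∀ x ∈ X b, ∀ j ∈ J, ∀ y ∈ T j, ∃ l, 1 ≤ l ∧ l ≤ 2 * k + 1 ∧
        Conn G A Q0 (fun v => ∃ j ∈ J, j ≠ b ∧ v ∈ X j) x y l)
    (hmΓ : 4 * ((2*k+2) * 4 ^ (k+1) * 4 ^ nh * Γ) ≤ m) (hmΓ' : 64 * (k + 1) * Γ ≤ m)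
    (hn : (Fintype.card V : ℝ) ≤ (m / (16 * Γ) / 2) ^ k)
    (lam' : ℝ) (hlam' : 0 < lam') (hlam'1 : lam' ≤ 1)
    (hl12 : 64 * (K':ℝ) ^ 3 * (lam2 * ((2*k+2) * 4 ^ (k+1) * 4 ^ nh * Ae)) ≤ lam') :
    ∃ J' ⊆ J, #J' = K' ∧ ∃ F : ℤ → Finset V, (∀ j ∈ J', F j ⊆ X j ∧
      (#(X j) : ℝ) ≤ (2*k+2) * 4 ^ (k+1) * 4 ^ nh * Ae * (704 * (K':ℝ) ^ 4 * bb) * #(F j) ∧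
      ∀ i ∈ J', i ≠ j → ∀ u ∈ F i, (#(nb G {u} (F j)) : ℝ) ≤ lam' * #(F j)) ∧
      Att G A I J' F nh := by
  have hk0 : (0:ℝ) ≤ k := Nat.cast_nonneg _
  have hk1 : (1:ℝ) ≤ k := by exact_mod_cast hk
  have hkΓ : 0 ≤ k * Γ := by positivity
  have hkΓ1 : Γ ≤ k * Γ := le_mul_of_one_le_left hΓ.le hk1
  have hA1 : (1:ℝ) ≤ Ae := by exact_mod_cast hAe
  have hK1' : (1:ℝ) ≤ (K':ℝ) ^ 3 := one_le_pow₀ (by exact_mod_cast hK')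
  have h4 : (0:ℝ) < 4 ^ (k+1) := by positivity
  have h4n : (1:ℝ) ≤ 4 ^ nh := one_le_pow₀ (by norm_num)
  have hk2 : (1:ℝ) ≤ 2*k+2 := by linarith
  have h4' : (1:ℝ) ≤ 4 ^ (k+1) := one_le_pow₀ (by norm_num)
  set K0 : ℝ := (2*k+2) * 4 ^ (k+1) with hK0
  have hK01 : 1 ≤ K0 := one_le_mul_of_one_le_of_one_le hk2 h4'
  set K1 : ℝ := K0 * 4 ^ nh with hK1
  have hK01' : K0 ≤ K1 := le_mul_of_one_le_right (by linarith) h4n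
  have hK11 : 1 ≤ K1 := hK01.trans hK01'
  have hK1A : K1 ≤ K1 * Ae := le_mul_of_one_le_right (by linarith) hA1
  have hlamA : lam2 * (K1 * Ae) ≤ 1 := by
    have : 0 ≤ lam2 * (K1 * Ae) := by positivity
    nlinarith
  have hlamK1 : lam2 * K1 ≤ 1 := (mul_le_mul_of_nonneg_left hK1A hlam).trans hlamA
  have hlamK0 : lam2 * K0 ≤ 1 := (mul_le_mul_of_nonneg_left hK01' hlam).trans hlamK1
  have hK1Γ : K0 * Γ ≤ K1 * Γ := mul_le_mul_of_nonneg_right hK01' hΓ.le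
  have hk2K0 : (2*k+2:ℝ) ≤ K0 := le_mul_of_one_le_right (by linarith) h4'
  obtain ⟨JM, hJM, hJMc⟩ := Finset.exists_subset_card_eq (s := J.erase b) (n := k)
    (by rw [card_erase_of_mem hb]; omega)
  set JH := J.erase b \ JM with hJH
  have hJHc : (2*k+2) * (2 ^ (k+1) * (Ae * K' + nh)) ≤ #JH := by
    rw [hJH, card_sdiff_of_subset hJM, card_erase_of_mem hb, hJMc]
    omega
  have hJMJ : JM ⊆ J := hJM.trans (erase_subset _ _)
  have hJHJ : JH ⊆ J := sdiff_subset.trans (erase_subset _ _)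
  have hbM : b ∉ JM := fun h => (mem_erase.1 (hJM h)).1 rfl
  have hbH : b ∉ JH := fun h => (mem_erase.1 (mem_sdiff.1 h).1).1 rfl
  have hMH : Disjoint JM JH := disjoint_sdiff
  have hbMJ : insert b JM ⊆ J := insert_subset hb hJMJ
  have hbMc : #(insert b JM) = k + 1 := by rw [card_insert_of_notMem hbM, hJMc]
  obtain ⟨B, hB1, hB2⟩ := trim G Γ m hΓ hcoh (insert b JM) X
    (fun i hi j hj => hdisj i (hbMJ hi) j (hbMJ hj))
    (fun i hi => hm i (hbMJ hi)) (by nlinarith) (by rw [hbMc]; push_cast; nlinarith)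
  have hBs : ∀ i ∈ insert b JM, 16 * Γ ≤ (#(B i) : ℝ) := by
    intro i hi
    have h1 := hm i (hbMJ hi)
    have h2 : (#(X i) : ℝ) ≤ 2 * #(B i) := by exact_mod_cast (hB1 i hi).2
    nlinarith
  have hmb : b ∈ insert b JM := mem_insert_self _ _
  have hx : (B b).Nonempty := by
    rw [← card_pos]
    have := hBs b hmb
    have : (0:ℝ) < #(B b) := by linarith
    exact_mod_cast this
  obtain ⟨x, hx⟩ := hx
  have hxX := (hB1 b hmb).1 hx
  have hnpos : (0:ℝ) < Fintype.card V := by exact_mod_cast Fintype.card_pos_iff.2 ⟨x⟩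
  have hτ : 4 ≤ m / (16 * Γ) := by
    rw [le_div_iff₀ (by positivity)]; linarith
  have hθ : ((1:ℝ)/4) ^ (k+1) = 1 / 4 ^ (k+1) := by rw [div_pow, one_pow]
  have hBn : (#(B b) : ℝ) ≤ Fintype.card V := by exact_mod_cast card_le_univ _
  have hell : ∀ j ∈ JH, ∀ v ∈ X j, ∃ l, l < 2*k+2 ∧ l ≤ 2 * k ∧ ∃ y ∈ T j, G.Adj y v ∧
      Conn G A Q0 (fun v => ∃ j ∈ J, j ≠ b ∧ v ∈ X j) x y (l+1) := by
    intro j hj v hv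
    obtain ⟨y, hy, hyv⟩ := hXT j (hJHJ hj) v hv
    obtain ⟨l, h1, h2, h3⟩ := hconn x hxX j (hJHJ hj) y hy
    refine ⟨l - 1, by omega, by omega, y, hy, hyv, ?_⟩
    rwa [Nat.sub_add_cancel h1]
  choose! ell hell1 hell2 hell3 using hell
  have hpj : ∀ j ∈ JH, ∃ a, a < 2*k+2 ∧ #(X j) ≤ (2*k+2) * #((X j).filter fun v => ell j v = a) := by
    intro j hj
    obtain ⟨a, h1, h2⟩ := pig (X j) (ell j) (2*k+2) (fun v hv => hell1 j hj v hv) (by omega)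
    exact ⟨a, h1, h2⟩
  choose! aj haj1 haj2 using hpj
  obtain ⟨l, hl1, hl2⟩ := pig JH aj (2*k+2) haj1 (by omega)
  set JP := JH.filter fun j => aj j = l with hJP
  have hJPH : JP ⊆ JH := filter_subset _ _
  obtain ⟨X', hX'⟩ : ∃ X' : ℤ → Finset V, ∀ j, X' j = (X j).filter fun v => ell j v = l :=
    ⟨_, fun j => rfl⟩
  have hX'X : ∀ j, X' j ⊆ X j := by intro j; rw [hX']; exact filter_subset _ _
  have hX's : ∀ j ∈ JP, (#(X j) : ℝ) ≤ (2*k+2) * #(X' j) := by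
    intro j hj
    have h1 := haj2 j (hJPH hj)
    rw [(mem_filter.1 hj).2, ← hX'] at h1
    exact_mod_cast h1
  have hJPc : 2 ^ (k+1) * (Ae * K' + nh) ≤ #JP :=
    Nat.le_of_mul_le_mul_left (hJHc.trans hl2) (by omega)
  have hX'c : ∀ j ∈ JP, ∀ v ∈ X' j, l ≤ 2 * k ∧ ∃ y ∈ T j, G.Adj y v ∧
      Conn G A Q0 (fun v => ∃ j ∈ J, j ≠ b ∧ v ∈ X j) x y (l+1) := by
    intro j hj v hv
    rw [hX', mem_filter] at hv
    have h1 := hell3 j (hJPH hj) v hv.1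
    have h2 := hell2 j (hJPH hj) v hv.1
    rw [hv.2] at h1 h2
    exact ⟨h2, h1⟩
  have hX'Γ : ∀ j ∈ JP, 4 * Γ ≤ (#(X' j) : ℝ) := by
    intro j hj
    have h1 := hm j (hJHJ (hJPH hj))
    have h2 := hX's j hj
    have h3 : (2*k+2) * (4 * Γ) ≤ (2*k+2) * (#(X' j) : ℝ) := by
      have : (2*k+2) * Γ ≤ K0 * Γ := mul_le_mul_of_nonneg_right hk2K0 hΓ.le
      linarith
    exact le_of_mul_le_mul_left h3 (by linarith)
  have hl2k : l ≤ 2 * k := by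
    have h1 : JP.Nonempty := by
      rw [← card_pos]
      refine lt_of_lt_of_le ?_ hJPc
      have : 0 < nh := by omega
      positivity
    obtain ⟨j, hj⟩ := h1
    have h2 : (X' j).Nonempty := by
      rw [← card_pos]
      have := hX'Γ j hj
      have : (0:ℝ) < #(X' j) := by linarith
      exact_mod_cast this
    obtain ⟨v, hv⟩ := h2
    exact (hX'c j hj v hv).1
  obtain ⟨t, L, q, J2, C, ht, htk, hL, hJ2, hcJ2, hC⟩ := lv G Γ hΓ hcoh k hk b JM hJMc hbM B
    (fun j hj => hBs j (mem_insert_of_mem hj)) (m / (16 * Γ)) (Fintype.card V) _ hτ rfl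
    hB2 hn hnpos hBn JP X' hX'Γ
    (fun i hi j hj => ((hdisj i (hJMJ hi) j (hJHJ (hJPH hj))
      (fun h => Finset.disjoint_left.1 hMH hi (h ▸ hJPH hj))).mono_left
        (hB1 i (mem_insert_of_mem hi)).1).mono_right (hX'X j)) x hx
    (fun j hj => by
      refine (link_sub G (hX'X j) hlam (hX's j hj) (hlink j (hJHJ (hJPH hj)) b hb
        (fun h => hbH (h ▸ hJPH hj)) x hxX)).trans
        (mul_le_mul_of_nonneg_right ?_ (Nat.cast_nonneg _))
      rw [hθ, le_div_iff₀ h4, mul_assoc]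
      exact hlamK0)
  have hJ2c : Ae * K' + nh ≤ #J2 := Nat.le_of_mul_le_mul_left (hJPc.trans hcJ2) (by positivity)
  have hJ2H : J2 ⊆ JH := hJ2.trans hJPH
  have hLX : Lev G X x t L q JM := hL.mono subset_rfl (fun j hj => (hB1 j (mem_insert_of_mem hj)).1)
  have hCX : ∀ j ∈ J2, C j ⊆ X j := fun j hj => (hC j hj).1.trans (hX'X j)
  have hCs : ∀ j ∈ J2, (#(X j) : ℝ) ≤ K0 * #(C j) := by
    intro j hj
    have h1 := (hC j hj).2.1
    rw [hθ, div_mul_eq_mul_div, one_mul, div_le_iff₀ h4] at h1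
    have h2 := hX's j (hJ2 hj)
    have h3 := mul_le_mul_of_nonneg_left h1 (by linarith : (0:ℝ) ≤ 2*k+2)
    rw [hK0]
    linarith
  obtain ⟨s, hs⟩ : ∃ s, s = nh - 3 - l := ⟨_, rfl⟩
  obtain ⟨r, hr⟩ : ∃ r, r = s - t := ⟨_, rfl⟩
  have htr : t + r = s := by omega
  have h4r : (4:ℝ) ^ r ≤ 4 ^ nh := pow_le_pow_right₀ (by norm_num) (by omega)
  have h4r0 : (0:ℝ) < 4 ^ r := by positivity
  have hneJ : ∀ i ∈ JM, ∀ j ∈ J2, i ≠ j := fun i hi j hj h =>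
    Finset.disjoint_left.1 hMH hi (h ▸ hJ2H hj)
  obtain ⟨L', q', J3, C3, hJ3, hJ3c, hL', hC3⟩ := lev_ext G Γ hΓ hcoh X x r t L q JM J2 C
    (lam2 * K0) ht hLX (hMH.mono_right hJ2H) (by omega)
    (fun j hj => ⟨hCX j hj, (hC j hj).2.2, by
      have h1 := hm j (hJHJ (hJ2H hj))
      have h2 := hCs j hj
      have h3 : K0 * (4 ^ r * Γ) ≤ K0 * (#(C j) : ℝ) := by
        have h5 : K0 * (4 ^ r * Γ) ≤ K1 * Γ := by
          rw [hK1, mul_assoc K0]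
          exact mul_le_mul_of_nonneg_left (mul_le_mul_of_nonneg_right h4r hΓ.le) (by linarith)
        have h6 : 0 < K1 * Γ := by positivity
        linarith
      exact le_of_mul_le_mul_left h3 (by linarith)⟩)
    (fun i hi j hj hij => ((hdisj i (hJHJ (hJ2H hi)) j (hJHJ (hJ2H hj)) hij).mono_left
      (hCX i hi)).mono_right (hCX j hj))
    (fun d hd j hj => by
      have h1 := hLX.blk t ht le_rfl
      exact link_sub G (hCX j hj) hlam (hCs j hj) (hlink j (hJHJ (hJ2H hj)) _ (hJMJ h1.1)
        (hneJ _ h1.1 j hj) d (h1.2 hd)))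
    (fun i hi j hj hij d hd => link_sub G (hCX j hj) hlam (hCs j hj)
      (hlink j (hJHJ (hJ2H hj)) i (hJHJ (hJ2H hi)) hij d (hCX i hi hd)))
    (by positivity) (by
      have : lam2 * K0 * 4 ^ r ≤ lam2 * K0 * 4 ^ nh :=
        mul_le_mul_of_nonneg_left h4r (by positivity)
      rw [hK1, ← mul_assoc] at hlamK1
      linarith)
  rw [htr] at hL' hC3
  have hs1 : 1 ≤ s := by omega
  have hJ3A : Ae * K' ≤ #J3 := by omega
  have hC3X : ∀ j ∈ J3, C3 j ⊆ X j := fun j hj => (hC3 j hj).1.trans (hCX j (hJ3 hj))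
  have hC3s : ∀ j ∈ J3, (#(X j) : ℝ) ≤ K1 * #(C3 j) := by
    intro j hj
    have h1 := hCs j (hJ3 hj)
    have h2 : (#(C j) : ℝ) ≤ 4 ^ nh * #(C3 j) :=
      (hC3 j hj).2.2.trans (mul_le_mul_of_nonneg_right h4r (Nat.cast_nonneg _))
    rw [hK1, mul_assoc]
    exact h1.trans (mul_le_mul_of_nonneg_left h2 (by linarith))
  obtain ⟨J4, C4, r', hJ4, hcJ4, hr', hC4⟩ := pv1 G (L' s) J3 C3 bb Ae hbb hAe
    (lt_of_le_of_lt (card_le_univ _) hcard) (fun j hj v hv => (hC3 j hj).2.1.cov v hv)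
  obtain ⟨J', hJ', hJ'c⟩ := Finset.exists_subset_card_eq (s := J4) (n := K')
    (Nat.le_of_mul_le_mul_left (hJ3A.trans hcJ4) (by omega))
  have hJ'3 : J' ⊆ J3 := hJ'.trans hJ4
  have hJ'2 : J' ⊆ J2 := hJ'3.trans hJ3
  have hJ'J : J' ⊆ J := hJ'2.trans (hJ2H.trans hJHJ)
  have hC4X : ∀ j ∈ J', C4 j ⊆ X j := fun j hj => (hC4 j (hJ' hj)).1.trans (hC3X j (hJ'3 hj))
  have hC4s : ∀ j ∈ J', (#(X j) : ℝ) ≤ K1 * Ae * #(C4 j) := by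
    intro j hj
    have h1 := hC3s j (hJ'3 hj)
    have h2 : (#(C3 j) : ℝ) ≤ Ae * #(C4 j) := by exact_mod_cast (hC4 j (hJ' hj)).2.1
    rw [mul_assoc]
    exact h1.trans (mul_le_mul_of_nonneg_left h2 (by linarith))
  have hQs : JM ∪ (J2 \ J3) ⊆ J := union_subset hJMJ (sdiff_subset.trans (hJ2H.trans hJHJ))
  have hQsJ' : Disjoint (JM ∪ (J2 \ J3)) J' := by
    rw [Finset.disjoint_left]
    intro i hi hi'
    rcases mem_union.1 hi with h | h
    · exact hneJ i h i (hJ'2 hi') rfl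
    · exact (mem_sdiff.1 h).2 (hJ'3 hi')
  have hmpos : 0 < m := lt_of_lt_of_le (by positivity) hmΓ'
  obtain ⟨F, T', hF⟩ := pv2 G (L' s) J' C4 r' bb K' hr' (by omega) hK' hJ'c (lam2 * (K1 * Ae)) lam'
    (by positivity) hlam' hlam'1 hl12
    (fun j hj v hv => (hC4 j (hJ' hj)).2.2 v hv)
    (fun j hj => by
      by_contra h
      have h0 : #(C4 j) = 0 := by omega
      have h1 := hC4s j hj
      have h2 := hm j (hJ'J hj)
      rw [h0, Nat.cast_zero, mul_zero] at h1
      linarith)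
    (fun d hd j hj => by
      have h1 := hL'.blk s hs1 le_rfl
      exact link_sub G (hC4X j hj) hlam (hC4s j hj) (hlink j (hJ'J hj) _ (hQs h1.1)
        (fun h => Finset.disjoint_left.1 hQsJ' h1.1 (h ▸ hj)) d (h1.2 hd)))
    (fun i hi j hj hij d hd => link_sub G (hC4X j hj) hlam (hC4s j hj)
      (hlink j (hJ'J hj) i (hJ'J hi) hij d (hC4X i hi hd)))
  have hFC : ∀ j ∈ J', F j ⊆ C3 j := fun j hj => (hF j hj).1.trans (hC4 j (hJ' hj)).1
  refine ⟨J', hJ'J, hJ'c, F, ?_, ?_⟩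
  · intro j hj
    obtain ⟨h1, h2, h3, h5, h6, h7⟩ := hF j hj
    refine ⟨h1.trans (hC4X j hj), ?_, h7⟩
    have h8 := mul_le_mul_of_nonneg_left h6 (by linarith : (0:ℝ) ≤ K1 * Ae)
    have h9 := hC4s j hj
    linarith
  · refine att_build G A X T F T' I J J' Q0 (JM ∪ (J2 \ J3)) b x s (l+1) nh L' q' (by omega) hs1
      (by omega) hb hxX hXA hT hL' hQs ?_ hJ'J ?_ hQsJ' hQ0 hQ0I hJI
      (fun j hj => (hF j hj).1.trans (hC4X j hj))
      (fun j hj => (hC3 j (hJ'3 hj)).2.1.mono (hFC j hj))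
      (fun j hj => (hF j hj).2.1) (fun j hj => (hF j hj).2.2.1)
      (fun j hj => (hF j hj).2.2.2.1) ?_
    · intro h
      rcases mem_union.1 h with h | h
      · exact hbM h
      · exact hbH (hJ2H (mem_sdiff.1 h).1)
    · exact fun h => hbH (hJ2H (hJ'2 h))
    · intro j hj v hv
      exact (hX'c j (hJ2 (hJ'2 hj)) v
        ((hC j (hJ'2 hj)).1 ((hC3 j (hJ'3 hj)).1 (hFC j hj hv)))).2

end Part11

section Part12
open scoped Classical
open Finset

theorem rpow_large (D e : ℝ) (he : 0 < e) : ∃ N : ℕ, ∀ n : ℕ, N ≤ n → D ≤ (n:ℝ) ^ e := by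
  have h := ((tendsto_rpow_atTop he).comp tendsto_natCast_atTop_atTop).eventually_ge_atTop D
  exact Filter.eventually_atTop.1 h

/-- The combinatorial core: one handle-step with all parameters explicit. -/
theorem handle_core {V : Type} [Fintype V] (G : SimpleGraph V) (Γ m : ℝ) (hΓ : 0 < Γ)
    (hcoh : Hcoh G Γ) (k : ℕ) (hk : 1 ≤ k) (nh : ℕ) (hnh : 3 * k + 3 ≤ nh) (A : ℤ → Finset V)
    (I : Finset ℤ) (bb Ae K' m1 : ℕ) (hbb : 2 ≤ bb) (hAe : 1 ≤ Ae)
    (hcard : Fintype.card V < bb ^ Ae) (hK' : 1 ≤ K')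
    (hm1 : m1 = 1 + k + (2*k+2) * (2 ^ (k+1) * (Ae * K' + nh)))
    (hI : #I = 1 + 2 * k + 4 ^ (k+1) * (Ae * m1))
    (hdisj : ∀ i ∈ I, ∀ j ∈ I, i ≠ j → Disjoint (A i) (A j))
    (M0 M1 : ℝ) (hM0 : M0 = 16 ^ (k+1) * Ae * 4 * (704 * (m1:ℝ) ^ 4 * bb))
    (hM1 : M1 = (2*k+2) * 4 ^ (k+1) * 4 ^ nh * Ae * (704 * (K':ℝ) ^ 4 * bb))
    (hsz : ∀ i ∈ I, M0 * M1 * m ≤ (#(A i) : ℝ))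
    (lam lam2 lam' : ℝ) (hlam : 0 ≤ lam) (hlam2 : 0 < lam2) (hlam21 : lam2 ≤ 1)
    (hlam' : 0 < lam') (hlam'1 : lam' ≤ 1)
    (hl1 : 64 * (m1:ℝ) ^ 3 * (lam * (16 ^ (k+1) * Ae * 4)) ≤ lam2)
    (hl2 : 64 * (K':ℝ) ^ 3 * (lam2 * ((2*k+2) * 4 ^ (k+1) * 4 ^ nh * Ae)) ≤ lam')
    (hlink : ∀ i ∈ I, ∀ j ∈ I, i ≠ j → ∀ x ∈ A i, (#(nb G {x} (A j)) : ℝ) ≤ lam * #(A j))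
    (hm_a : 4 ^ (k+2) * Γ ≤ m) (hm_b : 64 * (k + 1) * Γ ≤ m)
    (hm_c : 4 * ((2*k+2) * 4 ^ (k+1) * 4 ^ nh * Γ) ≤ m)
    (hn : (Fintype.card V : ℝ) ≤ (m / (16 * Γ) / 2) ^ k) :
    ∃ J' ⊆ I, #J' = K' ∧ ∃ F : ℤ → Finset V, (∀ j ∈ J', F j ⊆ A j ∧ m ≤ (#(F j) : ℝ) ∧
      ∀ i ∈ J', i ≠ j → ∀ u ∈ F i, (#(nb G {u} (F j)) : ℝ) ≤ lam' * #(F j)) ∧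
      Att G A I J' F nh := by
  have hmpos : 0 < m := lt_of_lt_of_le (by positivity) hm_b
  have hA1 : (1:ℝ) ≤ Ae := by exact_mod_cast hAe
  have hb1 : (1:ℝ) ≤ bb := by exact_mod_cast (by omega : 1 ≤ bb)
  have hm11 : 1 ≤ m1 := by omega
  have hk1 : (1:ℝ) ≤ k := by exact_mod_cast hk
  have hm4 : (1:ℝ) ≤ (m1:ℝ) ^ 4 := one_le_pow₀ (by exact_mod_cast hm11)
  have hK4 : (1:ℝ) ≤ (K':ℝ) ^ 4 := one_le_pow₀ (by exact_mod_cast hK')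
  have hM01 : 1 ≤ M0 := by
    rw [hM0]
    have h1 : (1:ℝ) ≤ 16 ^ (k+1) := one_le_pow₀ (by norm_num)
    have h2 : (1:ℝ) ≤ 704 * (m1:ℝ) ^ 4 := by linarith
    exact one_le_mul_of_one_le_of_one_le (one_le_mul_of_one_le_of_one_le
      (one_le_mul_of_one_le_of_one_le h1 hA1) (by norm_num)) (one_le_mul_of_one_le_of_one_le h2 hb1)
  have hM11 : 1 ≤ M1 := by
    rw [hM1]
    have h1 : (1:ℝ) ≤ 4 ^ (k+1) := one_le_pow₀ (by norm_num)
    have h3 : (1:ℝ) ≤ 4 ^ nh := one_le_pow₀ (by norm_num)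
    have h2 : (1:ℝ) ≤ 704 * (K':ℝ) ^ 4 := by linarith
    have h5 : (1:ℝ) ≤ 2*k+2 := by linarith
    exact one_le_mul_of_one_le_of_one_le (one_le_mul_of_one_le_of_one_le
      (one_le_mul_of_one_le_of_one_le (one_le_mul_of_one_le_of_one_le h5 h1) h3) hA1)
      (one_le_mul_of_one_le_of_one_le h2 hb1)
  obtain ⟨i0, hi0⟩ : I.Nonempty := card_pos.1 (by omega)
  obtain ⟨I1, hI1, hI1c⟩ := Finset.exists_subset_card_eq (s := I.erase i0) (n := k)
    (by rw [card_erase_of_mem hi0]; omega)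
  have hc1 : #(I.erase i0 \ I1) = k + 4 ^ (k+1) * (Ae * m1) := by
    rw [card_sdiff_of_subset hI1, card_erase_of_mem hi0]; omega
  obtain ⟨I2, hI2, hI2c⟩ := Finset.exists_subset_card_eq (s := I.erase i0 \ I1) (n := k) (by omega)
  set I3 := (I.erase i0 \ I1) \ I2 with hI3
  have hI3c : #I3 = 4 ^ (k+1) * (Ae * m1) := by
    rw [hI3, card_sdiff_of_subset hI2]; omega
  have hI1I : I1 ⊆ I := hI1.trans (erase_subset _ _)
  have hI2I : I2 ⊆ I := hI2.trans (sdiff_subset.trans (erase_subset _ _))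
  have hI3I : I3 ⊆ I := sdiff_subset.trans (sdiff_subset.trans (erase_subset _ _))
  have h01 : i0 ∉ I1 := fun h => (mem_erase.1 (hI1 h)).1 rfl
  have h02 : i0 ∉ I2 := fun h => (mem_erase.1 (mem_sdiff.1 (hI2 h)).1).1 rfl
  have h03 : i0 ∉ I3 := fun h => (mem_erase.1 (mem_sdiff.1 (mem_sdiff.1 h).1).1).1 rfl
  have h12 : Disjoint I1 I2 := Finset.disjoint_left.2 fun a h h' => (mem_sdiff.1 (hI2 h')).2 h
  have h13 : Disjoint I1 I3 := Finset.disjoint_left.2 fun a h h' =>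
    (mem_sdiff.1 (mem_sdiff.1 h').1).2 h
  have h23 : Disjoint I2 I3 := disjoint_sdiff
  have hQI : insert i0 (I1 ∪ I2) ⊆ I := insert_subset hi0 (union_subset hI1I hI2I)
  have hall : insert i0 (I1 ∪ I2) ∪ I3 ⊆ I := union_subset hQI hI3I
  have hM0m : m ≤ M0 * M1 * m := le_mul_of_one_le_left hmpos.le
    (one_le_mul_of_one_le_of_one_le hM01 hM11)
  obtain ⟨J, hJ, hJc, b, hb, X, T, hX, hconn⟩ := stageA G Γ m hΓ hcoh k hk i0 I1 I2 I3 hI1c hI2c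
    h01 h02 h12 h13 h23 h03 A (fun i hi j hj => hdisj i (hall hi) j (hall hj))
    (fun i hi => hM0m.trans (hsz i (hall hi))) lam hlam
    (fun i hi j hj => hlink i (hall hi) j (hall hj)) hm_a hm_b hn bb Ae m1 hbb hAe hcard hm11
    hI3c.ge lam2 hlam2 hlam21 hl1
  have hJI : J ⊆ I := hJ.trans hI3I
  have hXm : ∀ j ∈ J, M1 * m ≤ (#(X j) : ℝ) := by
    intro j hj
    have h1 := (hX j hj).2.2.2.1
    rw [← hM0] at h1
    have h2 := (hsz j (hJI hj)).trans h1
    rw [mul_assoc] at h2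
    exact le_of_mul_le_mul_left h2 (by linarith)
  obtain ⟨J', hJ', hJ'c, F, hF, hatt⟩ := stageB G Γ m hΓ hcoh k hk nh hnh A X T I J
    (insert i0 (I1 ∪ I2)) b hb
    (fun i hi h => by
      rw [mem_insert, mem_union] at hi
      rcases hi with h' | h' | h'
      · exact h03 (h' ▸ hJ h)
      · exact Finset.disjoint_left.1 h13 h' (hJ h)
      · exact Finset.disjoint_left.1 h23 h' (hJ h)) hQI hJI bb Ae K' hbb hAe hcard hK'
    (by rw [hJc, hm1]) (fun j hj => (hX j hj).1) (fun j hj => (hX j hj).2.1)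
    (fun j hj => (hX j hj).2.2.1)
    (fun i hi j hj hij => ((hdisj i (hJI hi) j (hJI hj) hij).mono_left (hX i hi).1).mono_right
      (hX j hj).1)
    (fun j hj => (le_mul_of_one_le_left hmpos.le hM11).trans (hXm j hj)) lam2 hlam2.le
    (fun j hj => (hX j hj).2.2.2.2) hconn hm_c hm_b hn lam' hlam' hlam'1 hl2
  refine ⟨J', hJ'.trans hJI, hJ'c, F, ?_, hatt⟩
  intro j hj
  obtain ⟨h1, h2, h3⟩ := hF j hj
  refine ⟨h1.trans (hX j (hJ' hj)).1, ?_, h3⟩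
  rw [← hM1] at h2
  exact le_of_mul_le_mul_left ((hXm j (hJ' hj)).trans h2) (by linarith)

theorem handle_lemma (k : ℕ) (hk : 1 ≤ k) (c σ σ' : ℝ) (hσ : σ < σ') (hc : 1 / (k:ℝ) < c - σ')
    (nh : ℕ) (hnh : 3 * k + 3 ≤ nh) (K' : ℕ) (hK' : 1 ≤ K') (lam' : ℝ) (hlam' : 0 < lam')
    (hlam'1 : lam' ≤ 1) : ∃ (K N : ℕ) (lam : ℝ), 0 < K ∧ 0 < N ∧ 0 < lam ∧
    ∀ (V : Type) [Fintype V] (G : SimpleGraph V), Hcoh G ((Fintype.card V : ℝ) ^ (1 - c)) →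
    N ≤ Fintype.card V → ∀ (I : Finset ℤ) (A : ℤ → Finset V), #I = K →
    (∀ i ∈ I, ∀ j ∈ I, i ≠ j → Disjoint (A i) (A j)) →
    (∀ i ∈ I, (Fintype.card V : ℝ) ^ (1 - σ) ≤ #(A i)) →
    (∀ i ∈ I, ∀ j ∈ I, i ≠ j → ∀ x ∈ A i, (#(nb G {x} (A j)) : ℝ) ≤ lam * #(A j)) →
    ∃ J' ⊆ I, #J' = K' ∧ ∃ F : ℤ → Finset V, (∀ j ∈ J', F j ⊆ A j ∧
      (Fintype.card V : ℝ) ^ (1 - σ') ≤ #(F j) ∧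
      ∀ i ∈ J', i ≠ j → ∀ u ∈ F i, (#(nb G {u} (F j)) : ℝ) ≤ lam' * #(F j)) ∧
      Att G A I J' F nh := by
  have hk1 : (1:ℝ) ≤ k := by exact_mod_cast hk
  have hk0 : (0:ℝ) < k := by linarith
  obtain ⟨Ae, hAe⟩ := exists_nat_gt (2 / (σ' - σ))
  have hAe0 : (0:ℝ) < Ae := lt_trans (div_pos (by norm_num) (by linarith)) hAe
  have hAe1 : 1 ≤ Ae := by
    have : 0 < Ae := by exact_mod_cast hAe0
    omega
  have hε : 0 < σ' - σ - 2 / Ae := by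
    rw [div_lt_iff₀ (by linarith)] at hAe
    have : 2 / (Ae:ℝ) < σ' - σ := by rw [div_lt_iff₀ hAe0]; linarith
    linarith
  have hcσ : 0 < c - σ' := lt_trans (by positivity) hc
  have hkc : 0 < k * (c - σ') - 1 := by
    rw [div_lt_iff₀ hk0] at hc
    linarith
  obtain ⟨m1, hm1⟩ : ∃ m1 : ℕ, m1 = 1 + k + (2*k+2) * (2 ^ (k+1) * (Ae * K' + nh)) := ⟨_, rfl⟩
  have hm1p : (0:ℝ) < m1 := by
    have : 0 < m1 := by omega
    exact_mod_cast this
  have hK'p : (0:ℝ) < K' := by exact_mod_cast hK'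
  obtain ⟨P0, hP0⟩ : ∃ P0 : ℝ, P0 = 16 ^ (k+1) * Ae * 4 * (704 * (m1:ℝ) ^ 4) := ⟨_, rfl⟩
  obtain ⟨P1, hP1⟩ : ∃ P1 : ℝ, P1 = (2*k+2) * 4 ^ (k+1) * 4 ^ nh * Ae * (704 * (K':ℝ) ^ 4) :=
    ⟨_, rfl⟩
  have hP0p : 0 < P0 := by rw [hP0]; positivity
  have hP1p : 0 < P1 := by rw [hP1]; positivity
  obtain ⟨D2, hD2⟩ : ∃ D2 : ℝ, D2 = 64 * (K':ℝ) ^ 3 * ((2*k+2) * 4 ^ (k+1) * 4 ^ nh * Ae) :=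
    ⟨_, rfl⟩
  obtain ⟨D1, hD1⟩ : ∃ D1 : ℝ, D1 = 64 * (m1:ℝ) ^ 3 * (16 ^ (k+1) * Ae * 4) := ⟨_, rfl⟩
  have hD2p : 0 < D2 := by rw [hD2]; positivity
  have hD1p : 0 < D1 := by rw [hD1]; positivity
  have hD21 : 1 ≤ D2 := by
    rw [hD2]
    have h1 : (1:ℝ) ≤ 4 ^ (k+1) := one_le_pow₀ (by norm_num)
    have h3 : (1:ℝ) ≤ 4 ^ nh := one_le_pow₀ (by norm_num)
    have h2 : (1:ℝ) ≤ (K':ℝ) ^ 3 := one_le_pow₀ (by exact_mod_cast hK')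
    have h5 : (1:ℝ) ≤ 2*k+2 := by linarith
    have h6 : (1:ℝ) ≤ Ae := by exact_mod_cast hAe1
    exact one_le_mul_of_one_le_of_one_le (by linarith) (one_le_mul_of_one_le_of_one_le
      (one_le_mul_of_one_le_of_one_le (one_le_mul_of_one_le_of_one_le h5 h1) h3) h6)
  obtain ⟨N1, hN1⟩ := rpow_large (9 * P0 * P1) _ hε
  obtain ⟨N2, hN2⟩ := rpow_large (4 ^ (k+2)) _ hcσ
  obtain ⟨N3, hN3⟩ := rpow_large (64 * (k+1)) _ hcσ
  obtain ⟨N4, hN4⟩ := rpow_large (4 * ((2*k+2) * 4 ^ (k+1) * 4 ^ nh)) _ hcσ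
  obtain ⟨N5, hN5⟩ := rpow_large (32 ^ k) _ hkc
  refine ⟨1 + 2 * k + 4 ^ (k+1) * (Ae * m1), 1 + N1 + N2 + N3 + N4 + N5, lam' / D2 / D1, by omega,
    by omega, by positivity, ?_⟩
  intro V _ G hcoh hN I A hI hdisj hsz hlink
  obtain ⟨n, hnn⟩ : ∃ n : ℝ, n = (Fintype.card V : ℝ) := ⟨_, rfl⟩
  have hn1 : 1 ≤ n := by rw [hnn]; exact_mod_cast (by omega : 1 ≤ Fintype.card V)
  have hn0 : 0 < n := by linarith
  replace hN1 := hN1 _ (by omega : N1 ≤ Fintype.card V)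
  replace hN2 := hN2 _ (by omega : N2 ≤ Fintype.card V)
  replace hN3 := hN3 _ (by omega : N3 ≤ Fintype.card V)
  replace hN4 := hN4 _ (by omega : N4 ≤ Fintype.card V)
  replace hN5 := hN5 _ (by omega : N5 ≤ Fintype.card V)
  rw [← hnn] at hN1 hN2 hN3 hN4 hN5 hcoh hsz
  rw [← hnn]
  have hΓ : 0 < n ^ (1 - c) := Real.rpow_pos_of_pos hn0 _
  have hsplit : n ^ (1 - σ') = n ^ (c - σ') * n ^ (1 - c) := by
    rw [← Real.rpow_add hn0]; congr 1; ring
  have hmono : ∀ D : ℝ, D ≤ n ^ (c - σ') → D * n ^ (1 - c) ≤ n ^ (1 - σ') := by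
    intro D hD
    rw [hsplit]
    exact mul_le_mul_of_nonneg_right hD hΓ.le
  obtain ⟨y, hy⟩ : ∃ y : ℝ, y = n ^ (1 / (Ae:ℝ)) := ⟨_, rfl⟩
  have hy0 : 0 < y := by rw [hy]; exact Real.rpow_pos_of_pos hn0 _
  have hy1 : 1 ≤ y := by rw [hy]; exact Real.one_le_rpow hn1 (by positivity)
  have hyA : y ^ Ae = n := by
    rw [hy, ← Real.rpow_natCast, ← Real.rpow_mul hn0.le, one_div_mul_cancel hAe0.ne', Real.rpow_one]
  have hyy : y * y = n ^ (2 / (Ae:ℝ)) := by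
    rw [hy, ← Real.rpow_add hn0]; congr 1; ring
  obtain ⟨bb, hbb⟩ : ∃ bb : ℕ, bb = ⌈y⌉₊ + 1 := ⟨_, rfl⟩
  have hyb : y < bb := by
    rw [hbb]; push_cast
    have := Nat.le_ceil y
    linarith
  have hby : (bb:ℝ) ≤ 3 * y := by
    rw [hbb]; push_cast
    have := Nat.ceil_lt_add_one hy0.le
    linarith
  have hb2 : 2 ≤ bb := by
    have : 0 < ⌈y⌉₊ := Nat.ceil_pos.2 hy0
    omega
  have hb0 : (0:ℝ) ≤ bb := Nat.cast_nonneg _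
  have hcard : Fintype.card V < bb ^ Ae := by
    have h1 : y ^ Ae < (bb:ℝ) ^ Ae := pow_lt_pow_left₀ hyb hy0.le (by omega)
    rw [hyA, hnn] at h1
    exact_mod_cast h1
  have hmain : 9 * P0 * P1 * (y * y) * n ^ (1 - σ') ≤ n ^ (1 - σ) := by
    have h1 : n ^ (1 - σ) = n ^ (σ' - σ - 2 / (Ae:ℝ)) * (y * y * n ^ (1 - σ')) := by
      rw [hyy, ← Real.rpow_add hn0, ← Real.rpow_add hn0]; congr 1; ring
    rw [h1, mul_assoc _ (y * y)]
    exact mul_le_mul_of_nonneg_right hN1 (by positivity)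
  have hbby : (bb:ℝ) * bb ≤ 9 * (y * y) := by nlinarith
  refine handle_core G (n ^ (1 - c)) (n ^ (1 - σ')) hΓ hcoh k hk nh hnh A I bb Ae K' m1 hb2 hAe1 hcard
    hK' hm1 hI hdisj (P0 * bb) (P1 * bb) (by rw [hP0]; ring) (by rw [hP1]; ring) ?_
    (lam' / D2 / D1) (lam' / D2) lam' (by positivity) (by positivity) ?_ hlam' hlam'1 ?_ ?_ hlink
    (hmono _ hN2) (hmono _ hN3) ?_ ?_
  · intro i hi
    refine le_trans ?_ (hsz i hi)
    refine le_trans ?_ hmain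
    refine mul_le_mul_of_nonneg_right ?_ (Real.rpow_nonneg hn0.le _)
    have := mul_le_mul_of_nonneg_left hbby (mul_pos hP0p hP1p).le
    linarith
  · exact (div_le_self hlam'.le hD21).trans hlam'1
  · have : 64 * (m1:ℝ) ^ 3 * (lam' / D2 / D1 * (16 ^ (k+1) * Ae * 4)) = lam' / D2 / D1 * D1 := by
      rw [hD1]; ring
    rw [this, div_mul_cancel₀ _ hD1p.ne']
  · have : 64 * (K':ℝ) ^ 3 * (lam' / D2 * ((2*k+2) * 4 ^ (k+1) * 4 ^ nh * Ae)) = lam' / D2 * D2 := by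
      rw [hD2]; ring
    rw [this, div_mul_cancel₀ _ hD2p.ne']
  · have := hmono _ hN4
    linarith
  · rw [← hnn]
    have h1 : n ^ (1 - σ') / (16 * n ^ (1 - c)) / 2 = n ^ (c - σ') / 32 := by
      rw [hsplit]; field_simp; norm_num
    rw [h1, div_pow, le_div_iff₀ (by positivity), ← Real.rpow_natCast (n ^ (c - σ')),
      ← Real.rpow_mul hn0.le]
    have h2 : n ^ ((c - σ') * k) = n ^ (k * (c - σ') - 1) * n := by
      nth_rewrite 3 [← Real.rpow_one n]
      rw [← Real.rpow_add hn0]; congr 1; ring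
    rw [h2, mul_comm]
    exact mul_le_mul_of_nonneg_right hN5 hn0.le

end Part12

section Part13
open scoped Classical
open Finset

theorem ext_fun {W α : Type} (S : Set W) (n : ℕ) (p : ℕ → W)
    (hinj : ∀ i ≤ n, ∀ j ≤ n, p i = p j → i = j) (hpS : ∀ i, 0 < i → i < n → p i ∉ S)
    (f : W → α) (Z : ℕ → α) :
    ∃ f' : W → α, (∀ w ∈ S, f' w = f w) ∧ ∀ i, 0 < i → i < n → f' (p i) = Z i := by
  refine ⟨fun w => if h : ∃ i, 0 < i ∧ i < n ∧ w = p i then Z h.choose else f w, ?_, ?_⟩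
  · intro w hw
    dsimp only
    rw [dif_neg]
    rintro ⟨i, h1, h2, h3⟩
    exact hpS i h1 h2 (h3 ▸ hw)
  · intro i h1 h2
    have h : ∃ j, 0 < j ∧ j < n ∧ p i = p j := ⟨i, h1, h2, rfl⟩
    dsimp only
    rw [dif_pos h]
    have h3 := h.choose_spec
    rw [← hinj i h2.le _ h3.2.1.le h3.2.2]

/-- A rainbow induced copy of `H[S]`. -/
def Copy {V W : Type} (G : SimpleGraph V) (H : SimpleGraph W) (S : Set W) (I : Finset ℤ)
    (A : ℤ → Finset V) (f : W → V) (q : W → ℤ) : Prop :=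
  (∀ w ∈ S, ∀ w' ∈ S, q w = q w' → w = w') ∧ (∀ w ∈ S, q w ∈ I ∧ f w ∈ A (q w)) ∧
  ∀ w ∈ S, ∀ w' ∈ S, (G.Adj (f w) (f w') ↔ H.Adj w w')

theorem copy_ext {V W : Type} (G : SimpleGraph V) (H : SimpleGraph W) (S : Set W) (n : ℕ)
    (p : ℕ → W) (hh : IsHandle H S n p) (I J : Finset ℤ) (A F : ℤ → Finset V) (hJI : J ⊆ I)
    (hFA : ∀ j ∈ J, F j ⊆ A j) (hatt : Att G A I J F n) (f : W → V) (q : W → ℤ)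
    (hc : Copy G H S J F f q) :
    ∃ f' q', Copy G H (S ∪ {w | ∃ j ≤ n, w = p j}) I A f' q' := by
  obtain ⟨hn2, hinj, hp0, hpn, hpS, hpa, hpna, hdeg⟩ := hh
  obtain ⟨hqi, hblk, hadj⟩ := hc
  have hne : q (p 0) ≠ q (p n) := by
    intro h
    have := hinj 0 (by omega) n le_rfl (hqi _ hp0 _ hpn h)
    omega
  obtain ⟨Z, Q, hZ1, hZn, hZa, hZna, hZb, hZi, hZF⟩ := hatt _ (hblk _ hp0).1 _ (hblk _ hpn).1 hne _
    (hblk _ hp0).2 _ (hblk _ hpn).2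
  obtain ⟨f', hf1, hf2⟩ := ext_fun S n p hinj hpS f Z
  obtain ⟨q', hq1, hq2⟩ := ext_fun S n p hinj hpS q Q
  have hcase : ∀ w ∈ S ∪ {w | ∃ j ≤ n, w = p j}, w ∈ S ∨ ∃ i, 0 < i ∧ i < n ∧ w = p i := by
    rintro w (hw | ⟨j, hj, rfl⟩)
    · exact Or.inl hw
    · by_cases h0 : j = 0
      · subst h0; exact Or.inl hp0
      · by_cases h1 : j = n
        · subst h1; exact Or.inl hpn
        · exact Or.inr ⟨j, by omega, by omega, rfl⟩
  have hmix : ∀ i, 0 < i → i < n → ∀ w ∈ S, (G.Adj (f' (p i)) (f' w) ↔ H.Adj (p i) w) := by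
    intro i h1 h2 w hw
    rw [hf2 i h1 h2, hf1 w hw]
    constructor
    · intro h
      rcases hZF i h1 h2 _ (hblk w hw).1 _ (hblk w hw).2 h with ⟨h3, h4⟩ | ⟨h3, h4⟩
      · rw [hqi w hw _ hp0 h4, h3]
        exact (hpa 0 (by omega)).symm
      · rw [hqi w hw _ hpn h4]
        have := hpa i h2
        rwa [show i + 1 = n by omega] at this
    · intro h
      rcases hdeg i h1 h2 w (Or.inl hw) h with h3 | h3
      · have h4 : i = 1 := by
          by_contra hne1
          exact hpS (i-1) (by omega) (by omega) (h3 ▸ hw)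
        subst h4
        rw [h3]
        exact hZ1.symm
      · have h4 : i + 1 = n := by
          by_contra hne1
          exact hpS (i+1) (by omega) (by omega) (h3 ▸ hw)
        rw [h3, h4, show i = n - 1 by omega]
        exact hZn
  have hpp : ∀ i j, 0 < i → i < n → 0 < j → j < n → i < j →
      (G.Adj (f' (p i)) (f' (p j)) ↔ H.Adj (p i) (p j)) := by
    intro i j h1 h2 h3 h4 h5
    rw [hf2 i h1 h2, hf2 j h3 h4]
    by_cases h6 : j = i + 1
    · subst h6
      exact iff_of_true (hZa i h1 h4) (hpa i h2)
    · exact iff_of_false (hZna i j h1 (by omega) h4) (hpna i j (by omega) h4.le)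
  refine ⟨f', q', ?_, ?_, ?_⟩
  · intro w hw w' hw' h
    rcases hcase w hw with h1 | ⟨i, i1, i2, rfl⟩ <;> rcases hcase w' hw' with h2 | ⟨j, j1, j2, rfl⟩
    · rw [hq1 w h1, hq1 w' h2] at h
      exact hqi w h1 w' h2 h
    · rw [hq1 w h1, hq2 j j1 j2] at h
      exact absurd (h ▸ (hblk w h1).1) (hZb j j1 j2).2.1
    · rw [hq1 w' h2, hq2 i i1 i2] at h
      exact absurd (h ▸ (hblk w' h2).1) (hZb i i1 i2).2.1
    · rw [hq2 i i1 i2, hq2 j j1 j2] at h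
      rw [hZi i j i1 i2 j1 j2 h]
  · intro w hw
    rcases hcase w hw with h1 | ⟨i, i1, i2, rfl⟩
    · rw [hq1 w h1, hf1 w h1]
      have := hblk w h1
      exact ⟨hJI this.1, hFA _ this.1 this.2⟩
    · rw [hq2 i i1 i2, hf2 i i1 i2]
      have := hZb i i1 i2
      exact ⟨this.1, this.2.2⟩
  · intro w hw w' hw'
    rcases hcase w hw with h1 | ⟨i, i1, i2, rfl⟩ <;> rcases hcase w' hw' with h2 | ⟨j, j1, j2, rfl⟩
    · rw [hf1 w h1, hf1 w' h2]
      exact hadj w h1 w' h2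
    · rw [G.adj_comm, H.adj_comm]
      exact hmix j j1 j2 w h1
    · exact hmix i i1 i2 w' h2
    · rcases lt_trichotomy i j with h | h | h
      · exact hpp i j i1 i2 j1 j2 h
      · subst h
        exact iff_of_false (G.loopless.irrefl _) (H.loopless.irrefl _)
      · rw [G.adj_comm, H.adj_comm]
        exact hpp j i j1 j2 i1 i2 h

theorem main_ind {W : Type} (H : SimpleGraph W) (β k : ℕ) (hk : 1 ≤ k) (hβ : 3 * k + 3 ≤ β) (c : ℝ)
    (S : Set W) (hS : BuildableOn H β S) : ∀ σ : ℝ, 1 / (k:ℝ) < c - σ →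
    ∃ (K N : ℕ) (lam : ℝ), 0 < K ∧ 0 < N ∧ 0 < lam ∧
    ∀ (V : Type) [Fintype V] (G : SimpleGraph V), Hcoh G ((Fintype.card V : ℝ) ^ (1 - c)) →
    N ≤ Fintype.card V → ∀ (I : Finset ℤ) (A : ℤ → Finset V), #I = K →
    (∀ i ∈ I, ∀ j ∈ I, i ≠ j → Disjoint (A i) (A j)) →
    (∀ i ∈ I, (Fintype.card V : ℝ) ^ (1 - σ) ≤ #(A i)) →
    (∀ i ∈ I, ∀ j ∈ I, i ≠ j → ∀ x ∈ A i, (#(nb G {x} (A j)) : ℝ) ≤ lam * #(A j)) →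
    ∃ f q, Copy G H S I A f q := by
  induction hS with
  | base u v huv hadj =>
    intro σ hσ
    refine ⟨2, 1, 1/2, by norm_num, by norm_num, by norm_num, ?_⟩
    intro V _ G hcoh hN I A hI hdisj hsz hlink
    obtain ⟨a, b, hab, rfl⟩ := Finset.card_eq_two.1 hI
    have ha : a ∈ ({a, b} : Finset ℤ) := by simp
    have hb : b ∈ ({a, b} : Finset ℤ) := by simp
    have hn0 : (0:ℝ) < Fintype.card V := by exact_mod_cast hN
    have hpos : ∀ i ∈ ({a, b} : Finset ℤ), (0:ℝ) < #(A i) := fun i hi =>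
      lt_of_lt_of_le (Real.rpow_pos_of_pos hn0 _) (hsz i hi)
    obtain ⟨x, hx⟩ : (A a).Nonempty := card_pos.1 (by exact_mod_cast hpos a ha)
    have hy : ∃ y ∈ A b, ¬ G.Adj x y := by
      by_contra hcon
      push Not at hcon
      have h1 : nb G {x} (A b) = A b :=
        Subset.antisymm (nb_sub _ _ _) fun y hy => mem_nb.2 ⟨hy, x, by simp, hcon y hy⟩
      have h2 := hlink a ha b hb hab x hx
      rw [h1] at h2
      have := hpos b hb
      linarith
    obtain ⟨y, hy, hxy⟩ := hy
    have hadj' : ¬ H.Adj v u := fun h => hadj h.symm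
    have hyx : ¬ G.Adj y x := fun h => hxy h.symm
    refine ⟨fun w => if w = u then x else y, fun w => if w = u then a else b, ?_, ?_, ?_⟩
    · rintro w (rfl | rfl) w' (rfl | rfl) <;> simp [huv, huv.symm, hab, hab.symm]
    · rintro w (rfl | rfl) <;> simp [huv, huv.symm, hx, hy]
    · rintro w (rfl | rfl) w' (rfl | rfl) <;>
        simp [huv.symm, hxy, hadj, hadj', hyx]
  | handle S n p hS hh hn ih =>
    intro σ hσ
    obtain ⟨σ', h1, h2⟩ : ∃ σ', σ < σ' ∧ 1 / (k:ℝ) < c - σ' :=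
      ⟨(σ + (c - 1 / (k:ℝ))) / 2, by linarith, by linarith⟩
    obtain ⟨K', N', lam', hK', hN', hlam', hih⟩ := ih σ' h2
    obtain ⟨K, N, lam, hK, hN, hlam, hhl⟩ := handle_lemma k hk c σ σ' h1 h2 n (by omega) K' hK'
      (min lam' 1) (lt_min hlam' one_pos) (min_le_right _ _)
    refine ⟨K, N + N', lam, hK, by omega, hlam, ?_⟩
    intro V _ G hcoh hNV I A hI hdisj hsz hlink
    obtain ⟨J, hJI, hJc, F, hF, hatt⟩ := hhl V G hcoh (by omega) I A hI hdisj hsz hlink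
    obtain ⟨f, q, hc⟩ := hih V G hcoh (by omega) J F hJc
      (fun i hi j hj hij => ((hdisj i (hJI hi) j (hJI hj) hij).mono_left (hF i hi).1).mono_right
        (hF j hj).1) (fun j hj => (hF j hj).2.1)
      (fun i hi j hj hij x hx => ((hF j hj).2.2 i hi hij x hx).trans
        (mul_le_mul_of_nonneg_right (min_le_left _ _) (Nat.cast_nonneg _)))
    exact copy_ext G H S n p hh I J A F hJI (fun j hj => (hF j hj).1) hatt f q hc

end Part13

theorem statement_19 (β : ℕ) (hβ : 2 ≤ β) (hβ3 : 1 ≤ (β - 3) / 3) (c : ℝ)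
    (hc : 1 / (((β - 3) / 3 : ℕ) : ℝ) < c) {W : Type} [Fintype W] (H : SimpleGraph W)
    (hH : Buildable H β) (σ : ℝ) (hσ : 0 < σ)
    (hcσ : 1 / (((β - 3) / 3 : ℕ) : ℝ) < c - σ) :
    ∃ (K N : ℕ) (lam : ℝ), 0 < K ∧ 0 < N ∧ 0 < lam ∧ Forces H N K σ lam c := by
  classical
  obtain ⟨K, N, lam, hK, hN, hlam, hmain⟩ := main_ind H β ((β - 3) / 3) hβ3 (by omega) c
    Set.univ hH σ hcσ
  refine ⟨K, N, lam, hK, hN, hlam, ?_⟩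
  intro V _ G hcoh hNV I A hA hI hsh hlk
  have hcardA : ∀ i, ((A i).toFinset.card : ℝ) = ((A i).ncard : ℝ) := by
    intro i
    rw [Set.ncard_eq_toFinset_card']
  have hHc : Hcoh G ((Fintype.card V : ℝ) ^ (1 - c)) := by
    intro X Y hXY hX hY
    by_contra hcon
    push Not at hcon
    refine hcoh ⟨(X : Set V), (Y : Set V), by exact_mod_cast hXY, ?_, ?_, ?_⟩
    · intro a ha b hb
      exact hcon a (by exact_mod_cast ha) b (by exact_mod_cast hb)
    · rw [Set.ncard_coe_finset]; exact hX
    · rw [Set.ncard_coe_finset]; exact hY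
  obtain ⟨f, q, hq, hb, hadj⟩ := hmain V G hHc hNV I (fun i => (A i).toFinset) hI
    (fun i hi j hj hij => Set.disjoint_toFinset.2 (hA.2 i hi j hj hij))
    (fun i hi => by rw [hcardA]; exact hsh i hi)
    (fun i hi j hj hij x hx => by
      have h1 := hlk i hi j hj hij x (Set.mem_toFinset.1 hx)
      rw [hcardA]
      refine le_trans (le_of_eq ?_) h1
      congr 1
      rw [← Set.ncard_coe_finset]
      congr 1
      ext y
      simp [mem_nb, and_comm])
  have hinj : Function.Injective f := by
    intro w w' h
    by_contra hne
    have h1 := hb w trivial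
    have h2 := hb w' trivial
    have hqq : q w ≠ q w' := fun h => hne (hq w trivial w' trivial h)
    have h3 := hA.2 _ h1.1 _ h2.1 hqq
    have h4 : f w ∈ A (q w) := Set.mem_toFinset.1 h1.2
    have h5 : f w ∈ A (q w') := by rw [h]; exact Set.mem_toFinset.1 h2.2
    exact Set.disjoint_left.1 h3 h4 h5
  exact ⟨⟨⟨f, hinj⟩, fun {a b} => hadj a trivial b trivial⟩, q,
    fun w w' h => hq w trivial w' trivial h,
    fun w => ⟨(hb w trivial).1, Set.mem_toFinset.1 (hb w trivial).2⟩⟩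

end PurePairs
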